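/- Let H > 0, r > 0, and let (u_n) be a sequence of solutions of (CMC) on the open disk D(0,r) ⊆ ℝ² of center 0 and radius r. Suppose the normals above the origin converge: N_{u_n}(0) → (1,0,0) in ℝ³. Let c(s) = ((1 − cos(2Hs))/(2H), sin(2Hs)/(2H)) (note |c(s)| ≤ |s|, so c(s) ∈ D(0,r) for |s| < r). Then for every α ∈ (0,1) there exists a strictly increasing map φ : ℕ → ℕ such that for Lebesgue-almost every s ∈ [−αr, αr], N_{u_{φ(n)}}(c(s)) → (cos(2Hs), −sin(2Hs), 0) as n → ∞. -/

import Mathlib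

/-!
Write `X = ∇u / W` for the horizontal part of the downward unit normal and `N3 = 1 / W`. The equation
says `div X = 2 H`, so `X - H p` is divergence free and is the rotated gradient of a stream
function `Ψ`. Along the arc `cc` the function `Ψ - PsC` has derivative `1 - X · ν ≥ 0`, up to a
constant factor, where `ν` is the limit field on the arc. It therefore suffices to prove that
`Ψ (cc s) - Ψ 0 → PsC s` for every `s` (`stream_tendsto`): then `1 - X · ν` tends to zero in `L¹`, hence
almost everywhere along a subsequence. As `|X| ≤ 1`, the stream functions are uniformly Lipschitz, so
it is enough to find points `Q n → cc s` at which `X` and `Ψ` converge to the expected values.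

These points come from compactness of the graphs as surfaces, without curvature estimates.

* The functions `N3` and `e · (X - H p)` satisfy elliptic equations on the graph, in weak form because
  `u` is only `C²` (`weak_N`, `weak_ve`); hence a minimum principle for `N3` and a maximum principle
  for `e · (X - H p)` (`min_N3`, `max_ve`).
* A local area bound (`area_est`) and the stability inequality (`stab`) bound the Dirichlet energy
  of the Gauss map and of `log W` on a piece of the graph of bounded height (`energy_bound`).
* The rows of `N3 I + W X Xᵀ + (1 + 2 H u) I` are closed forms; inverting their primitives gives a
  parametrization of a piece of the graph by a disk of uniform size (`exists_chart`), in which the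
  Dirichlet energy is controlled by the one on the graph (`chart_energy`).
* The Courant–Lebesgue lemma and the maximum principle then give a uniform modulus of continuity
  for the normal in the charts (`modulus`), and the minimum principle shows that if the surface is
  nearly vertical at the centre it is so on half of the chart (`vertical`).
* When `N3 0 → 0`, the charts converge along any ultrafilter to a solution of an explicit limit
  system (`chart_limit`), which is rigid: its zero level is an arc of a circle of curvature `2 H`
  (`limit_core`). This propagates the convergence along the arc over a fixed length (`core_step`),
  and the step is iterated after recentering the solutions (`recenter`).
-/

open Real MeasureTheory Filter Set

noncomputable section

/-- Euclidean norm on `ℝ × ℝ`. -/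
def enorm2 (p : ℝ × ℝ) : ℝ := Real.sqrt (p.1 ^ 2 + p.2 ^ 2)

/-- Partial derivative in the `x` direction. -/
def pdx (u : ℝ × ℝ → ℝ) (p : ℝ × ℝ) : ℝ := fderiv ℝ u p (1, 0)

/-- Partial derivative in the `y` direction. -/
def pdy (u : ℝ × ℝ → ℝ) (p : ℝ × ℝ) : ℝ := fderiv ℝ u p (0, 1)

/-- The area element `W_u = √(1 + |∇u|²)`. -/
def Wgraph (u : ℝ × ℝ → ℝ) (p : ℝ × ℝ) : ℝ :=
  Real.sqrt (1 + (pdx u p) ^ 2 + (pdy u p) ^ 2)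

/-- Upward unit normal of the graph of `u`. -/
def normalVec (u : ℝ × ℝ → ℝ) (p : ℝ × ℝ) : ℝ × ℝ × ℝ :=
  (-pdx u p / Wgraph u p, -pdy u p / Wgraph u p, 1 / Wgraph u p)

/-- `u` is a (C²) solution of the constant mean curvature `H` equation on `Ω`. -/
def IsCMCSolution (H : ℝ) (Ω : Set (ℝ × ℝ)) (u : ℝ × ℝ → ℝ) : Prop :=
  ContDiffOn ℝ 2 u Ω ∧ ∀ p ∈ Ω,
    (1 + (pdy u p) ^ 2) * pdx (fun q => pdx u q) p
      - 2 * (pdx u p) * (pdy u p) * pdy (fun q => pdx u q) p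
      + (1 + (pdx u p) ^ 2) * pdy (fun q => pdy u q) p
    = 2 * H * (1 + (pdx u p) ^ 2 + (pdy u p) ^ 2) ^ ((3 : ℝ) / 2)

/-- `C` is a divergence line of the sequence `u` on `Ω`. -/
def IsDivergenceLine (H : ℝ) (Ω : Set (ℝ × ℝ)) (u : ℕ → ℝ × ℝ → ℝ)
    (C : Set (ℝ × ℝ)) : Prop :=
  ∃ z₁ : ℝ × ℝ, C ⊆ Ω ∧ (∀ q ∈ C, enorm2 (q - z₁) = 1 / (2 * H)) ∧
    IsConnected C ∧ C.Nontrivial ∧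
    ∃ φ : ℕ → ℕ, StrictMono φ ∧ ∀ Q ∈ C,
      Tendsto (fun n => normalVec (u (φ n)) Q) atTop
        (nhds (2 * H * (z₁.1 - Q.1), 2 * H * (z₁.2 - Q.2), 0))

/-! ### Calculus in the plane and the field `X` -/

/-- The linear form `(x, y) ↦ a x + b y`. -/
def lin (a b : ℝ) : ℝ × ℝ →L[ℝ] ℝ :=
  a • ContinuousLinearMap.fst ℝ ℝ ℝ + b • ContinuousLinearMap.snd ℝ ℝ ℝ

@[simp] lemma lin_apply (a b : ℝ) (v : ℝ × ℝ) : lin a b v = a * v.1 + b * v.2 := by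
  simp [lin]

/-- `HP f p a b`: the function `f` is differentiable at `p` with partial derivatives `a`, `b`. -/
def HP (f : ℝ × ℝ → ℝ) (p : ℝ × ℝ) (a b : ℝ) : Prop := HasFDerivAt f (lin a b) p

lemma eq_lin (L : ℝ × ℝ →L[ℝ] ℝ) : L = lin (L (1, 0)) (L (0, 1)) := by
  ext <;> simp

namespace HP
variable {f g : ℝ × ℝ → ℝ} {p : ℝ × ℝ} {a b c d : ℝ}

lemma of_diff (h : DifferentiableAt ℝ f p) : HP f p (pdx f p) (pdy f p) := by
  unfold HP pdx pdy
  rw [← eq_lin]; exact h.hasFDerivAt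

lemma diff (h : HP f p a b) : DifferentiableAt ℝ f p := HasFDerivAt.differentiableAt h

lemma pdx_eq (h : HP f p a b) : pdx f p = a := by
  unfold pdx; rw [HasFDerivAt.fderiv h]; simp

lemma pdy_eq (h : HP f p a b) : pdy f p = b := by
  unfold pdy; rw [HasFDerivAt.fderiv h]; simp

lemma congr_coef (h : HP f p a b) (h1 : a = c) (h2 : b = d) : HP f p c d := by
  subst h1; subst h2; exact h

lemma add (hf : HP f p a b) (hg : HP g p c d) : HP (fun q => f q + g q) p (a + c) (b + d) := by
  refine HasFDerivAt.congr_fderiv (HasFDerivAt.add hf hg) ?_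
  ext <;> simp

lemma sub (hf : HP f p a b) (hg : HP g p c d) : HP (fun q => f q - g q) p (a - c) (b - d) := by
  refine HasFDerivAt.congr_fderiv (HasFDerivAt.sub hf hg) ?_
  ext <;> simp

lemma neg (hf : HP f p a b) : HP (fun q => - f q) p (-a) (-b) := by
  refine HasFDerivAt.congr_fderiv (HasFDerivAt.neg hf) ?_
  ext <;> simp

lemma const (k : ℝ) : HP (fun _ => k) p 0 0 := by
  refine HasFDerivAt.congr_fderiv (hasFDerivAt_const (𝕜 := ℝ) k p) ?_
  ext <;> simp

lemma fst : HP (fun q => q.1) p 1 0 := by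
  refine HasFDerivAt.congr_fderiv (hasFDerivAt_fst (𝕜 := ℝ) (p := p)) ?_
  ext <;> simp

lemma snd : HP (fun q => q.2) p 0 1 := by
  refine HasFDerivAt.congr_fderiv (hasFDerivAt_snd (𝕜 := ℝ) (p := p)) ?_
  ext <;> simp

lemma mul (hf : HP f p a b) (hg : HP g p c d) :
    HP (fun q => f q * g q) p (a * g p + f p * c) (b * g p + f p * d) := by
  refine HasFDerivAt.congr_fderiv (HasFDerivAt.mul hf hg) ?_
  ext <;> simp <;> ring

/-- Chain rule with an outer function of one variable. -/
lemma comp {k : ℝ → ℝ} {k' : ℝ} (hk : HasDerivAt k k' (f p)) (hf : HP f p a b) :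
    HP (fun q => k (f q)) p (k' * a) (k' * b) := by
  refine HasFDerivAt.congr_fderiv (hk.comp_hasFDerivAt p hf) ?_
  ext <;> simp

lemma congr_of_eventuallyEq (hf : HP f p a b) (h : g =ᶠ[nhds p] f) : HP g p a b :=
  HasFDerivAt.congr_of_eventuallyEq hf h

lemma unique (hf : HP f p a b) (hg : HP f p c d) : a = c ∧ b = d :=
  ⟨hf.pdx_eq.symm.trans hg.pdx_eq, hf.pdy_eq.symm.trans hg.pdy_eq⟩

end HP

lemma contDiff_pdx {n : ℕ} {u : ℝ × ℝ → ℝ} (h : ContDiff ℝ (n + 1) u) : ContDiff ℝ n (pdx u) := by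
  unfold pdx
  exact (h.fderiv_right le_rfl).clm_apply contDiff_const

lemma contDiff_pdy {n : ℕ} {u : ℝ × ℝ → ℝ} (h : ContDiff ℝ (n + 1) u) : ContDiff ℝ n (pdy u) := by
  unfold pdy
  exact (h.fderiv_right le_rfl).clm_apply contDiff_const

lemma cont_pdx {u : ℝ × ℝ → ℝ} (h : ContDiff ℝ 1 u) : Continuous (pdx u) := by
  have : ContDiff ℝ ((0 : ℕ)+1) u := by simpa using h
  exact (contDiff_pdx this).continuous

lemma cont_pdy {u : ℝ × ℝ → ℝ} (h : ContDiff ℝ 1 u) : Continuous (pdy u) := by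
  have : ContDiff ℝ ((0 : ℕ)+1) u := by simpa using h
  exact (contDiff_pdy this).continuous

lemma ContDiff.hp {u : ℝ × ℝ → ℝ} (h : ContDiff ℝ 1 u) (p : ℝ × ℝ) :
    HP u p (pdx u p) (pdy u p) :=
  HP.of_diff (h.differentiable (by norm_num) p)

/-- Horizontal part `∇u / W` of the downward unit normal, first component. -/
def X1 (u : ℝ × ℝ → ℝ) (p : ℝ × ℝ) : ℝ := pdx u p / Wgraph u p

/-- Horizontal part `∇u / W` of the downward unit normal, second component. -/
def X2 (u : ℝ × ℝ → ℝ) (p : ℝ × ℝ) : ℝ := pdy u p / Wgraph u p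

/-- The open Euclidean disk of radius `R` about the origin. -/
def Dsc (R : ℝ) : Set (ℝ × ℝ) := {p | p.1 ^ 2 + p.2 ^ 2 < R ^ 2}

/-- A normalized solution: a globally `C²`, compactly supported function vanishing at the origin
which solves the equation, in divergence form, on the disk of radius `R`. Compact support is
obtained by multiplying a solution by a cutoff function. -/
structure Sol (H R : ℝ) (u : ℝ × ℝ → ℝ) : Prop where
  smooth : ContDiff ℝ 2 u
  supp : HasCompactSupport u
  zero : u 0 = 0
  pde : ∀ p ∈ Dsc R, pdx (X1 u) p + pdy (X2 u) p = 2 * H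

section pointwise
variable {u : ℝ × ℝ → ℝ}

lemma Wg_sq (p : ℝ × ℝ) : Wgraph u p ^ 2 = 1 + pdx u p ^ 2 + pdy u p ^ 2 := by
  unfold Wgraph; rw [Real.sq_sqrt]; positivity

lemma Wg_ge (p : ℝ × ℝ) : 1 ≤ Wgraph u p := by
  unfold Wgraph; rw [Real.one_le_sqrt]; nlinarith [sq_nonneg (pdx u p), sq_nonneg (pdy u p)]

lemma Wg_pos (p : ℝ × ℝ) : 0 < Wgraph u p := lt_of_lt_of_le one_pos (Wg_ge p)

lemma W_mul_X1 (p : ℝ × ℝ) : Wgraph u p * X1 u p = pdx u p := by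
  have := (Wg_pos (u := u) p).ne'; unfold X1; field_simp

lemma W_mul_X2 (p : ℝ × ℝ) : Wgraph u p * X2 u p = pdy u p := by
  have := (Wg_pos (u := u) p).ne'; unfold X2; field_simp

lemma W_X_rel (p : ℝ × ℝ) : Wgraph u p ^ 2 * (1 - X1 u p ^ 2 - X2 u p ^ 2) = 1 := by
  have h := Wg_sq (u := u) p
  rw [← W_mul_X1, ← W_mul_X2] at h
  linarith

lemma X_lt_one (p : ℝ × ℝ) : X1 u p ^ 2 + X2 u p ^ 2 < 1 := by
  have h := W_X_rel (u := u) p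
  have := Wg_pos (u := u) p
  by_contra hc
  push Not at hc
  have : Wgraph u p ^ 2 * (1 - X1 u p ^ 2 - X2 u p ^ 2) ≤ 0 :=
    mul_nonpos_of_nonneg_of_nonpos (by positivity) (by linarith)
  linarith


lemma cd_pdx (hu : ContDiff ℝ 2 u) : ContDiff ℝ 1 (pdx u) := by
  have : ContDiff ℝ ((1 : ℕ) + 1) u := by norm_num; exact hu
  simpa using contDiff_pdx this

lemma cd_pdy (hu : ContDiff ℝ 2 u) : ContDiff ℝ 1 (pdy u) := by
  have : ContDiff ℝ ((1 : ℕ) + 1) u := by norm_num; exact hu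
  simpa using contDiff_pdy this

lemma cd_W (hu : ContDiff ℝ 2 u) : ContDiff ℝ 1 (Wgraph u) := by
  unfold Wgraph
  refine ContDiff.sqrt ?_ ?_
  · exact (contDiff_const.add ((cd_pdx hu).pow 2)).add ((cd_pdy hu).pow 2)
  · intro x; positivity

lemma cd_X1 (hu : ContDiff ℝ 2 u) : ContDiff ℝ 1 (X1 u) :=
  (cd_pdx hu).div (cd_W hu) fun p => (Wg_pos p).ne'

lemma cd_X2 (hu : ContDiff ℝ 2 u) : ContDiff ℝ 1 (X2 u) :=
  (cd_pdy hu).div (cd_W hu) fun p => (Wg_pos p).ne'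

lemma pd_comm (hu : ContDiff ℝ 2 u) (p : ℝ × ℝ) : pdy (pdx u) p = pdx (pdy u) p := by
  have hs : IsSymmSndFDerivAt ℝ u p := by
    apply ContDiffAt.isSymmSndFDerivAt (n := 2) hu.contDiffAt
    simp
  have hd : DifferentiableAt ℝ (fderiv ℝ u) p :=
    ((hu.fderiv_right (m := 1) (by norm_num)).differentiable (by norm_num)) p
  have e : ∀ v w : ℝ × ℝ, fderiv ℝ (fun q => fderiv ℝ u q v) p w = fderiv ℝ (fderiv ℝ u) p w v := by
    intro v w
    have := (hd.hasFDerivAt.clm_apply (hasFDerivAt_const v p)).fderiv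
    rw [this]; simp
  unfold pdx pdy
  rw [e, e]
  exact hs _ _

/-- `∇W = W³ Mᵀ X`, where `M` is the Jacobian matrix of `X`. -/
lemma pdx_W (hu : ContDiff ℝ 2 u) (p : ℝ × ℝ) : pdx (Wgraph u) p =
    Wgraph u p ^ 3 * (pdx (X1 u) p * X1 u p + pdx (X2 u) p * X2 u p) := by
  have hw := (cd_W hu).hp p
  have h1 := (cd_X1 hu).hp p
  have h2 := (cd_X2 hu).hp p
  have e : (fun q => Wgraph u q * Wgraph u q * (1 - X1 u q * X1 u q - X2 u q * X2 u q))
      = fun _ => 1 := by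
    funext q; have := W_X_rel (u := u) q; nlinarith
  have hh := (hw.mul hw).mul (((HP.const 1).sub (h1.mul h1)).sub (h2.mul h2))
  rw [e] at hh
  have hx := (hh.unique (HP.const 1)).1
  have hr := W_X_rel (u := u) p
  have hW := Wg_pos (u := u) p
  have : 2 * pdx (Wgraph u) p * (Wgraph u p ^ 2 * (1 - X1 u p ^ 2 - X2 u p ^ 2))
     = 2 * (Wgraph u p ^ 3 * (pdx (X1 u) p * X1 u p + pdx (X2 u) p * X2 u p)) := by
    linear_combination Wgraph u p * hx
  rw [hr] at this
  linarith

lemma pdy_W (hu : ContDiff ℝ 2 u) (p : ℝ × ℝ) : pdy (Wgraph u) p =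
    Wgraph u p ^ 3 * (pdy (X1 u) p * X1 u p + pdy (X2 u) p * X2 u p) := by
  have hw := (cd_W hu).hp p
  have h1 := (cd_X1 hu).hp p
  have h2 := (cd_X2 hu).hp p
  have e : (fun q => Wgraph u q * Wgraph u q * (1 - X1 u q * X1 u q - X2 u q * X2 u q))
      = fun _ => 1 := by
    funext q; have := W_X_rel (u := u) q; nlinarith
  have hh := (hw.mul hw).mul (((HP.const 1).sub (h1.mul h1)).sub (h2.mul h2))
  rw [e] at hh
  have hx := (hh.unique (HP.const 1)).2
  have hr := W_X_rel (u := u) p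
  have hW := Wg_pos (u := u) p
  have : 2 * pdy (Wgraph u) p * (Wgraph u p ^ 2 * (1 - X1 u p ^ 2 - X2 u p ^ 2))
     = 2 * (Wgraph u p ^ 3 * (pdy (X1 u) p * X1 u p + pdy (X2 u) p * X2 u p)) := by
    linear_combination Wgraph u p * hx
  rw [hr] at this
  linarith

/-- The matrix `M (I - X Xᵀ)` is symmetric: this is the equality of mixed second derivatives. -/
lemma symm_rel (hu : ContDiff ℝ 2 u) (p : ℝ × ℝ) :
    pdy (X1 u) p * (1 - X2 u p ^ 2) - pdx (X1 u) p * (X1 u p * X2 u p)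
      = pdx (X2 u) p * (1 - X1 u p ^ 2) - pdy (X2 u) p * (X1 u p * X2 u p) := by
  have hw := (cd_W hu).hp p
  have h1 := (cd_X1 hu).hp p
  have h2 := (cd_X2 hu).hp p
  have e1 : (fun q => Wgraph u q * X1 u q) = pdx u := funext W_mul_X1
  have e2 : (fun q => Wgraph u q * X2 u q) = pdy u := funext W_mul_X2
  have k1 := hw.mul h1
  have k2 := hw.mul h2
  rw [e1] at k1
  rw [e2] at k2
  have hc := pd_comm hu p
  rw [k1.pdy_eq, k2.pdx_eq, pdx_W hu, pdy_W hu] at hc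
  have hr := W_X_rel (u := u) p
  have hW := Wg_pos (u := u) p
  have h3 : Wgraph u p ^ 3 ≠ 0 := by positivity
  apply mul_left_cancel₀ h3
  linear_combination hc + Wgraph u p * (pdy (X1 u) p - pdx (X2 u) p) * hr

end pointwise

/-! ### Integration by parts -/

lemma hcs_pdx {f : ℝ × ℝ → ℝ} (h : HasCompactSupport f) : HasCompactSupport (pdx f) :=
  h.fderiv_apply (𝕜 := ℝ) (1, 0)

lemma hcs_pdy {f : ℝ × ℝ → ℝ} (h : HasCompactSupport f) : HasCompactSupport (pdy f) :=
  h.fderiv_apply (𝕜 := ℝ) (0, 1)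

lemma tsupport_pd {f : ℝ × ℝ → ℝ} {p : ℝ × ℝ} (h : p ∉ tsupport f) :
    f p = 0 ∧ pdx f p = 0 ∧ pdy f p = 0 := by
  refine ⟨image_eq_zero_of_notMem_tsupport h, ?_, ?_⟩
  all_goals
    have : fderiv ℝ f p = 0 := by
      have := mt (fun h' => tsupport_fderiv_subset ℝ (f := f) h') h
      exact image_eq_zero_of_notMem_tsupport this
    simp [pdx, pdy, this]

lemma ibp_x {f g : ℝ × ℝ → ℝ} (hf : ContDiff ℝ 1 f) (hg : ContDiff ℝ 1 g)
    (hc : HasCompactSupport f) : ∫ p, f p * pdx g p = - ∫ p, pdx f p * g p := by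
  apply integral_mul_fderiv_eq_neg_fderiv_mul_of_integrable
  · exact ((cont_pdx hf).mul hg.continuous).integrable_of_hasCompactSupport (hcs_pdx hc).mul_right
  · exact (hf.continuous.mul (cont_pdx hg)).integrable_of_hasCompactSupport hc.mul_right
  · exact (hf.continuous.mul hg.continuous).integrable_of_hasCompactSupport hc.mul_right
  · exact fun x _ => hf.differentiable (by norm_num) x
  · exact fun x _ => hg.differentiable (by norm_num) x

lemma int_pdx {f : ℝ × ℝ → ℝ} (hf : ContDiff ℝ 1 f) (hc : HasCompactSupport f) :
    ∫ p, pdx f p = 0 := by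
  have := ibp_x hf (contDiff_const (c := (1 : ℝ))) hc
  have e : ∀ p, pdx (fun _ : ℝ × ℝ => (1 : ℝ)) p = 0 := fun p => (HP.const 1).pdx_eq
  simp only [e, mul_zero, mul_one, integral_zero] at this
  linarith

lemma int_pdy {f : ℝ × ℝ → ℝ} (hf : ContDiff ℝ 1 f) (hc : HasCompactSupport f) :
    ∫ p, pdy f p = 0 := by
  have := integral_mul_fderiv_eq_neg_fderiv_mul_of_integrable (μ := (volume : Measure (ℝ × ℝ)))
    (f := f) (g := fun _ => (1 : ℝ)) (v := (0, 1)) ?_ ?_ ?_ ?_ ?_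
  · simp at this
    exact this
  · simp only [mul_one]
    exact (cont_pdy hf).integrable_of_hasCompactSupport (hcs_pdy hc)
  · simp
  · simpa using hf.continuous.integrable_of_hasCompactSupport hc
  · exact fun x _ => hf.differentiable (by norm_num) x
  · exact fun x _ => differentiableAt_const _

lemma deriv_shift {f g : ℝ × ℝ → ℝ} (hf : Continuous f) (hfc : HasCompactSupport f)
    (hg : ContDiff ℝ 1 g) (hgc : HasCompactSupport g) :
    HasDerivAt (fun t : ℝ => ∫ p, f p * g (p + (0, t))) (∫ p, f p * pdy g p) 0 := by
  obtain ⟨C, hC⟩ := (hcs_pdy hgc).exists_bound_of_continuous (cont_pdy hg)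
  have key := hasDerivAt_integral_of_dominated_loc_of_deriv_le
    (μ := (volume : Measure (ℝ × ℝ)))
    (F := fun (t : ℝ) p => f p * g (p + (0, t)))
    (F' := fun (t : ℝ) p => f p * pdy g (p + (0, t)))
    (bound := fun p => ‖f p‖ * C) (x₀ := (0 : ℝ)) (s := univ) univ_mem ?_ ?_ ?_ ?_ ?_ ?_
  · have h2 := key.2
    have e : ∀ a : ℝ × ℝ, a + (0, 0) = a := fun a => by ext <;> simp
    simpa only [e] using h2
  · refine Eventually.of_forall fun t => ?_
    exact (hf.mul (hg.continuous.comp (by fun_prop))).aestronglyMeasurable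
  · exact (hf.mul (hg.continuous.comp (by fun_prop))).integrable_of_hasCompactSupport
      hfc.mul_right
  · exact (hf.mul ((cont_pdy hg).comp (by fun_prop))).aestronglyMeasurable
  · refine Eventually.of_forall fun p t _ => ?_
    rw [norm_mul]
    exact mul_le_mul_of_nonneg_left (hC _) (norm_nonneg _)
  · exact (hf.integrable_of_hasCompactSupport hfc).norm.mul_const C
  · refine Eventually.of_forall fun p t _ => ?_
    have h1 : HasFDerivAt g (fderiv ℝ g (p + (0, t))) (p + (0, t)) :=
      (hg.differentiable (by norm_num) _).hasFDerivAt
    have h2 : HasDerivAt (fun t : ℝ => p + ((0 : ℝ), t)) ((0 : ℝ), (1 : ℝ)) t :=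
      ((hasDerivAt_const t (0 : ℝ)).prodMk (hasDerivAt_id t)).const_add p
    exact (h1.comp_hasDerivAt t h2).const_mul (f p)

/-- The Jacobian determinant of two compactly supported `C¹` functions is a null Lagrangian. As
second derivatives need not exist, one of the two functions is translated in the second variable
and the resulting integral is differentiated in two ways. -/
lemma null_lagrangian {h g : ℝ × ℝ → ℝ} (hh : ContDiff ℝ 1 h) (hg : ContDiff ℝ 1 g)
    (hhc : HasCompactSupport h) (hgc : HasCompactSupport g) :
    ∫ p, pdx h p * pdy g p = ∫ p, pdx g p * pdy h p := by
  have d1 := deriv_shift (cont_pdx hh) (hcs_pdx hhc) hg hgc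
  have d2 := deriv_shift (cont_pdx hg) (hcs_pdx hgc) hh hhc
  have e : ∀ t : ℝ, ∫ p, pdx h p * g (p + (0, t)) = - ∫ p, pdx g p * h (p + (0, -t)) := by
    intro t
    have hs : ContDiff ℝ 1 (fun p : ℝ × ℝ => g (p + (0, t))) := hg.comp (by fun_prop)
    have := ibp_x hh hs hhc
    have e2 : ∀ p, pdx (fun p : ℝ × ℝ => g (p + (0, t))) p = pdx g (p + (0, t)) := by
      intro p; unfold pdx
      rw [fderiv_comp_add_right]
    simp only [e2] at this
    have e3 : ∫ p, h p * pdx g (p + (0, t)) = ∫ p, pdx g p * h (p + (0, -t)) := by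
      rw [← integral_add_right_eq_self (fun p => pdx g p * h (p + (0, -t))) ((0 : ℝ), t)]
      congr 1; funext p
      have : p + (0, t) + (0, -t) = p := by ext <;> simp
      rw [this]; ring
    rw [← e3, this]; ring
  have d3 : HasDerivAt (fun t : ℝ => ∫ p, pdx h p * g (p + (0, t)))
      (∫ p, pdx g p * pdy h p) 0 := by
    have h0 : HasDerivAt (fun t : ℝ => -t) (-1) 0 := hasDerivAt_neg' 0
    have d2' : HasDerivAt (fun t : ℝ => ∫ p, pdx g p * h (p + (0, t)))
        (∫ p, pdx g p * pdy h p) (-0) := by simpa using d2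
    have := (d2'.comp (0 : ℝ) h0).neg
    have e4 : (fun t : ℝ => ∫ p, pdx h p * g (p + (0, t)))
        = -((fun t : ℝ => ∫ p, pdx g p * h (p + (0, t))) ∘ fun t => -t) := by
      funext t; rw [e t]; rfl
    rw [e4]
    exact this.congr_deriv (by ring)
  exact d1.unique d3

lemma hcs_X1 {u : ℝ × ℝ → ℝ} (h : HasCompactSupport u) : HasCompactSupport (X1 u) := by
  have : X1 u = fun p => pdx u p * (Wgraph u p)⁻¹ := by funext p; rw [X1, div_eq_mul_inv]
  rw [this]; exact (hcs_pdx h).mul_right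

lemma hcs_X2 {u : ℝ × ℝ → ℝ} (h : HasCompactSupport u) : HasCompactSupport (X2 u) := by
  have : X2 u = fun p => pdy u p * (Wgraph u p)⁻¹ := by funext p; rw [X2, div_eq_mul_inv]
  rw [this]; exact (hcs_pdy h).mul_right

section weak
variable {H R : ℝ} {u : ℝ × ℝ → ℝ}

/-- Weak form of `div M = 0` (with the index convention `∑ᵢⱼ Mᵢⱼ ∂ᵢ fⱼ`), where `M` is the Jacobian
matrix of `X`, whose trace is the constant `2H`. -/
lemma weak_div (hu : Sol H R u) {f1 f2 : ℝ × ℝ → ℝ} (h1 : ContDiff ℝ 1 f1) (h2 : ContDiff ℝ 1 f2)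
    (c1 : HasCompactSupport f1) (c2 : HasCompactSupport f2)
    (s1 : tsupport f1 ⊆ Dsc R) (s2 : tsupport f2 ⊆ Dsc R) :
    ∫ p, (pdx (X1 u) p * pdx f1 p + pdy (X1 u) p * pdx f2 p
      + pdx (X2 u) p * pdy f1 p + pdy (X2 u) p * pdy f2 p) = 0 := by
  have hX1 := cd_X1 hu.smooth
  have hX2 := cd_X2 hu.smooth
  have k1 := hcs_X1 hu.supp
  have k2 := hcs_X2 hu.supp
  have n1 := null_lagrangian h1 hX2 c1 k2
  have n2 := null_lagrangian h2 hX1 c2 k1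
  have z1 := int_pdx h1 c1
  have z2 := int_pdy h2 c2
  have I : ∀ {f g : ℝ × ℝ → ℝ}, Continuous f → Continuous g → HasCompactSupport f →
      Integrable (fun p => f p * g p) := fun hf hg hc =>
    (hf.mul hg).integrable_of_hasCompactSupport hc.mul_right
  have i1 := I (cont_pdx h1) (cont_pdy hX2) (hcs_pdx c1)
  have i2 := I (cont_pdx hX2) (cont_pdy h1) (hcs_pdx k2)
  have i3 := I (cont_pdx h2) (cont_pdy hX1) (hcs_pdx c2)
  have i4 := I (cont_pdx hX1) (cont_pdy h2) (hcs_pdx k1)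
  have i5 := (cont_pdx h1).integrable_of_hasCompactSupport (hcs_pdx c1) (μ := volume)
  have i6 := (cont_pdy h2).integrable_of_hasCompactSupport (hcs_pdy c2) (μ := volume)
  have e : ∀ p, pdx (X1 u) p * pdx f1 p + pdy (X1 u) p * pdx f2 p
      + pdx (X2 u) p * pdy f1 p + pdy (X2 u) p * pdy f2 p
      = 2 * H * pdx f1 p + 2 * H * pdy f2 p - (pdx f1 p * pdy (X2 u) p)
        + (pdx (X2 u) p * pdy f1 p) + (pdx f2 p * pdy (X1 u) p) - pdx (X1 u) p * pdy f2 p := by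
    intro p
    have q1 : pdx f1 p * (pdx (X1 u) p + pdy (X2 u) p) = pdx f1 p * (2 * H) := by
      by_cases hp : p ∈ tsupport f1
      · rw [hu.pde p (s1 hp)]
      · simp [tsupport_pd hp]
    have q2 : pdy f2 p * (pdx (X1 u) p + pdy (X2 u) p) = pdy f2 p * (2 * H) := by
      by_cases hp : p ∈ tsupport f2
      · rw [hu.pde p (s2 hp)]
      · simp [tsupport_pd hp]
    linear_combination q1 + q2
  simp only [e]
  rw [integral_sub, integral_add, integral_add, integral_sub, integral_add, integral_const_mul,
    integral_const_mul, z1, z2, n1, n2]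
  · ring
  all_goals fun_prop
end weak

/-! ### Weak equations for the normal -/

/-- The third component `1 / W` of the upward unit normal. -/
def N3 (u : ℝ × ℝ → ℝ) (p : ℝ × ℝ) : ℝ := (Wgraph u p)⁻¹

/-- The squared norm `tr (M²)` of the second fundamental form. -/
def trM2 (u : ℝ × ℝ → ℝ) (p : ℝ × ℝ) : ℝ :=
  pdx (X1 u) p ^ 2 + 2 * (pdy (X1 u) p * pdx (X2 u) p) + pdy (X2 u) p ^ 2

/-- The bilinear form `W (ξ·η - (X·ξ)(X·η))`. Up to the area element, it is the metric induced on
the graph, acting on gradients. -/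
def aq (u : ℝ × ℝ → ℝ) (p : ℝ × ℝ) (x1 x2 y1 y2 : ℝ) : ℝ :=
  Wgraph u p * (x1 * y1 + x2 * y2
    - (X1 u p * x1 + X2 u p * x2) * (X1 u p * y1 + X2 u p * y2))

/-- The function `e · (X - H p)`, a coordinate of the normal corrected by a linear function. -/
def ve (H e1 e2 : ℝ) (u : ℝ × ℝ → ℝ) (p : ℝ × ℝ) : ℝ :=
  e1 * (X1 u p - H * p.1) + e2 * (X2 u p - H * p.2)

section
variable {H R : ℝ} {u : ℝ × ℝ → ℝ}

lemma cauchy2 (a b x y : ℝ) : (a * x + b * y) ^ 2 ≤ (a ^ 2 + b ^ 2) * (x ^ 2 + y ^ 2) := by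
  nlinarith [sq_nonneg (a * y - b * x)]

lemma aq_nonneg (p : ℝ × ℝ) (x y : ℝ) : 0 ≤ aq u p x y x y := by
  unfold aq
  apply mul_nonneg (Wg_pos p).le
  have h := X_lt_one (u := u) p
  have := cauchy2 (X1 u p) (X2 u p) x y
  nlinarith [sq_nonneg x, sq_nonneg y]

lemma aq_le (p : ℝ × ℝ) (x y : ℝ) : aq u p x y x y ≤ Wgraph u p * (x ^ 2 + y ^ 2) := by
  unfold aq
  apply mul_le_mul_of_nonneg_left _ (Wg_pos p).le
  nlinarith [sq_nonneg (X1 u p * x + X2 u p * y)]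

lemma aq_eq_zero {p : ℝ × ℝ} {x y : ℝ} (h : aq u p x y x y = 0) : x = 0 ∧ y = 0 := by
  unfold aq at h
  have hX := X_lt_one (u := u) p
  have hc := cauchy2 (X1 u p) (X2 u p) x y
  rcases mul_eq_zero.1 h with h | h
  · exact absurd h (Wg_pos p).ne'
  · have h1 : (1 - (X1 u p ^ 2 + X2 u p ^ 2)) * (x ^ 2 + y ^ 2) ≤ 0 := by nlinarith
    have h2 : x ^ 2 + y ^ 2 ≤ 0 := by
      by_contra hcon
      push Not at hcon
      have := mul_pos (sub_pos.2 hX) hcon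
      linarith
    constructor <;> nlinarith [sq_nonneg x, sq_nonneg y]

lemma hp_N3 (hu : ContDiff ℝ 2 u) (p : ℝ × ℝ) : HP (N3 u) p
    (- Wgraph u p * (pdx (X1 u) p * X1 u p + pdx (X2 u) p * X2 u p))
    (- Wgraph u p * (pdy (X1 u) p * X1 u p + pdy (X2 u) p * X2 u p)) := by
  have hw := (cd_W hu).hp p
  have hW := (Wg_pos (u := u) p).ne'
  refine (hw.comp (hasDerivAt_inv hW)).congr_coef ?_ ?_
  · rw [pdx_W hu]; field_simp
  · rw [pdy_W hu]; field_simp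

lemma cd_N3 (hu : ContDiff ℝ 2 u) : ContDiff ℝ 1 (N3 u) :=
  (cd_W hu).inv fun p => (Wg_pos p).ne'

lemma cd_ve (hu : ContDiff ℝ 2 u) (e1 e2 : ℝ) : ContDiff ℝ 1 (ve H e1 e2 u) := by
  have h1 := cd_X1 hu
  have h2 := cd_X2 hu
  unfold ve
  fun_prop

lemma hp_ve (hu : ContDiff ℝ 2 u) (e1 e2 : ℝ) (p : ℝ × ℝ) : HP (ve H e1 e2 u) p
    (e1 * (pdx (X1 u) p - H) + e2 * pdx (X2 u) p)
    (e1 * pdy (X1 u) p + e2 * (pdy (X2 u) p - H)) := by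
  have h1 := (cd_X1 hu).hp p
  have h2 := (cd_X2 hu).hp p
  have := ((HP.const e1).mul (h1.sub ((HP.const H).mul HP.fst))).add
    ((HP.const e2).mul (h2.sub ((HP.const H).mul HP.snd)))
  exact this.congr_coef (by ring) (by ring)

/-- Weak form of the Jacobi equation for the third component of the normal. -/
lemma weak_N (hu : Sol H R u) {φ : ℝ × ℝ → ℝ} (h : ContDiff ℝ 1 φ)
    (c : HasCompactSupport φ) (s : tsupport φ ⊆ Dsc R) :
    ∫ p, (aq u p (pdx (N3 u) p) (pdy (N3 u) p) (pdx φ p) (pdy φ p) - trM2 u p * φ p) = 0 := by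
  have hX1 := cd_X1 hu.smooth
  have hX2 := cd_X2 hu.smooth
  have := weak_div hu (hX1.mul h) (hX2.mul h) c.mul_left c.mul_left
    ((tsupport_mul_subset_right).trans s) ((tsupport_mul_subset_right).trans s)
  rw [← neg_eq_zero, ← integral_neg, ← this]
  congr 1; funext p
  have f1 : HP (fun q => X1 u q * φ q) p _ _ := (hX1.hp p).mul (h.hp p)
  have f2 : HP (fun q => X2 u q * φ q) p _ _ := (hX2.hp p).mul (h.hp p)
  have g := hp_N3 hu.smooth p
  change _ = pdx (X1 u) p * pdx (fun q => X1 u q * φ q) p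
    + pdy (X1 u) p * pdx (fun q => X2 u q * φ q) p
    + pdx (X2 u) p * pdy (fun q => X1 u q * φ q) p + pdy (X2 u) p * pdy (fun q => X2 u q * φ q) p
  rw [f1.pdx_eq, f1.pdy_eq, f2.pdx_eq, f2.pdy_eq, g.pdx_eq, g.pdy_eq]
  have hs := symm_rel hu.smooth p
  have hr := W_X_rel (u := u) p
  unfold aq trM2
  linear_combination (Wgraph u p ^ 2 * (X1 u p * pdy φ p - X2 u p * pdx φ p)) * hs
    + ((pdx (X1 u) p * X1 u p + pdy (X1 u) p * X2 u p) * pdx φ p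
      + (pdx (X2 u) p * X1 u p + pdy (X2 u) p * X2 u p) * pdy φ p) * hr

/-- Weak equation for the functions `ve`. -/
lemma weak_ve (hu : Sol H R u) (e1 e2 : ℝ) {φ : ℝ × ℝ → ℝ} (h : ContDiff ℝ 1 φ)
    (c : HasCompactSupport φ) (s : tsupport φ ⊆ Dsc R) :
    ∫ p, (aq u p (pdx (ve H e1 e2 u) p) (pdy (ve H e1 e2 u) p) (pdx φ p) (pdy φ p)
      - Wgraph u p * (trM2 u p - 2 * H ^ 2) * (X1 u p * e1 + X2 u p * e2) * φ p) = 0 := by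
  have hX1 := cd_X1 hu.smooth
  have hX2 := cd_X2 hu.smooth
  have hW := cd_W hu.smooth
  set b1 : ℝ × ℝ → ℝ := fun q => Wgraph u q * (e1 - X1 u q * (X1 u q * e1 + X2 u q * e2)) with hb1
  set b2 : ℝ × ℝ → ℝ := fun q => Wgraph u q * (e2 - X2 u q * (X1 u q * e1 + X2 u q * e2)) with hb2
  have cb1 : ContDiff ℝ 1 b1 := by rw [hb1]; fun_prop
  have cb2 : ContDiff ℝ 1 b2 := by rw [hb2]; fun_prop
  have cc1 : HasCompactSupport (fun q => b1 q * φ q) := c.mul_left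
  have cc2 : HasCompactSupport (fun q => b2 q * φ q) := c.mul_left
  have k1 := weak_div hu (cb1.mul h) (cb2.mul h) cc1 cc2
    ((tsupport_mul_subset_right).trans s) ((tsupport_mul_subset_right).trans s)
  have k2 := int_pdx (cb1.mul h) cc1
  have k3 := int_pdy (cb2.mul h) cc2
  have j2 : Integrable (fun p => pdx (fun q => b1 q * φ q) p) :=
    (cont_pdx (cb1.mul h)).integrable_of_hasCompactSupport (hcs_pdx cc1)
  have j3 : Integrable (fun p => pdy (fun q => b2 q * φ q) p) :=
    (cont_pdy (cb2.mul h)).integrable_of_hasCompactSupport (hcs_pdy cc2)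
  have j1 : Integrable (fun p => pdx (X1 u) p * pdx (fun q => b1 q * φ q) p
      + pdy (X1 u) p * pdx (fun q => b2 q * φ q) p
      + pdx (X2 u) p * pdy (fun q => b1 q * φ q) p
      + pdy (X2 u) p * pdy (fun q => b2 q * φ q) p) := by
    apply Continuous.integrable_of_hasCompactSupport
    · exact ((((cont_pdx hX1).mul (cont_pdx (cb1.mul h))).add
        ((cont_pdy hX1).mul (cont_pdx (cb2.mul h)))).add
        ((cont_pdx hX2).mul (cont_pdy (cb1.mul h)))).add
        ((cont_pdy hX2).mul (cont_pdy (cb2.mul h)))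
    · exact (((hcs_pdx cc1).mul_left.add (hcs_pdx cc2).mul_left).add
        (hcs_pdy cc1).mul_left).add (hcs_pdy cc2).mul_left
  have tot : ∫ p, ((pdx (X1 u) p * pdx (fun q => b1 q * φ q) p
      + pdy (X1 u) p * pdx (fun q => b2 q * φ q) p
      + pdx (X2 u) p * pdy (fun q => b1 q * φ q) p
      + pdy (X2 u) p * pdy (fun q => b2 q * φ q) p)
      - (H * pdx (fun q => b1 q * φ q) p + H * pdy (fun q => b2 q * φ q) p)) = 0 := by
    rw [integral_sub j1 (by fun_prop),
      integral_add (j2.const_mul H) (j3.const_mul H), integral_const_mul, integral_const_mul,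
      k2, k3, k1]
    simp
  rw [← tot]
  congr 1; funext p
  by_cases hp : p ∈ tsupport φ
  swap
  · have z1 : p ∉ tsupport (fun q => b1 q * φ q) := fun hh => hp (tsupport_mul_subset_right hh)
    have z2 : p ∉ tsupport (fun q => b2 q * φ q) := fun hh => hp (tsupport_mul_subset_right hh)
    simp [tsupport_pd z1, tsupport_pd z2, tsupport_pd hp, aq]
  have hw := hW.hp p
  have x1 := hX1.hp p
  have x2 := hX2.hp p
  have hE := (x1.mul (HP.const e1)).add (x2.mul (HP.const e2))
  have f1 : HP (fun q => b1 q * φ q) p _ _ :=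
    (hw.mul ((HP.const e1).sub (x1.mul hE))).mul (h.hp p)
  have f2 : HP (fun q => b2 q * φ q) p _ _ :=
    (hw.mul ((HP.const e2).sub (x2.mul hE))).mul (h.hp p)
  have g := hp_ve (H := H) hu.smooth e1 e2 p
  rw [f1.pdx_eq, f1.pdy_eq, f2.pdx_eq, f2.pdy_eq, g.pdx_eq, g.pdy_eq]
  have hs := symm_rel hu.smooth p
  have hr := W_X_rel (u := u) p
  have ht := hu.pde p (s hp)
  rw [pdx_W hu.smooth, pdy_W hu.smooth]
  have ht' : pdy (X2 u) p = 2 * H - pdx (X1 u) p := by linarith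
  unfold aq trM2
  rw [ht'] at hs ⊢
  generalize pdx (X1 u) p = m11 at *
  generalize pdy (X1 u) p = m12 at *
  generalize pdx (X2 u) p = m21 at *
  generalize Wgraph u p = W at *
  generalize X1 u p = a at *
  generalize X2 u p = b at *
  generalize pdx φ p = fx at *
  generalize pdy φ p = fy at *
  generalize φ p = f at *
  -- `Q1, Q2` are the components of `M (M - H) X`
  obtain ⟨d, hd⟩ : ∃ d, d = m11 * (2 * H - m11) - m12 * m21 := ⟨_, rfl⟩
  obtain ⟨Q1, hQ1⟩ : ∃ q, q = H * (m11 * a + m12 * b) - d * a := ⟨_, rfl⟩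
  obtain ⟨Q2, hQ2⟩ : ∃ q, q = H * (m21 * a + (2 * H - m11) * b) - d * b := ⟨_, rfl⟩
  subst hQ1 hQ2 hd
  linear_combination (W * (e1 * fy - e2 * fx) - W ^ 3 * H * (a * e2 - b * e1) * f) * hs
    - W * (e1 * (H * (m11 * a + m12 * b) - (m11 * (2 * H - m11) - m12 * m21) * a)
      + e2 * (H * (m21 * a + (2 * H - m11) * b) - (m11 * (2 * H - m11) - m12 * m21) * b)) * f * hr

/-- The energy density of `ve` is a multiple of `|A|² - 2 H²`, the traceless part of the second
fundamental form; this is where the correction `H p` is needed. -/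
lemma aq_ve (hu : Sol H R u) (e1 e2 : ℝ) {p : ℝ × ℝ} (hp : p ∈ Dsc R) :
    aq u p (pdx (ve H e1 e2 u) p) (pdy (ve H e1 e2 u) p)
      (pdx (ve H e1 e2 u) p) (pdy (ve H e1 e2 u) p)
    = Wgraph u p * ((trM2 u p - 2 * H ^ 2) / 2) *
      (e1 ^ 2 + e2 ^ 2 - (X1 u p * e1 + X2 u p * e2) ^ 2) := by
  have g := hp_ve (H := H) hu.smooth e1 e2 p
  rw [g.pdx_eq, g.pdy_eq]
  have hs := symm_rel hu.smooth p
  have ht := hu.pde p hp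
  have ht' : pdy (X2 u) p = 2 * H - pdx (X1 u) p := by linarith
  unfold aq trM2
  rw [ht'] at hs ⊢
  generalize pdx (X1 u) p = m11 at *
  generalize pdy (X1 u) p = m12 at *
  generalize pdx (X2 u) p = m21 at *
  generalize Wgraph u p = W at *
  generalize X1 u p = a at *
  generalize X2 u p = b at *
  linear_combination (W * ((m12 * e1 ^ 2) - 2 * e1 * e2 * (m11 - H) - m21 * e2 ^ 2)) * hs

lemma trM2_ge (hu : Sol H R u) {p : ℝ × ℝ} (hp : p ∈ Dsc R) : 2 * H ^ 2 ≤ trM2 u p := by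
  have h := aq_ve hu 1 0 hp
  have h0 := aq_nonneg (u := u) p (pdx (ve H 1 0 u) p) (pdy (ve H 1 0 u) p)
  rw [h] at h0
  have hX := X_lt_one (u := u) p
  have hW := Wg_pos (u := u) p
  by_contra hc
  push Not at hc
  have k1 : 0 < 1 ^ 2 + 0 ^ 2 - (X1 u p * 1 + X2 u p * 0) ^ 2 := by
    nlinarith [sq_nonneg (X2 u p)]
  have k2 : Wgraph u p * ((2 * H ^ 2 - trM2 u p) / 2) *
      (1 ^ 2 + 0 ^ 2 - (X1 u p * 1 + X2 u p * 0) ^ 2) > 0 := by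
    apply mul_pos (mul_pos hW (by linarith)) k1
  nlinarith

/-- The energy density of the Gauss map is at most `|A|²`. -/
lemma aq_X_sum (hu : ContDiff ℝ 2 u) (p : ℝ × ℝ) :
    aq u p (pdx (X1 u) p) (pdy (X1 u) p) (pdx (X1 u) p) (pdy (X1 u) p)
    + aq u p (pdx (X2 u) p) (pdy (X2 u) p) (pdx (X2 u) p) (pdy (X2 u) p)
    ≤ Wgraph u p * trM2 u p := by
  have hs := symm_rel hu p
  have hr := W_X_rel (u := u) p
  have h0 := aq_nonneg (u := u) p (pdx (X1 u) p * X1 u p + pdx (X2 u) p * X2 u p)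
    (pdy (X1 u) p * X1 u p + pdy (X2 u) p * X2 u p)
  have hW := Wg_pos (u := u) p
  have h1 := mul_nonneg (mul_nonneg hW.le hW.le) h0
  unfold aq trM2 at *
  generalize pdx (X1 u) p = m11 at *
  generalize pdy (X1 u) p = m12 at *
  generalize pdx (X2 u) p = m21 at *
  generalize pdy (X2 u) p = m22 at *
  generalize Wgraph u p = W at *
  generalize X1 u p = a at *
  generalize X2 u p = b at *
  linear_combination h1 + (W * (m12 - m21) + (-W ^ 3) * ((m11 * a + m21 * b) * b
    - (m12 * a + m22 * b) * a)) * hs + (W) * ((m11 * a + m21 * b) * (m11 * a + m12 * b)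
    + (m12 * a + m22 * b) * (m21 * a + m22 * b)) * hr
end

/-! ### Maximum principles -/

lemma hasDerivAt_max_sq (t : ℝ) : HasDerivAt (fun x : ℝ => max x 0 ^ 2) (2 * max t 0) t := by
  rcases lt_trichotomy t 0 with h | h | h
  · rw [max_eq_right h.le, mul_zero]
    refine (hasDerivAt_const t (0 : ℝ)).congr_of_eventuallyEq ?_
    filter_upwards [gt_mem_nhds h] with x hx
    rw [max_eq_right hx.le]; norm_num
  · subst h
    rw [max_self, mul_zero, hasDerivAt_iff_isLittleO]
    have : (fun x' : ℝ => max x' 0 ^ 2 - max (0 : ℝ) 0 ^ 2 - (x' - 0) • (0 : ℝ))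
        = fun x => max x 0 ^ 2 := by funext x; simp
    rw [this]
    have h1 : (fun x : ℝ => max x 0 ^ 2) =O[nhds 0] fun x : ℝ => x ^ 2 := by
      apply Asymptotics.IsBigO.of_bound 1
      refine Eventually.of_forall fun x => ?_
      rw [one_mul, Real.norm_eq_abs, Real.norm_eq_abs, abs_of_nonneg (sq_nonneg _),
        abs_of_nonneg (sq_nonneg _)]
      rcases le_total x 0 with hx | hx
      · rw [max_eq_right hx]; nlinarith [sq_nonneg x]
      · rw [max_eq_left hx]
    refine h1.trans_isLittleO ?_
    simpa using (Asymptotics.isLittleO_pow_id (𝕜 := ℝ) (n := 2) (by norm_num))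
  · rw [max_eq_left h.le]
    have := hasDerivAt_pow 2 t
    refine HasDerivAt.congr_of_eventuallyEq (f := fun x => x ^ 2) (by simpa using this) ?_
    filter_upwards [lt_mem_nhds h] with x hx
    rw [max_eq_left hx.le]

lemma contDiff_of_hasDerivAt {f f' : ℝ → ℝ} (h : ∀ t, HasDerivAt f (f' t) t)
    (hc : Continuous f') : ContDiff ℝ 1 f := by
  rw [contDiff_one_iff_deriv]
  refine ⟨fun t => (h t).differentiableAt, ?_⟩
  have : deriv f = f' := funext fun t => (h t).deriv
  rwa [this]

/-- Truncating to `U` a function of `v` that vanishes for `v ≤ k'` creates no singularity, when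
`v ≤ k < k'` on the boundary of `U`. -/
lemma glue {U : Set (ℝ × ℝ)} (hU : IsOpen U) {v : ℝ × ℝ → ℝ} (hv : Continuous v) {k k' : ℝ}
    (hk : k < k') (hfr : ∀ p ∈ frontier U, v p ≤ k) {G : ℝ → ℝ} (hG : ∀ t ≤ k', G t = 0)
    (p : ℝ × ℝ) :
    (p ∈ U ∧ U.indicator (fun q => G (v q)) =ᶠ[nhds p] fun q => G (v q)) ∨
    (p ∉ U ∧ U.indicator (fun q => G (v q)) =ᶠ[nhds p] fun _ => 0) := by
  by_cases hp : p ∈ U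
  · left
    refine ⟨hp, ?_⟩
    filter_upwards [hU.mem_nhds hp] with q hq
    rw [indicator_of_mem hq]
  · right
    refine ⟨hp, ?_⟩
    by_cases hc : p ∈ closure U
    · have hf : p ∈ frontier U := by
        rw [frontier, hU.interior_eq]; exact ⟨hc, hp⟩
      have : v p < k' := (hfr p hf).trans_lt hk
      filter_upwards [hv.continuousAt.eventually (gt_mem_nhds this)] with q hq
      by_cases hqU : q ∈ U
      · rw [indicator_of_mem hqU, hG _ hq.le]
      · rw [indicator_of_notMem hqU]
    · filter_upwards [isClosed_closure.isOpen_compl.mem_nhds hc] with q hq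
      rw [indicator_of_notMem (fun h => hq (subset_closure h))]

lemma isOpen_Dsc (R : ℝ) : IsOpen (Dsc R) := by
  unfold Dsc; exact isOpen_lt (by fun_prop) (by fun_prop)

lemma not_mem_Dsc (R : ℝ) : ((|R| + 1, 0) : ℝ × ℝ) ∉ Dsc R := by
  unfold Dsc; simp only [mem_ofPred_eq, not_lt]
  have := abs_nonneg R
  nlinarith [sq_abs R]

lemma cont_aq {u : ℝ × ℝ → ℝ} (hu : ContDiff ℝ 2 u) {a b c d : ℝ × ℝ → ℝ} (ha : Continuous a)
    (hb : Continuous b) (hc : Continuous c) (hd : Continuous d) :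
    Continuous fun p => aq u p (a p) (b p) (c p) (d p) := by
  have h1 := (cd_W hu).continuous
  have h2 := (cd_X1 hu).continuous
  have h3 := (cd_X2 hu).continuous
  unfold aq; fun_prop

/-- Maximum principle for weak subsolutions `v` with a natural (quadratic in the gradient) lower
order term. The test function is `exp (C v) ((v - k')₊)²` on `U`. -/
lemma max_principle {R C : ℝ} {u v : ℝ × ℝ → ℝ} (hu : ContDiff ℝ 2 u) (hv : ContDiff ℝ 1 v)
    (hw : ∀ φ : ℝ × ℝ → ℝ, ContDiff ℝ 1 φ → HasCompactSupport φ → tsupport φ ⊆ Dsc R →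
      (∀ p, 0 ≤ φ p) →
      ∫ p, aq u p (pdx v p) (pdy v p) (pdx φ p) (pdy φ p)
        ≤ C * ∫ p, aq u p (pdx v p) (pdy v p) (pdx v p) (pdy v p) * φ p)
    {U : Set (ℝ × ℝ)} (hU : IsOpen U) (hUc : IsCompact (closure U)) (hUs : closure U ⊆ Dsc R)
    {k : ℝ} (hfr : ∀ p ∈ frontier U, v p ≤ k) : ∀ p ∈ U, v p ≤ k := by
  intro p0 hp0
  refine le_of_forall_gt_imp_ge_of_dense fun k' hk => ?_
  set f : ℝ → ℝ := fun t => Real.exp (C * t) * max (t - k') 0 ^ 2 with hf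
  set g : ℝ → ℝ := fun t => Real.exp (C * t) * (2 * max (t - k') 0) with hg
  have hfd : ∀ t, HasDerivAt f (C * f t + g t) t := by
    intro t
    have h1 : HasDerivAt (fun t : ℝ => Real.exp (C * t)) (Real.exp (C * t) * C) t := by
      simpa using ((hasDerivAt_id t).const_mul C).exp
    have h2 : HasDerivAt (fun t : ℝ => max (t - k') 0 ^ 2) (2 * max (t - k') 0) t := by
      have h3 : HasDerivAt (fun t : ℝ => max (t - k') 0 ^ 2) (2 * max (t - k') 0 * 1) t :=
        HasDerivAt.comp (h₂ := fun x : ℝ => max x 0 ^ 2) (h := fun t => t - k') t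
          (hasDerivAt_max_sq (t - k')) ((hasDerivAt_id' t).sub_const k')
      exact h3.congr_deriv (mul_one _)
    refine (h1.mul h2).congr_deriv ?_
    simp only [hf, hg]; ring
  have hgc : Continuous g := by rw [hg]; fun_prop
  have hfc : Continuous f := by rw [hf]; fun_prop
  have hf1 : ContDiff ℝ 1 f := contDiff_of_hasDerivAt hfd (by fun_prop)
  have f0 : ∀ t ≤ k', f t = 0 := fun t ht => by
    simp [hf, max_eq_right (sub_nonpos.2 ht)]
  have g0 : ∀ t ≤ k', g t = 0 := fun t ht => by
    simp [hg, max_eq_right (sub_nonpos.2 ht)]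
  have fpos : ∀ t, 0 ≤ f t := fun t => by simp only [hf]; positivity
  have gpos : ∀ t, 0 ≤ g t := fun t => by simp only [hg]; positivity
  set φ := U.indicator (fun q => f (v q)) with hφ
  set γ := U.indicator (fun q => g (v q)) with hγ
  have gluef := glue hU hv.continuous hk hfr f0
  have glueg := glue hU hv.continuous hk hfr g0
  have cφ : ContDiff ℝ 1 φ := by
    rw [contDiff_iff_contDiffAt]
    intro p
    rcases gluef p with ⟨_, h⟩ | ⟨_, h⟩
    · exact ((hf1.comp hv).contDiffAt).congr_of_eventuallyEq h
    · exact contDiffAt_const.congr_of_eventuallyEq h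
  have cγ : Continuous γ := by
    rw [continuous_iff_continuousAt]
    intro p
    rcases glueg p with ⟨_, h⟩ | ⟨_, h⟩
    · exact ((hgc.comp hv.continuous).continuousAt).congr h.symm
    · exact continuousAt_const.congr h.symm
  have sφ : tsupport φ ⊆ closure U := closure_mono (fun x hx => by
    by_contra hxU; exact hx (indicator_of_notMem hxU _))
  have hcφ : HasCompactSupport φ := hUc.of_isClosed_subset isClosed_closure sφ
  have hcγ : HasCompactSupport γ := hUc.of_isClosed_subset isClosed_closure
    (closure_mono (fun x hx => by by_contra hxU; exact hx (indicator_of_notMem hxU _)))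
  have grad : ∀ p, HP φ p ((C * φ p + γ p) * pdx v p) ((C * φ p + γ p) * pdy v p) := by
    intro p
    rcases gluef p with ⟨hp, h⟩ | ⟨hp, h⟩
    · have := (HP.comp (hfd (v p)) (hv.hp p)).congr_of_eventuallyEq h
      simpa only [hφ, hγ, indicator_of_mem hp] using this
    · have := (HP.const 0).congr_of_eventuallyEq h
      simpa only [hφ, hγ, indicator_of_notMem hp, mul_zero, zero_mul, add_zero] using this
  have h0φ : ∀ p, 0 ≤ φ p := fun p => indicator_nonneg (fun q _ => fpos (v q)) p
  have h0γ : ∀ p, 0 ≤ γ p := fun p => indicator_nonneg (fun q _ => gpos (v q)) p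
  have key := hw φ cφ hcφ (sφ.trans hUs) h0φ
  set Q : ℝ × ℝ → ℝ := fun p => aq u p (pdx v p) (pdy v p) (pdx v p) (pdy v p) with hQ
  have cQ : Continuous Q := cont_aq hu (cont_pdx hv) (cont_pdy hv) (cont_pdx hv) (cont_pdy hv)
  have e : ∀ p, aq u p (pdx v p) (pdy v p) (pdx φ p) (pdy φ p)
      = C * (Q p * φ p) + Q p * γ p := by
    intro p
    rw [(grad p).pdx_eq, (grad p).pdy_eq]; simp only [hQ]; unfold aq; ring
  have i1 : Integrable (fun p => Q p * φ p) :=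
    (cQ.mul cφ.continuous).integrable_of_hasCompactSupport hcφ.mul_left
  have i2 : Integrable (fun p => Q p * γ p) :=
    (cQ.mul cγ).integrable_of_hasCompactSupport hcγ.mul_left
  simp only [e] at key
  rw [integral_add (i1.const_mul C) i2, integral_const_mul] at key
  have nn : ∀ p, 0 ≤ Q p * γ p := fun p => mul_nonneg (aq_nonneg p _ _) (h0γ p)
  have z : ∫ p, Q p * γ p = 0 := le_antisymm (by linarith) (integral_nonneg nn)
  have z2 : (fun p => Q p * γ p) = fun _ => 0 := by
    have := (integral_eq_zero_iff_of_nonneg (f := fun p => Q p * γ p) nn i2).1 z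
    exact (Continuous.ae_eq_iff_eq volume (cQ.mul cγ) continuous_const).1 this
  have gz : ∀ p, fderiv ℝ φ p = 0 := by
    intro p
    have h1 : fderiv ℝ φ p = lin ((C * φ p + γ p) * pdx v p) ((C * φ p + γ p) * pdy v p) :=
      HasFDerivAt.fderiv (grad p)
    have h2 : Q p * γ p = 0 := congrFun z2 p
    rw [h1]
    rcases mul_eq_zero.1 h2 with h | h
    · obtain ⟨a, b⟩ := aq_eq_zero h
      rw [a, b]; ext <;> simp
    · have hφz : φ p = 0 := by
        by_cases hp : p ∈ U
        · simp only [hγ, indicator_of_mem hp, hg] at h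
          simp only [hφ, indicator_of_mem hp, hf]
          have : max (v p - k') 0 = 0 := by
            rcases mul_eq_zero.1 h with h | h
            · exact absurd h (Real.exp_pos _).ne'
            · linarith
          rw [this]; ring
        · exact indicator_of_notMem hp _
      rw [h, hφz]; ext <;> simp
  have hconst := is_const_of_fderiv_eq_zero (cφ.differentiable (by norm_num)) gz p0 (|R| + 1, 0)
  have : φ (|R| + 1, 0) = 0 := indicator_of_notMem
    (fun h => not_mem_Dsc R (hUs (subset_closure h))) _
  rw [this] at hconst
  simp only [hφ, indicator_of_mem hp0, hf] at hconst
  rcases mul_eq_zero.1 hconst with h | h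
  · exact absurd h (Real.exp_pos _).ne'
  · have h' := (pow_eq_zero_iff (by norm_num)).1 h
    have := le_max_left (v p0 - k') 0
    linarith

section
variable {H R : ℝ} {u : ℝ × ℝ → ℝ}

/-- Minimum principle for the third component of the normal. -/
lemma min_N3 (hu : Sol H R u) {U : Set (ℝ × ℝ)} (hU : IsOpen U) (hUc : IsCompact (closure U))
    (hUs : closure U ⊆ Dsc R) {k : ℝ} (hfr : ∀ p ∈ frontier U, k ≤ N3 u p) :
    ∀ p ∈ U, k ≤ N3 u p := by
  have hN := cd_N3 hu.smooth
  have hn : ∀ p, HP (fun q => - N3 u q) p (-pdx (N3 u) p) (-pdy (N3 u) p) := fun p => (hN.hp p).neg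
  have := max_principle (R := R) (C := 0) hu.smooth hN.neg (U := U) (k := -k) ?_ hU hUc hUs
    (fun p hp => neg_le_neg (hfr p hp))
  · exact fun p hp => neg_le_neg_iff.1 (this p hp)
  intro φ h1 h2 h3 h4
  have hw := weak_N hu h1 h2 h3
  rw [zero_mul]
  have i1 : Integrable fun p => aq u p (pdx (N3 u) p) (pdy (N3 u) p) (pdx φ p) (pdy φ p) := by
    apply Continuous.integrable_of_hasCompactSupport
      (cont_aq hu.smooth (cont_pdx hN) (cont_pdy hN) (cont_pdx h1) (cont_pdy h1))
    refine h2.mono' fun p hp => ?_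
    by_contra hc
    exact hp (by simp [tsupport_pd hc, aq])
  have i2 : Integrable fun p => trM2 u p * φ p := by
    apply Continuous.integrable_of_hasCompactSupport _ h2.mul_left
    have := cont_pdx (cd_X1 hu.smooth)
    have := cont_pdy (cd_X1 hu.smooth)
    have := cont_pdx (cd_X2 hu.smooth)
    have := cont_pdy (cd_X2 hu.smooth)
    have := h1.continuous
    unfold trM2; fun_prop
  rw [integral_sub i1 i2] at hw
  have i3 : 0 ≤ ∫ p, trM2 u p * φ p := by
    apply integral_nonneg
    intro p
    by_cases hp : p ∈ tsupport φ
    · exact mul_nonneg ((by positivity : (0:ℝ) ≤ 2 * H ^ 2).trans (trM2_ge hu (h3 hp))) (h4 p)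
    · simp [tsupport_pd hp]
  have e : ∀ p, aq u p (pdx (fun q => - N3 u q) p) (pdy (fun q => - N3 u q) p) (pdx φ p) (pdy φ p)
      = - aq u p (pdx (N3 u) p) (pdy (N3 u) p) (pdx φ p) (pdy φ p) := by
    intro p
    rw [(hn p).pdx_eq, (hn p).pdy_eq]; unfold aq; ring
  simp only [e]
  rw [integral_neg]; linarith

/-- Maximum principle for the functions `ve`. -/
lemma max_ve (hu : Sol H R u) (e1 e2 : ℝ) (he : e1 ^ 2 + e2 ^ 2 = 1)
    {U : Set (ℝ × ℝ)} (hU : IsOpen U) (hUc : IsCompact (closure U))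
    (hUs : closure U ⊆ Dsc R) {k : ℝ} (hfr : ∀ p ∈ frontier U, ve H e1 e2 u p ≤ k) :
    ∀ p ∈ U, ve H e1 e2 u p ≤ k := by
  have hv := cd_ve (H := H) hu.smooth e1 e2
  obtain ⟨B1, hB1⟩ := (hcs_pdx hu.supp).exists_bound_of_continuous (cd_pdx hu.smooth).continuous
  obtain ⟨B2, hB2⟩ := (hcs_pdy hu.supp).exists_bound_of_continuous (cd_pdy hu.smooth).continuous
  set C := 2 * (1 + B1 ^ 2 + B2 ^ 2) with hC
  refine max_principle (R := R) (C := C) hu.smooth hv ?_ hU hUc hUs hfr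
  intro φ h1 h2 h3 h4
  have hw := weak_ve hu e1 e2 h1 h2 h3
  have cX1 := (cd_X1 hu.smooth).continuous
  have cX2 := (cd_X2 hu.smooth).continuous
  have cW := (cd_W hu.smooth).continuous
  have ctr : Continuous (trM2 u) := by
    have := cont_pdx (cd_X1 hu.smooth)
    have := cont_pdy (cd_X1 hu.smooth)
    have := cont_pdx (cd_X2 hu.smooth)
    have := cont_pdy (cd_X2 hu.smooth)
    unfold trM2; fun_prop
  have i1 : Integrable fun p => aq u p (pdx (ve H e1 e2 u) p) (pdy (ve H e1 e2 u) p)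
      (pdx φ p) (pdy φ p) := by
    apply Continuous.integrable_of_hasCompactSupport
      (cont_aq hu.smooth (cont_pdx hv) (cont_pdy hv) (cont_pdx h1) (cont_pdy h1))
    refine h2.mono' fun p hp => ?_
    by_contra hc
    exact hp (by simp [tsupport_pd hc, aq])
  have i2 : Integrable fun p => Wgraph u p * (trM2 u p - 2 * H ^ 2)
      * (X1 u p * e1 + X2 u p * e2) * φ p := by
    apply Continuous.integrable_of_hasCompactSupport _ h2.mul_left
    have := h1.continuous
    fun_prop
  have i3 : Integrable fun p => aq u p (pdx (ve H e1 e2 u) p) (pdy (ve H e1 e2 u) p)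
      (pdx (ve H e1 e2 u) p) (pdy (ve H e1 e2 u) p) * φ p :=
    ((cont_aq hu.smooth (cont_pdx hv) (cont_pdy hv) (cont_pdx hv) (cont_pdy hv)).mul
      h1.continuous).integrable_of_hasCompactSupport h2.mul_left
  rw [integral_sub i1 i2, sub_eq_zero] at hw
  rw [hw, ← integral_const_mul]
  refine integral_mono i2 (i3.const_mul C) fun p => ?_
  by_cases hp : p ∈ tsupport φ
  swap
  · simp [tsupport_pd hp]
  have hpD := h3 hp
  rw [aq_ve hu e1 e2 hpD, he]
  have hA : 0 ≤ trM2 u p - 2 * H ^ 2 := sub_nonneg.2 (trM2_ge hu hpD)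
  have hW := Wg_pos (u := u) p
  have hr := W_X_rel (u := u) p
  have hWsq := Wg_sq (u := u) p
  have b1 := hB1 p
  have b2 := hB2 p
  rw [Real.norm_eq_abs] at b1 b2
  have b1' := sq_le_sq' (by linarith [neg_abs_le (pdx u p), abs_nonneg (pdx u p)])
    ((le_abs_self _).trans b1)
  have b2' := sq_le_sq' (by linarith [neg_abs_le (pdy u p), abs_nonneg (pdy u p)])
    ((le_abs_self _).trans b2)
  have hE := cauchy2 (X1 u p) (X2 u p) e1 e2
  rw [he, mul_one] at hE
  have hX := X_lt_one (u := u) p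
  set E := X1 u p * e1 + X2 u p * e2
  -- `1 ≤ W² (1 - E²) ≤ (C / 2) (1 - E²)`, since `E² ≤ |X|²`
  have k1 : 1 ≤ (C / 2) * (1 - E ^ 2) := by
    have h5 : 1 ≤ Wgraph u p ^ 2 * (1 - E ^ 2) := by
      rw [← hr]; apply mul_le_mul_of_nonneg_left _ (sq_nonneg _); linarith
    have h6 : Wgraph u p ^ 2 * (1 - E ^ 2) ≤ (C / 2) * (1 - E ^ 2) := by
      apply mul_le_mul_of_nonneg_right _ (by linarith)
      rw [hC, hWsq]; linarith
    linarith
  have k2 : E ≤ (C / 2) * (1 - E ^ 2) := by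
    have : E ≤ 1 := by nlinarith
    linarith
  have k3 : 0 ≤ Wgraph u p * (trM2 u p - 2 * H ^ 2) * φ p :=
    mul_nonneg (mul_nonneg hW.le hA) (h4 p)
  have := mul_le_mul_of_nonneg_left k2 k3
  nlinarith
end

/-! ### Area estimate -/

/-- The cutoff function `((ρ² - |p|²)₊)²`. -/
def cut (ρ : ℝ) (p : ℝ × ℝ) : ℝ := max (ρ ^ 2 - (p.1 ^ 2 + p.2 ^ 2)) 0 ^ 2

/-- The logarithm of the area element. -/
def psi (u : ℝ × ℝ → ℝ) (p : ℝ × ℝ) : ℝ := Real.log (Wgraph u p)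

/-- The energy density controlled by stability. -/
def dens (u : ℝ × ℝ → ℝ) (p : ℝ × ℝ) : ℝ :=
  Wgraph u p * trM2 u p + aq u p (pdx (psi u) p) (pdy (psi u) p) (pdx (psi u) p) (pdy (psi u) p) / 2

lemma hp_cut (ρ : ℝ) (p : ℝ × ℝ) : HP (cut ρ) p
    (-4 * max (ρ ^ 2 - (p.1 ^ 2 + p.2 ^ 2)) 0 * p.1)
    (-4 * max (ρ ^ 2 - (p.1 ^ 2 + p.2 ^ 2)) 0 * p.2) := by
  have h1 : HP (fun q : ℝ × ℝ => ρ ^ 2 - (q.1 * q.1 + q.2 * q.2)) p _ _ :=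
    (HP.const (ρ ^ 2)).sub ((HP.fst.mul HP.fst).add (HP.snd.mul HP.snd))
  have h2 := HP.comp (hasDerivAt_max_sq _) h1
  have e : cut ρ = fun q : ℝ × ℝ => max (ρ ^ 2 - (q.1 * q.1 + q.2 * q.2)) 0 ^ 2 := by
    funext q; simp only [cut, sq]
  rw [e]
  refine h2.congr_coef ?_ ?_ <;> simp only [sq] <;> ring

lemma cd_cut (ρ : ℝ) : ContDiff ℝ 1 (cut ρ) := by
  have : ContDiff ℝ 1 (fun x : ℝ => max x 0 ^ 2) :=
    contDiff_of_hasDerivAt hasDerivAt_max_sq (by fun_prop)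
  exact this.comp (g := fun x : ℝ => max x 0 ^ 2)
    (f := fun p : ℝ × ℝ => ρ ^ 2 - (p.1 ^ 2 + p.2 ^ 2)) (by fun_prop)

lemma cut_nonneg (ρ : ℝ) (p : ℝ × ℝ) : 0 ≤ cut ρ p := sq_nonneg _

lemma cut_le (ρ : ℝ) (p : ℝ × ℝ) : cut ρ p ≤ ρ ^ 4 := by
  unfold cut
  have : max (ρ ^ 2 - (p.1 ^ 2 + p.2 ^ 2)) 0 ≤ ρ ^ 2 :=
    max_le (by nlinarith [sq_nonneg p.1, sq_nonneg p.2]) (sq_nonneg _)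
  calc _ ≤ (ρ ^ 2) ^ 2 := pow_le_pow_left₀ (le_max_right _ _) this 2
    _ = _ := by ring

lemma cut_grad_le (ρ : ℝ) (p : ℝ × ℝ) :
    pdx (cut ρ) p ^ 2 + pdy (cut ρ) p ^ 2 ≤ 16 * ρ ^ 2 * cut ρ p := by
  rw [(hp_cut ρ p).pdx_eq, (hp_cut ρ p).pdy_eq]
  unfold cut
  rcases le_total (ρ ^ 2 - (p.1 ^ 2 + p.2 ^ 2)) 0 with h | h
  · rw [max_eq_right h]; simp
  · rw [max_eq_left h]
    nlinarith [mul_nonneg h (sq_nonneg (ρ ^ 2 - (p.1 ^ 2 + p.2 ^ 2))),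
      mul_nonneg (sq_nonneg (ρ ^ 2 - (p.1 ^ 2 + p.2 ^ 2))) h]

/-- The closed Euclidean disk of radius `ρ` about the origin. -/
def CDsc (ρ : ℝ) : Set (ℝ × ℝ) := {p | p.1 ^ 2 + p.2 ^ 2 ≤ ρ ^ 2}

lemma isClosed_CDsc (ρ : ℝ) : IsClosed (CDsc ρ) := isClosed_le (by fun_prop) (by fun_prop)

lemma CDsc_subset_Icc {ρ : ℝ} (hρ : 0 ≤ ρ) : CDsc ρ ⊆ Icc ((-ρ, -ρ) : ℝ × ℝ) (ρ, ρ) := by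
  intro p hp
  have hp' : p.1 ^ 2 + p.2 ^ 2 ≤ ρ ^ 2 := hp
  have h1 := abs_le_of_sq_le_sq' (a := p.1) (by nlinarith [sq_nonneg p.2]) hρ
  have h2 := abs_le_of_sq_le_sq' (a := p.2) (by nlinarith [sq_nonneg p.1]) hρ
  exact ⟨⟨h1.1, h2.1⟩, ⟨h1.2, h2.2⟩⟩

lemma isCompact_CDsc {ρ : ℝ} (hρ : 0 ≤ ρ) : IsCompact (CDsc ρ) :=
  isCompact_Icc.of_isClosed_subset (isClosed_CDsc ρ) (CDsc_subset_Icc hρ)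

lemma tsupport_cut (ρ : ℝ) : tsupport (cut ρ) ⊆ CDsc ρ := by
  refine closure_minimal (fun p hp => ?_) (isClosed_CDsc ρ)
  by_contra hc
  apply hp
  have : ρ ^ 2 < p.1 ^ 2 + p.2 ^ 2 := not_le.1 hc
  unfold cut
  rw [max_eq_right (by linarith)]; norm_num

lemma hcs_cut {ρ : ℝ} (hρ : 0 ≤ ρ) : HasCompactSupport (cut ρ) :=
  (isCompact_CDsc hρ).of_isClosed_subset isClosed_closure (tsupport_cut ρ)

lemma CDsc_subset_Dsc {ρ R : ℝ} (hρ : 0 ≤ ρ) (h : ρ < R) : CDsc ρ ⊆ Dsc R := by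
  intro p hp
  have hp' : p.1 ^ 2 + p.2 ^ 2 ≤ ρ ^ 2 := hp
  change p.1 ^ 2 + p.2 ^ 2 < R ^ 2
  nlinarith

lemma volume_box {ρ : ℝ} (hρ : 0 ≤ ρ) :
    (volume (Icc ((-ρ, -ρ) : ℝ × ℝ) (ρ, ρ))).toReal = 4 * ρ ^ 2 := by
  rw [← Icc_prod_Icc, Measure.volume_eq_prod, Measure.prod_prod, Real.volume_Icc,
    ENNReal.toReal_mul, ENNReal.toReal_ofReal (by linarith)]
  ring

section
variable {H R : ℝ} {u : ℝ × ℝ → ℝ}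

set_option maxHeartbeats 1000000 in
/-- Interior area estimate, weighted by `1 / (1 + u²)`; the divergence equation is tested
with `arctan u` times a cutoff function. -/
lemma area_est (hH : 0 < H) {ρ : ℝ} (hρ : 0 < ρ) (hρR : ρ < R) (hu : Sol H R u) :
    ∫ p, cut ρ p * Wgraph u p * (1 + u p ^ 2)⁻¹
      ≤ (ρ ^ 4 + 8 * ρ ^ 3 + 4 * H * ρ ^ 4) * (4 * ρ ^ 2) := by
  have hu1 : ContDiff ℝ 1 u := hu.smooth.of_le (by norm_num)
  have hχ := cd_cut ρ
  have hX1 := cd_X1 hu.smooth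
  have hX2 := cd_X2 hu.smooth
  have hcs := hcs_cut hρ.le
  set φ : ℝ × ℝ → ℝ := fun q => Real.arctan (u q) * cut ρ q with hφ
  have cφ : ContDiff ℝ 1 φ := (Real.contDiff_arctan.comp hu1).mul hχ
  have kφ : HasCompactSupport φ := hcs.mul_left
  have kx : HasCompactSupport (fun q => X1 u q * φ q) := kφ.mul_left
  have ky : HasCompactSupport (fun q => X2 u q * φ q) := kφ.mul_left
  have z1 := int_pdx (hX1.mul cφ) kx
  have z2 := int_pdy (hX2.mul cφ) ky
  have i1 : Integrable (fun p => pdx (fun q => X1 u q * φ q) p) :=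
    (cont_pdx (hX1.mul cφ)).integrable_of_hasCompactSupport (hcs_pdx kx)
  have i2 : Integrable (fun p => pdy (fun q => X2 u q * φ q) p) :=
    (cont_pdy (hX2.mul cφ)).integrable_of_hasCompactSupport (hcs_pdy ky)
  have tot : ∫ p, (pdx (fun q => X1 u q * φ q) p + pdy (fun q => X2 u q * φ q) p) = 0 := by
    rw [integral_add i1 i2, z1, z2, add_zero]
  set K := ρ ^ 4 + 8 * ρ ^ 3 + 4 * H * ρ ^ 4 with hK
  set box := Icc ((-ρ, -ρ) : ℝ × ℝ) (ρ, ρ) with hbox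
  have mbox : MeasurableSet box := measurableSet_Icc
  have fbox : volume box ≠ ⊤ := isCompact_Icc.measure_lt_top.ne
  have i3 : Integrable (box.indicator fun _ => K) :=
    (integrable_indicator_iff mbox).2 (integrableOn_const fbox)
  have cu := hu1.continuous
  have cW := (cd_W hu.smooth).continuous
  have cs : Continuous fun p => (1 + u p ^ 2)⁻¹ :=
    (by fun_prop : Continuous fun p => 1 + u p ^ 2).inv₀ (fun p => by positivity)
  have i4 : Integrable fun p => cut ρ p * Wgraph u p * (1 + u p ^ 2)⁻¹ :=
    ((hχ.continuous.mul cW).mul cs).integrable_of_hasCompactSupport hcs.mul_right.mul_right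
  have main : ∀ p, cut ρ p * Wgraph u p * (1 + u p ^ 2)⁻¹
      ≤ (pdx (fun q => X1 u q * φ q) p + pdy (fun q => X2 u q * φ q) p)
        + box.indicator (fun _ => K) p := by
    intro p
    by_cases hp : p ∈ tsupport (cut ρ)
    swap
    · have hp2 : p ∉ tsupport φ := fun h => hp (tsupport_mul_subset_right h)
      have hp3 : p ∉ tsupport (fun q => X1 u q * φ q) := fun h => hp2 (tsupport_mul_subset_right h)
      have hp4 : p ∉ tsupport (fun q => X2 u q * φ q) := fun h => hp2 (tsupport_mul_subset_right h)
      rw [(tsupport_pd hp).1, (tsupport_pd hp3).2.1, (tsupport_pd hp4).2.2]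
      have : 0 ≤ box.indicator (fun _ => K) p := indicator_nonneg (fun _ _ => by positivity) p
      linarith
    have hpC := tsupport_cut ρ hp
    have hpb : p ∈ box := CDsc_subset_Icc hρ.le hpC
    rw [indicator_of_mem hpb]
    have hφp : HP φ p _ _ := (HP.comp (Real.hasDerivAt_arctan (u p)) (hu1.hp p)).mul (hχ.hp p)
    have f1 : HP (fun q => X1 u q * φ q) p _ _ := (hX1.hp p).mul hφp
    have f2 : HP (fun q => X2 u q * φ q) p _ _ := (hX2.hp p).mul hφp
    rw [f1.pdx_eq, f2.pdy_eq]
    have ht := hu.pde p (CDsc_subset_Dsc hρ.le hρR hpC)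
    have hg := cut_grad_le ρ p
    have hc0 := cut_nonneg ρ p
    have hc1 := cut_le ρ p
    have hW := Wg_pos (u := u) p
    have hW1 := Wg_ge (u := u) p
    have hr := W_X_rel (u := u) p
    have hX := X_lt_one (u := u) p
    rw [← W_mul_X1 (u := u), ← W_mul_X2 (u := u)]
    have ha1 := Real.arctan_lt_pi_div_two (u p)
    have ha2 := Real.neg_pi_div_two_lt_arctan (u p)
    have hpi := Real.pi_le_four
    have hX2' := cauchy2 (X1 u p) (X2 u p) (pdx (cut ρ) p) (pdy (cut ρ) p)
    have hxi : (X1 u p * pdx (cut ρ) p + X2 u p * pdy (cut ρ) p) ^ 2 ≤ (4 * ρ ^ 3) ^ 2 := by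
      have : pdx (cut ρ) p ^ 2 + pdy (cut ρ) p ^ 2 ≤ 16 * ρ ^ 2 * ρ ^ 4 :=
        hg.trans (mul_le_mul_of_nonneg_left hc1 (by positivity))
      nlinarith [sq_nonneg (pdx (cut ρ) p), sq_nonneg (pdy (cut ρ) p)]
    have hxi' := abs_le.1 (abs_le_of_sq_le_sq hxi (by positivity))
    have hs1 : (1 + u p ^ 2)⁻¹ ≤ 1 := inv_le_one_of_one_le₀ (by nlinarith [sq_nonneg (u p)])
    have hs0 : 0 < (1 + u p ^ 2)⁻¹ := by positivity
    have hA : |Real.arctan (u p)| ≤ 2 := abs_le.2 ⟨by linarith, by linarith⟩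
    have t1 : |Real.arctan (u p) * (X1 u p * pdx (cut ρ) p + X2 u p * pdy (cut ρ) p)|
        ≤ 2 * (4 * ρ ^ 3) := by
      rw [abs_mul]; exact mul_le_mul hA (abs_le.2 hxi') (abs_nonneg _) (by norm_num)
    have t2 : |Real.arctan (u p) * cut ρ p| ≤ 2 * ρ ^ 4 := by
      rw [abs_mul, abs_of_nonneg hc0]; exact mul_le_mul hA hc1 hc0 (by norm_num)
    have t1' := (abs_le.1 t1).1
    have t2' := (abs_le.1 t2).1
    -- `X · ∇u = W - 1 / W ≥ W - 1`
    have t3 : Wgraph u p * (1 - X1 u p ^ 2 - X2 u p ^ 2) ≤ 1 := by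
      have : 0 ≤ Wgraph u p * (1 - X1 u p ^ 2 - X2 u p ^ 2) := mul_nonneg hW.le (by linarith)
      nlinarith
    have t4 : cut ρ p * (1 + u p ^ 2)⁻¹ * (Wgraph u p * (1 - X1 u p ^ 2 - X2 u p ^ 2)) ≤ ρ ^ 4 := by
      have a1 : cut ρ p * (1 + u p ^ 2)⁻¹ ≤ ρ ^ 4 := (mul_le_of_le_one_right hc0 hs1).trans hc1
      have a2 : 0 ≤ cut ρ p * (1 + u p ^ 2)⁻¹ := mul_nonneg hc0 hs0.le
      exact (mul_le_of_le_one_right a2 t3).trans a1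
    have t5 : 2 * H * (Real.arctan (u p) * cut ρ p) ≥ - (4 * H * ρ ^ 4) := by
      have := mul_le_mul_of_nonneg_left t2' (by linarith : (0:ℝ) ≤ 2 * H)
      linarith
    have ht' : Real.arctan (u p) * cut ρ p * (pdx (X1 u) p + pdy (X2 u) p)
      = Real.arctan (u p) * cut ρ p * (2 * H) := by rw [ht]
    rw [one_div]
    simp only [hφ, hK]
    linear_combination t1' + t4 + t5 - ht'
  calc _ ≤ ∫ p, ((pdx (fun q => X1 u q * φ q) p + pdy (fun q => X2 u q * φ q) p)
        + box.indicator (fun _ => K) p) := integral_mono i4 ((i1.add i2).add i3) main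
    _ = K * (4 * ρ ^ 2) := by
      have := integral_add (i1.add i2) i3
      simp only [Pi.add_apply] at this
      rw [this, tot, integral_indicator_const K mbox, smul_eq_mul, Measure.real, volume_box hρ.le]
      ring
end

/-! ### Stability and the energy bound -/

section
variable {H R : ℝ} {u : ℝ × ℝ → ℝ}

lemma cd_psi (hu : ContDiff ℝ 2 u) : ContDiff ℝ 1 (psi u) :=
  (cd_W hu).log (fun p => (Wg_pos p).ne')

lemma hp_psi (hu : ContDiff ℝ 2 u) (p : ℝ × ℝ) :
    HP (psi u) p (pdx (Wgraph u) p / Wgraph u p) (pdy (Wgraph u) p / Wgraph u p) := by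
  have hw := (cd_W hu).hp p
  have hW := (Wg_pos (u := u) p).ne'
  refine (hw.comp (Real.hasDerivAt_log hW)).congr_coef ?_ ?_ <;> field_simp

lemma aq_grad_u_le (p : ℝ × ℝ) : aq u p (pdx u p) (pdy u p) (pdx u p) (pdy u p) ≤ Wgraph u p := by
  rw [← W_mul_X1 (u := u), ← W_mul_X2 (u := u)]
  unfold aq
  have h1 := W_X_rel (u := u) p
  have h2 := X_lt_one (u := u) p
  refine mul_le_of_le_one_right (Wg_pos p).le ?_
  have : Wgraph u p ^ 2 * (1 - X1 u p ^ 2 - X2 u p ^ 2) * (X1 u p ^ 2 + X2 u p ^ 2) ≤ 1 := by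
    rw [h1]; linarith
  linarith

lemma aq_sum_le (p : ℝ × ℝ) (k l x1 x2 y1 y2 : ℝ) :
    aq u p (k * x1 + l * y1) (k * x2 + l * y2) (k * x1 + l * y1) (k * x2 + l * y2)
      ≤ 2 * k ^ 2 * aq u p x1 x2 x1 x2 + 2 * l ^ 2 * aq u p y1 y2 y1 y2 := by
  have := aq_nonneg (u := u) p (k * x1 - l * y1) (k * x2 - l * y2)
  unfold aq at *
  linarith

/-- The test function `cut / (1 + u²)` of the stability inequality. -/
def tst (ρ : ℝ) (u : ℝ × ℝ → ℝ) (p : ℝ × ℝ) : ℝ := cut ρ p * (1 + u p * u p)⁻¹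

lemma hp_tst (hu : ContDiff ℝ 2 u) (ρ : ℝ) (p : ℝ × ℝ) : HP (tst ρ u) p
    ((1 + u p ^ 2)⁻¹ * pdx (cut ρ) p + (-(2 * u p * (1 + u p ^ 2)⁻¹ ^ 2 * cut ρ p)) * pdx u p)
    ((1 + u p ^ 2)⁻¹ * pdy (cut ρ) p + (-(2 * u p * (1 + u p ^ 2)⁻¹ ^ 2 * cut ρ p)) * pdy u p) := by
  have hu1 : ContDiff ℝ 1 u := hu.of_le (by norm_num)
  have h0 : (1 + u p * u p) ≠ 0 := by nlinarith [mul_self_nonneg (u p)]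
  have h1 := ((HP.const (p := p) 1).add ((hu1.hp p).mul (hu1.hp p))).comp
    (hasDerivAt_inv h0)
  have h2 : HP (tst ρ u) p _ _ := ((cd_cut ρ).hp p).mul h1
  refine h2.congr_coef ?_ ?_
  all_goals
    rw [show u p ^ 2 = u p * u p by ring]
    field_simp
    ring

lemma cd_tst (hu : ContDiff ℝ 2 u) (ρ : ℝ) : ContDiff ℝ 1 (tst ρ u) := by
  have hu1 : ContDiff ℝ 1 u := hu.of_le (by norm_num)
  exact (cd_cut ρ).mul ((contDiff_const.add (hu1.mul hu1)).inv
    (fun p => by nlinarith [mul_self_nonneg (u p)]))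

lemma aq_tst_le (hu : ContDiff ℝ 2 u) (ρ : ℝ) (p : ℝ × ℝ) :
    aq u p (pdx (tst ρ u) p) (pdy (tst ρ u) p) (pdx (tst ρ u) p) (pdy (tst ρ u) p)
      ≤ (32 * ρ ^ 2 + 8 * ρ ^ 4) * (cut ρ p * Wgraph u p * (1 + u p ^ 2)⁻¹) := by
  rw [(hp_tst hu ρ p).pdx_eq, (hp_tst hu ρ p).pdy_eq]
  refine (aq_sum_le p _ _ _ _ _ _).trans ?_
  have hW := Wg_pos (u := u) p
  have a1 := (aq_le (u := u) p (pdx (cut ρ) p) (pdy (cut ρ) p)).trans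
    (mul_le_mul_of_nonneg_left (cut_grad_le ρ p) hW.le)
  have a2 := aq_grad_u_le (u := u) p
  have hs0 : 0 < (1 + u p ^ 2)⁻¹ := by positivity
  have hs1 : (1 + u p ^ 2)⁻¹ ≤ 1 := inv_le_one_of_one_le₀ (by nlinarith [sq_nonneg (u p)])
  have hs2 : (1 + u p ^ 2)⁻¹ * u p ^ 2 ≤ 1 := by
    rw [inv_mul_le_iff₀ (by positivity)]; linarith
  have c0 := cut_nonneg ρ p
  have c1 := cut_le ρ p
  generalize (1 + u p ^ 2)⁻¹ = s at *
  generalize cut ρ p = χ at *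
  generalize Wgraph u p = W at *
  generalize aq u p (pdx (cut ρ) p) (pdy (cut ρ) p) (pdx (cut ρ) p) (pdy (cut ρ) p) = A at *
  generalize aq u p (pdx u p) (pdy u p) (pdx u p) (pdy u p) = B at *
  generalize u p = z at *
  have e1 : 2 * s ^ 2 * A ≤ 32 * ρ ^ 2 * (χ * W * s) := by
    calc 2 * s ^ 2 * A ≤ 2 * s ^ 2 * (W * (16 * ρ ^ 2 * χ)) :=
          mul_le_mul_of_nonneg_left a1 (by positivity)
      _ = 32 * ρ ^ 2 * (χ * W * s) * s := by ring
      _ ≤ _ := mul_le_of_le_one_right (by positivity) hs1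
  have e2 : 2 * (-(2 * z * s ^ 2 * χ)) ^ 2 * B ≤ 8 * ρ ^ 4 * (χ * W * s) := by
    have k1 : s ^ 2 * (s * z ^ 2) ≤ 1 :=
      mul_le_one₀ (pow_le_one₀ hs0.le hs1) (by positivity) hs2
    calc 2 * (-(2 * z * s ^ 2 * χ)) ^ 2 * B ≤ 2 * (-(2 * z * s ^ 2 * χ)) ^ 2 * W :=
          mul_le_mul_of_nonneg_left a2 (by positivity)
      _ = (8 * χ * (χ * W * s)) * (s ^ 2 * (s * z ^ 2)) := by ring
      _ ≤ 8 * χ * (χ * W * s) := mul_le_of_le_one_right (by positivity) k1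
      _ ≤ _ := by
        apply mul_le_mul_of_nonneg_right _ (by positivity)
        linarith
  linarith

lemma cont_trM2 (hu : ContDiff ℝ 2 u) : Continuous (trM2 u) := by
  have h1 := cont_pdx (cd_X1 hu)
  have h2 := cont_pdy (cd_X1 hu)
  have h3 := cont_pdx (cd_X2 hu)
  have h4 := cont_pdy (cd_X2 hu)
  unfold trM2
  fun_prop

lemma cont_dens (hu : ContDiff ℝ 2 u) : Continuous (dens u) := by
  have h1 := cont_pdx (cd_psi hu)
  have h2 := cont_pdy (cd_psi hu)
  have h3 := (cd_W hu).continuous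
  have h4 := cont_trM2 hu
  have h5 := (cd_X1 hu).continuous
  have h6 := (cd_X2 hu).continuous
  unfold dens aq
  fun_prop

lemma dens_nonneg (hu : Sol H R u) {p : ℝ × ℝ} (hp : p ∈ Dsc R) : 0 ≤ dens u p := by
  have h1 := trM2_ge hu hp
  have h2 := aq_nonneg (u := u) p (pdx (psi u) p) (pdy (psi u) p)
  have h3 := (Wg_pos (u := u) p).le
  have h4 : 0 ≤ trM2 u p := by nlinarith [sq_nonneg H]
  unfold dens
  positivity

/-- Stability inequality for the positive Jacobi function `N3`, tested with `tst² W`. -/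
lemma stab (hH : 0 < H) {ρ : ℝ} (hρ : 0 < ρ) (hρR : ρ < R) (hu : Sol H R u) :
    ∫ p, tst ρ u p ^ 2 * dens u p ≤ 2 * (32 * ρ ^ 2 + 8 * ρ ^ 4) *
      ((ρ ^ 4 + 8 * ρ ^ 3 + 4 * H * ρ ^ 4) * (4 * ρ ^ 2)) := by
  have hs := hu.smooth
  have ct := cd_tst hs ρ
  have cW := cd_W hs
  have kt : HasCompactSupport (tst ρ u) := (hcs_cut hρ.le).mul_right
  have cζ : ContDiff ℝ 1 (fun q => tst ρ u q * tst ρ u q * Wgraph u q) := (ct.mul ct).mul cW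
  have kζ : HasCompactSupport (fun q => tst ρ u q * tst ρ u q * Wgraph u q) :=
    kt.mul_right.mul_right
  have sζ : tsupport (fun q => tst ρ u q * tst ρ u q * Wgraph u q) ⊆ Dsc R := by
    refine (closure_mono ?_).trans ((tsupport_cut ρ).trans (CDsc_subset_Dsc hρ.le hρR))
    intro p hp hc
    apply hp
    simp [tst, hc]
  have wk := weak_N hu cζ kζ sζ
  have hu1 : ContDiff ℝ 1 u := hs.of_le (by norm_num)
  have cu := hu1.continuous
  have cs : Continuous fun p => (1 + u p ^ 2)⁻¹ :=
    (by fun_prop : Continuous fun p => 1 + u p ^ 2).inv₀ (fun p => by positivity)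
  have i4 : Integrable fun p => cut ρ p * Wgraph u p * (1 + u p ^ 2)⁻¹ :=
    (((cd_cut ρ).continuous.mul cW.continuous).mul cs).integrable_of_hasCompactSupport
      (hcs_cut hρ.le).mul_right.mul_right
  have i1 : Integrable fun p => tst ρ u p ^ 2 * dens u p := by
    refine ((ct.continuous.pow 2).mul (cont_dens hs)).integrable_of_hasCompactSupport ?_
    have : HasCompactSupport fun p => tst ρ u p * (tst ρ u p * dens u p) := kt.mul_right
    have e : (fun p => tst ρ u p ^ 2 * dens u p) = fun p => tst ρ u p * (tst ρ u p * dens u p) := by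
      funext p; ring
    rw [← e] at this; exact this
  have i2 : Integrable fun p => (aq u p (pdx (N3 u) p) (pdy (N3 u) p)
      (pdx (fun q => tst ρ u q * tst ρ u q * Wgraph u q) p)
      (pdy (fun q => tst ρ u q * tst ρ u q * Wgraph u q) p)
      - trM2 u p * (tst ρ u p * tst ρ u p * Wgraph u p)) := by
    have h1 := cont_pdx (cd_N3 hs)
    have h2 := cont_pdy (cd_N3 hs)
    have h3 := cont_pdx cζ
    have h4 := cont_pdy cζ
    have h5 := (cd_X1 hs).continuous
    have h6 := (cd_X2 hs).continuous
    have h7 := cont_trM2 hs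
    have h8 := cζ.continuous
    have h9 := cW.continuous
    refine Continuous.integrable_of_hasCompactSupport ?_ ?_
    · unfold aq; fun_prop
    · refine HasCompactSupport.intro kζ.isCompact (fun p hp => ?_)
      have := tsupport_pd hp
      have h0 : tst ρ u p * tst ρ u p * Wgraph u p = 0 := this.1
      rw [h0, this.2.1, this.2.2]
      unfold aq; ring
  have main : ∀ p, tst ρ u p ^ 2 * dens u p ≤
      2 * (32 * ρ ^ 2 + 8 * ρ ^ 4) * (cut ρ p * Wgraph u p * (1 + u p ^ 2)⁻¹)
      - (aq u p (pdx (N3 u) p) (pdy (N3 u) p)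
      (pdx (fun q => tst ρ u q * tst ρ u q * Wgraph u q) p)
      (pdy (fun q => tst ρ u q * tst ρ u q * Wgraph u q) p)
      - trM2 u p * (tst ρ u p * tst ρ u p * Wgraph u p)) := by
    intro p
    have b1 := aq_tst_le hs ρ p
    have hζ : HP (fun q => tst ρ u q * tst ρ u q * Wgraph u q) p _ _ :=
      ((ct.hp p).mul (ct.hp p)).mul (cW.hp p)
    have hW := Wg_pos (u := u) p
    have hN : HP (N3 u) p _ _ := (cW.hp p).comp (hasDerivAt_inv hW.ne')
    have b2 := aq_nonneg (u := u) p (tst ρ u p * pdx (psi u) p + 2 * pdx (tst ρ u) p)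
      (tst ρ u p * pdy (psi u) p + 2 * pdy (tst ρ u) p)
    rw [hζ.pdx_eq, hζ.pdy_eq, hN.pdx_eq, hN.pdy_eq]
    have ex : pdx (Wgraph u) p = Wgraph u p * pdx (psi u) p := by
      rw [(hp_psi hs p).pdx_eq]; field_simp
    have ey : pdy (Wgraph u) p = Wgraph u p * pdy (psi u) p := by
      rw [(hp_psi hs p).pdy_eq]; field_simp
    rw [ex, ey]
    have hWW : (Wgraph u p ^ 2)⁻¹ * Wgraph u p * Wgraph u p = 1 := by field_simp
    unfold dens
    unfold aq at *
    have key : ∀ (I W x1 x2 t tx ty a b : ℝ), I * W * W = 1 →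
        W * (-I * (W * a) * ((tx * t + t * tx) * W + t * t * (W * a)) +
          -I * (W * b) * ((ty * t + t * ty) * W + t * t * (W * b))
          - (x1 * (-I * (W * a)) + x2 * (-I * (W * b))) *
            (x1 * ((tx * t + t * tx) * W + t * t * (W * a)) +
             x2 * ((ty * t + t * ty) * W + t * t * (W * b))))
        = -2 * t * (W * (a * tx + b * ty - (x1 * a + x2 * b) * (x1 * tx + x2 * ty)))
          - t ^ 2 * (W * (a * a + b * b - (x1 * a + x2 * b) * (x1 * a + x2 * b))) := by
      intro I W x1 x2 t tx ty a b h
      linear_combination (W * (-(a * (2 * tx * t + t * t * a)) - (b * (2 * ty * t + t * t * b)) + (x1 * a + x2 * b) * (x1 * (2 * tx * t + t * t * a) + x2 * (2 * ty * t + t * t * b)))) * h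
    have key' := key (Wgraph u p ^ 2)⁻¹ (Wgraph u p) (X1 u p) (X2 u p) (tst ρ u p)
      (pdx (tst ρ u) p) (pdy (tst ρ u) p) (pdx (psi u) p) (pdy (psi u) p) hWW
    linear_combination b2 / 2 + 2 * b1 + key'
  calc _ ≤ ∫ p, (2 * (32 * ρ ^ 2 + 8 * ρ ^ 4) * (cut ρ p * Wgraph u p * (1 + u p ^ 2)⁻¹)
      - (aq u p (pdx (N3 u) p) (pdy (N3 u) p)
      (pdx (fun q => tst ρ u q * tst ρ u q * Wgraph u q) p)
      (pdy (fun q => tst ρ u q * tst ρ u q * Wgraph u q) p)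
      - trM2 u p * (tst ρ u p * tst ρ u p * Wgraph u p))) :=
        integral_mono i1 ((i4.const_mul _).sub i2) main
    _ = 2 * (32 * ρ ^ 2 + 8 * ρ ^ 4) * ∫ p, cut ρ p * Wgraph u p * (1 + u p ^ 2)⁻¹ := by
      rw [integral_sub (i4.const_mul _) i2, wk, sub_zero, integral_const_mul]
    _ ≤ _ := mul_le_mul_of_nonneg_left (area_est hH hρ hρR hu) (by positivity)

/-- The energy of `log W` and of the Gauss map on the part of the graph above a small disk
with height at most one is bounded in terms of `H` and `R` alone. -/
lemma energy_bound (hH : 0 < H) (hR : 0 < R) : ∃ E : ℝ, 0 ≤ E ∧ ∀ u, Sol H R u →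
    ∀ S : Set (ℝ × ℝ), S ⊆ CDsc (R / 4) → (∀ p ∈ S, |u p| ≤ 1) →
      ∫⁻ p in S, ENNReal.ofReal (dens u p) ≤ ENNReal.ofReal E := by
  set ρ := R / 2 with hρ
  have hρ0 : 0 < ρ := by positivity
  have hρR : ρ < R := by linarith
  set m : ℝ := (9 * ρ ^ 4 / 32) ^ 2 with hm
  have hm0 : 0 < m := by positivity
  refine ⟨m⁻¹ * (2 * (32 * ρ ^ 2 + 8 * ρ ^ 4) *
      ((ρ ^ 4 + 8 * ρ ^ 3 + 4 * H * ρ ^ 4) * (4 * ρ ^ 2))), by positivity, ?_⟩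
  intro u hu S hS hSu
  have hs := hu.smooth
  have kt : HasCompactSupport (tst ρ u) := (hcs_cut hρ0.le).mul_right
  have i1 : Integrable fun p => tst ρ u p ^ 2 * dens u p := by
    refine (((cd_tst hs ρ).continuous.pow 2).mul (cont_dens hs)).integrable_of_hasCompactSupport ?_
    have : HasCompactSupport fun p => tst ρ u p * (tst ρ u p * dens u p) := kt.mul_right
    have e : (fun p => tst ρ u p ^ 2 * dens u p) = fun p => tst ρ u p * (tst ρ u p * dens u p) := by
      funext p; ring
    rw [← e] at this; exact this
  have nn : ∀ p, 0 ≤ tst ρ u p ^ 2 * dens u p := by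
    intro p
    by_cases hp : p ∈ CDsc ρ
    · exact mul_nonneg (sq_nonneg _) (dens_nonneg hu (CDsc_subset_Dsc hρ0.le hρR hp))
    · have : cut ρ p = 0 := by
        by_contra h
        exact hp (tsupport_cut ρ (subset_closure h))
      simp [tst, this]
  have lb : ∀ p ∈ S, dens u p ≤ m⁻¹ * (tst ρ u p ^ 2 * dens u p) := by
    intro p hp
    have hpC := hS hp
    have hd := dens_nonneg hu (CDsc_subset_Dsc (by positivity) (by linarith) hpC)
    have hp1 : p.1 ^ 2 + p.2 ^ 2 ≤ (R / 4) ^ 2 := hpC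
    have hc : 9 * ρ ^ 4 / 16 ≤ cut ρ p := by
      unfold cut
      have : 3 * ρ ^ 2 / 4 ≤ max (ρ ^ 2 - (p.1 ^ 2 + p.2 ^ 2)) 0 := by
        refine le_trans ?_ (le_max_left _ _)
        rw [hρ]; nlinarith
      calc 9 * ρ ^ 4 / 16 = (3 * ρ ^ 2 / 4) ^ 2 := by ring
        _ ≤ _ := pow_le_pow_left₀ (by positivity) this 2
    have hu2 : u p * u p ≤ 1 := by
      have := abs_le.1 (hSu p hp)
      nlinarith
    have hs2 : (1 / 2 : ℝ) ≤ (1 + u p * u p)⁻¹ := by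
      rw [one_div]
      exact inv_anti₀ (by nlinarith [mul_self_nonneg (u p)]) (by linarith)
    have ht : 9 * ρ ^ 4 / 32 ≤ tst ρ u p := by
      unfold tst
      calc 9 * ρ ^ 4 / 32 = 9 * ρ ^ 4 / 16 * (1 / 2) := by ring
        _ ≤ _ := mul_le_mul hc hs2 (by norm_num) (cut_nonneg _ _)
    have ht2 : m ≤ tst ρ u p ^ 2 := pow_le_pow_left₀ (by positivity) ht 2
    rw [← mul_assoc]
    refine le_mul_of_one_le_left hd ?_
    rw [← inv_mul_cancel₀ hm0.ne']
    exact mul_le_mul_of_nonneg_left ht2 (by positivity)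
  calc ∫⁻ p in S, ENNReal.ofReal (dens u p)
      ≤ ∫⁻ p in S, ENNReal.ofReal (m⁻¹ * (tst ρ u p ^ 2 * dens u p)) := by
        refine setLIntegral_mono ?_ (fun p hp => ENNReal.ofReal_le_ofReal (lb p hp))
        refine Measurable.ennreal_ofReal ?_
        exact (continuous_const.mul
          (((cd_tst hs ρ).continuous.pow 2).mul (cont_dens hs))).measurable
    _ ≤ ∫⁻ p, ENNReal.ofReal (m⁻¹ * (tst ρ u p ^ 2 * dens u p)) := setLIntegral_le_lintegral _ _
    _ = ENNReal.ofReal (∫ p, m⁻¹ * (tst ρ u p ^ 2 * dens u p)) :=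
        (ofReal_integral_eq_lintegral_ofReal (i1.const_mul _)
          (ae_of_all _ fun p => mul_nonneg (by positivity) (nn p))).symm
    _ ≤ _ := by
        apply ENNReal.ofReal_le_ofReal
        rw [integral_const_mul]
        exact mul_le_mul_of_nonneg_left (stab hH hρ0 hρR hu) (by positivity)
end

/-! ### Closed forms and a flow -/

/-- Poincaré lemma in the plane, for the form `a dx + b dy`. -/
lemma poincare {s : Set (ℝ × ℝ)} (hs : Convex ℝ s) (ho : IsOpen s) {a b : ℝ × ℝ → ℝ}
    (h : ∀ p ∈ s, ∃ k l m, HP a p k l ∧ HP b p l m) :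
    ∃ f : ℝ × ℝ → ℝ, ∀ p ∈ s, HP f p (a p) (b p) := by
  have key : ∀ p ∈ s, ∀ k l m, HP a p k l → HP b p l m →
      HasFDerivAt (fun q => lin (a q) (b q))
        ((lin k l).smulRight (ContinuousLinearMap.fst ℝ ℝ ℝ)
          + (lin l m).smulRight (ContinuousLinearMap.snd ℝ ℝ ℝ)) p := by
    intro p _ k l m h1 h2
    exact (HasFDerivAt.smul_const h1 (ContinuousLinearMap.fst ℝ ℝ ℝ)).add
      (HasFDerivAt.smul_const h2 (ContinuousLinearMap.snd ℝ ℝ ℝ))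
  refine hs.exists_forall_hasFDerivAt_of_fderiv_symmetric (ω := fun q => lin (a q) (b q)) ho ?_ ?_
  · intro p hp
    obtain ⟨k, l, m, h1, h2⟩ := h p hp
    exact (key p hp k l m h1 h2).differentiableAt.differentiableWithinAt
  · intro p hp x y
    obtain ⟨k, l, m, h1, h2⟩ := h p hp
    rw [(key p hp k l m h1 h2).fderiv]
    simp
    ring

/-- Global solvability of `y' = A(y) w`, `y(0) = 0` on a time interval of length `1 / 16`, for a
symmetric matrix field `A` with entries bounded by `4`, with continuous dependence on `w`. -/
lemma linflow {a b c : ℝ × ℝ → ℝ} (ha : ContDiff ℝ 1 a) (hb : ContDiff ℝ 1 b) (hc : ContDiff ℝ 1 c)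
    (ba : ∀ p, |a p| ≤ 4) (bb : ∀ p, |b p| ≤ 4) (bc : ∀ p, |c p| ≤ 4) {r : ℝ} (hr : 0 < r) :
    ∃ Y : ℝ × ℝ → ℝ → ℝ × ℝ, (∀ w, ‖w‖ ≤ r → Y w 0 = 0 ∧
      ∀ t ∈ Icc (0:ℝ) (1 / 16), HasDerivWithinAt (Y w)
        (a (Y w t) * w.1 + b (Y w t) * w.2, b (Y w t) * w.1 + c (Y w t) * w.2)
        (Icc 0 (1 / 16)) t) ∧
      ContinuousOn (fun w => Y w (1 / 16)) (Metric.closedBall 0 r) := by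
  let f : (ℝ × ℝ) × (ℝ × ℝ) → (ℝ × ℝ) × (ℝ × ℝ) := fun x =>
    ((a x.1 * x.2.1 + b x.1 * x.2.2, b x.1 * x.2.1 + c x.1 * x.2.2), 0)
  have hf : ContDiff ℝ 1 f := by
    have h1 : ContDiff ℝ 1 (fun x : (ℝ × ℝ) × (ℝ × ℝ) => a x.1) := ha.comp contDiff_fst
    have h2 : ContDiff ℝ 1 (fun x : (ℝ × ℝ) × (ℝ × ℝ) => b x.1) := hb.comp contDiff_fst
    have h3 : ContDiff ℝ 1 (fun x : (ℝ × ℝ) × (ℝ × ℝ) => c x.1) := hc.comp contDiff_fst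
    have h4 : ContDiff ℝ 1 (fun x : (ℝ × ℝ) × (ℝ × ℝ) => x.2.1) := by fun_prop
    have h5 : ContDiff ℝ 1 (fun x : (ℝ × ℝ) × (ℝ × ℝ) => x.2.2) := by fun_prop
    exact (((h1.mul h4).add (h2.mul h5)).prodMk ((h2.mul h4).add (h3.mul h5))).prodMk contDiff_const
  obtain ⟨K, hK⟩ := hf.contDiffOn.exists_lipschitzOnWith (s := Metric.closedBall 0 (2 * r))
    one_ne_zero (convex_closedBall _ _) (isCompact_closedBall _ _)
  have hbd : ∀ x ∈ Metric.closedBall (0 : (ℝ × ℝ) × (ℝ × ℝ)) (2 * r), ‖f x‖ ≤ 16 * r := by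
    intro x hx
    have hx' : ‖x‖ ≤ 2 * r := by simpa using hx
    have h2 : ‖x.2‖ ≤ 2 * r := (norm_snd_le x).trans hx'
    have h3 : |x.2.1| ≤ 2 * r := (norm_fst_le x.2).trans h2
    have h4 : |x.2.2| ≤ 2 * r := (norm_snd_le x.2).trans h2
    have g : ∀ k l : ℝ, |k| ≤ 4 → |l| ≤ 4 → |k * x.2.1 + l * x.2.2| ≤ 16 * r := by
      intro k l hk hl
      calc _ ≤ |k * x.2.1| + |l * x.2.2| := abs_add_le _ _
        _ ≤ 4 * (2 * r) + 4 * (2 * r) := by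
          rw [abs_mul, abs_mul]
          exact add_le_add (mul_le_mul hk h3 (abs_nonneg _) (by norm_num))
            (mul_le_mul hl h4 (abs_nonneg _) (by norm_num))
        _ = _ := by ring
    simp only [f, Prod.norm_def, Real.norm_eq_abs]
    refine max_le (max_le (g _ _ (ba _) (bb _)) (g _ _ (bb _) (bc _))) ?_
    simp; positivity
  have hP : IsPicardLindelof (fun _ => f) (tmin := 0) (tmax := 1 / 16)
      ⟨0, by norm_num⟩ (0 : (ℝ × ℝ) × (ℝ × ℝ)) ⟨2 * r, by positivity⟩ ⟨r, hr.le⟩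
      ⟨16 * r, by positivity⟩ K := by
    refine IsPicardLindelof.of_time_independent hbd hK ?_
    change 16 * r * max (1 / 16 - 0) (0 - 0) ≤ 2 * r - r
    rw [max_eq_left (by norm_num)]; linarith
  obtain ⟨α, h1, h2⟩ := hP.exists_forall_mem_closedBall_eq_hasDerivWithinAt_continuousOn
  have hmem : ∀ w : ℝ × ℝ, ‖w‖ ≤ r → ((0 : ℝ × ℝ), w) ∈ Metric.closedBall (0 : (ℝ × ℝ) × (ℝ × ℝ)) r := by
    intro w hw
    rw [mem_closedBall_zero_iff, Prod.norm_mk, norm_zero]; exact max_le hr.le hw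
  refine ⟨fun w t => (α ((0, w), t)).1, fun w hw => ?_, ?_⟩
  · obtain ⟨i0, i1⟩ := h1 (0, w) (hmem w hw)
    have hsnd : ∀ t ∈ Icc (0:ℝ) (1 / 16), (α ((0, w), t)).2 = w := by
      intro t ht
      have hd : ∀ x ∈ Icc (0:ℝ) (1 / 16), HasDerivWithinAt (fun t => (α ((0, w), t)).2)
          ((fun _ => (0 : ℝ × ℝ)) x) (Icc 0 (1 / 16)) x := fun x hx => (i1 x hx).snd
      have := norm_image_sub_le_of_norm_deriv_le_segment' (C := 0) hd (fun x _ => by simp) t ht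
      have i0' : α ((0, w), 0) = (0, w) := i0
      rw [i0'] at this
      simp only [zero_mul] at this
      exact sub_eq_zero.1 (norm_le_zero_iff.1 this)
    refine ⟨?_, fun t ht => ?_⟩
    · have i0' : α ((0, w), 0) = (0, w) := i0
      simp [i0']
    · have := (i1 t ht).fst
      simp only [f, hsnd t ht] at this
      exact this
  · have : ContinuousOn (fun w : ℝ × ℝ => α ((0, w), 1 / 16)) (Metric.closedBall 0 r) := by
      refine h2.comp (f := fun w : ℝ × ℝ => (((0 : ℝ × ℝ), w), (1 / 16 : ℝ)))
        (by fun_prop) ?_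
      intro w hw
      exact ⟨hmem w (by simpa using hw), by norm_num⟩
    exact this.fst

/-- Diagonal entries of the Jacobian matrix `(I - X Xᵀ / (1 + c n)) / (c + n)` of the chart. -/
def m11 (c n x : ℝ) : ℝ := (1 - x ^ 2 / (1 + c * n)) / (c + n)

/-- Off-diagonal entry of the Jacobian matrix of the chart. -/
def m12 (c n x y : ℝ) : ℝ := -(x * y / (1 + c * n)) / (c + n)

lemma m11_bd {c n x : ℝ} (hc : 1 / 4 ≤ c) (hn : 0 ≤ n) (hx : x ^ 2 ≤ 1) : |m11 c n x| ≤ 4 := by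
  unfold m11
  have hd : 1 ≤ 1 + c * n := by nlinarith [mul_nonneg (by linarith : (0:ℝ) ≤ c) hn]
  have h1 : 0 ≤ x ^ 2 / (1 + c * n) := by positivity
  have h2 : x ^ 2 / (1 + c * n) ≤ 1 := by rw [div_le_one (by linarith)]; linarith
  rw [abs_of_nonneg (div_nonneg (by linarith) (by linarith)), div_le_iff₀ (by linarith)]
  linarith

lemma m12_bd {c n x y : ℝ} (hc : 1 / 4 ≤ c) (hn : 0 ≤ n) (hx : x ^ 2 + y ^ 2 ≤ 1) :
    |m12 c n x y| ≤ 4 := by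
  unfold m12
  have hd : 1 ≤ 1 + c * n := by nlinarith [mul_nonneg (by linarith : (0:ℝ) ≤ c) hn]
  have h0 : |x * y| ≤ 1 := by
    rw [abs_le]; constructor <;> nlinarith [sq_nonneg (x + y), sq_nonneg (x - y)]
  have h2 : |x * y| / (1 + c * n) ≤ 1 := by rw [div_le_one (by linarith)]; linarith
  rw [abs_div, abs_neg, abs_div, abs_of_pos (by linarith : 0 < 1 + c * n),
    abs_of_pos (by linarith : 0 < c + n), div_le_iff₀ (by linarith)]
  linarith

lemma hp_lin_comp {f : ℝ × ℝ → ℝ} {y : ℝ → ℝ × ℝ} {s : Set ℝ} {t a b : ℝ} {v : ℝ × ℝ}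
    (hf : HP f (y t) a b) (hy : HasDerivWithinAt y v s t) :
    HasDerivWithinAt (fun τ => f (y τ)) (a * v.1 + b * v.2) s t := by
  have := HasFDerivAt.comp_hasDerivWithinAt t hf hy
  exact this.congr_deriv (by simp)

lemma convex_Dsc (R : ℝ) : Convex ℝ (Dsc R) := by
  have hc : ConvexOn ℝ univ (fun p : ℝ × ℝ => p.1 ^ 2 + p.2 ^ 2) := by
    have h1 : ConvexOn ℝ univ (fun p : ℝ × ℝ => p.1 ^ 2) :=
      (even_two.convexOn_pow (𝕜 := ℝ)).comp_linearMap (LinearMap.fst ℝ ℝ ℝ)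
    have h2 : ConvexOn ℝ univ (fun p : ℝ × ℝ => p.2 ^ 2) :=
      (even_two.convexOn_pow (𝕜 := ℝ)).comp_linearMap (LinearMap.snd ℝ ℝ ℝ)
    exact h1.add h2
  have := hc.convex_lt (R ^ 2)
  simpa [Dsc] using this

section
variable {H R : ℝ} {u : ℝ × ℝ → ℝ}

lemma N3_pos (p : ℝ × ℝ) : 0 < N3 u p := inv_pos.2 (Wg_pos p)

lemma N3_le_one (p : ℝ × ℝ) : N3 u p ≤ 1 := inv_le_one_of_one_le₀ (Wg_ge p)

lemma N3_sq (p : ℝ × ℝ) : N3 u p ^ 2 = 1 - X1 u p ^ 2 - X2 u p ^ 2 := by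
  have h := W_X_rel (u := u) p
  have hW := Wg_pos (u := u) p
  unfold N3
  field_simp
  linarith

lemma W_N3 (p : ℝ × ℝ) : Wgraph u p * N3 u p = 1 := mul_inv_cancel₀ (Wg_pos p).ne'

/-- The rows of `N3 I + W X Xᵀ + (1 + 2 H u) I` are closed forms; `Φ` is a pair of primitives. -/
lemma exists_Phi (hu : Sol H R u) : ∃ f g : ℝ × ℝ → ℝ, f 0 = 0 ∧ g 0 = 0 ∧
    ∀ p ∈ Dsc R,
      HP f p (1 + 2 * H * u p + N3 u p + Wgraph u p * X1 u p ^ 2) (Wgraph u p * X1 u p * X2 u p) ∧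
      HP g p (Wgraph u p * X1 u p * X2 u p) (1 + 2 * H * u p + N3 u p + Wgraph u p * X2 u p ^ 2) := by
  have hs := hu.smooth
  have hu1 : ContDiff ℝ 1 u := hs.of_le (by norm_num)
  obtain ⟨f, hf⟩ := poincare (convex_Dsc R) (isOpen_Dsc R)
    (a := fun p => 1 + 2 * H * u p + N3 u p + pdx u p * X1 u p)
    (b := fun p => pdy u p * X1 u p) (by
      intro p hp
      have a1 := (((HP.const 1).add ((HP.const (2 * H)).mul (hu1.hp p))).add (hp_N3 hs p)).add
        (((cd_pdx hs).hp p).mul ((cd_X1 hs).hp p))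
      have a2 := ((cd_pdy hs).hp p).mul ((cd_X1 hs).hp p)
      refine ⟨_, _, _, a1, a2.congr_coef ?_ rfl⟩
      have hc := pd_comm hs p
      have hp := hu.pde p hp
      have r1 := W_mul_X1 (u := u) p
      have r2 := W_mul_X2 (u := u) p
      rw [← r1, ← r2, hc, ← hp]
      ring)
  obtain ⟨g, hg⟩ := poincare (convex_Dsc R) (isOpen_Dsc R)
    (a := fun p => pdx u p * X2 u p)
    (b := fun p => 1 + 2 * H * u p + N3 u p + pdy u p * X2 u p) (by
      intro p hp
      have a1 := (((HP.const 1).add ((HP.const (2 * H)).mul (hu1.hp p))).add (hp_N3 hs p)).add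
        (((cd_pdy hs).hp p).mul ((cd_X2 hs).hp p))
      have a2 := ((cd_pdx hs).hp p).mul ((cd_X2 hs).hp p)
      refine ⟨_, _, _, a2, a1.congr_coef ?_ rfl⟩
      have hc := pd_comm hs p
      have hp := hu.pde p hp
      have r1 := W_mul_X1 (u := u) p
      have r2 := W_mul_X2 (u := u) p
      rw [← r1, ← r2, hc, ← hp]
      ring)
  refine ⟨fun p => f p - f 0, fun p => g p - g 0, by simp, by simp, fun p hp => ⟨?_, ?_⟩⟩
  · refine ((hf p hp).sub (HP.const (f 0))).congr_coef ?_ ?_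
    · rw [sub_zero, ← W_mul_X1]; ring
    · rw [sub_zero, ← W_mul_X2]; ring
  · refine ((hg p hp).sub (HP.const (g 0))).congr_coef ?_ ?_
    · rw [sub_zero, ← W_mul_X1]
    · rw [sub_zero, ← W_mul_X2]; ring

end

/-! ### Charts of uniform size -/

lemma m_alg1 {c n W x y : ℝ} (hK : c + n ≠ 0) (hd : 1 + c * n ≠ 0) (h1 : W * n = 1)
    (h2 : n ^ 2 = 1 - x ^ 2 - y ^ 2) :
    (c + n + W * x ^ 2) * m11 c n x + W * x * y * m12 c n x y = 1 := by
  unfold m11 m12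
  field_simp
  linear_combination (x ^ 2 * (c + n)) * h1 - x ^ 2 * W * h2

lemma m_alg2 {c n W x y : ℝ} (hK : c + n ≠ 0) (hd : 1 + c * n ≠ 0) (h1 : W * n = 1)
    (h2 : n ^ 2 = 1 - x ^ 2 - y ^ 2) :
    (c + n + W * x ^ 2) * m12 c n x y + W * x * y * m11 c n y = 0 := by
  unfold m11 m12
  field_simp
  linear_combination (x * y * (c + n)) * h1 - x * y * W * h2

lemma m_alg3 {c n W x y : ℝ} (hK : c + n ≠ 0) (hd : 1 + c * n ≠ 0) (h1 : W * n = 1)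
    (h2 : n ^ 2 = 1 - x ^ 2 - y ^ 2) :
    W * x * m11 c n x + W * y * m12 c n x y = x / (1 + c * n) := by
  unfold m11 m12
  field_simp
  linear_combination (x * (c + n)) * h1 - x * W * h2

lemma m12_comm (c n x y : ℝ) : m12 c n x y = m12 c n y x := by unfold m12; ring

/-- A parametrization `σ` of a neighbourhood of the origin by a disk of radius `κ`, whose
Jacobian matrix is `(I - X Xᵀ / (1 + c N3)) / (c + N3)` with `c = 1 + 2 H u`. -/
structure Chart (H R κ : ℝ) (u : ℝ × ℝ → ℝ) (σ : ℝ × ℝ → ℝ × ℝ) : Prop where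
  zero : σ 0 = 0
  mem : ∀ v ∈ Dsc κ, σ v ∈ CDsc (R / 4)
  hgt : ∀ v ∈ Dsc κ, |u (σ v)| ≤ 1
  hgt' : ∀ v ∈ Dsc κ, |2 * H * u (σ v)| ≤ 1 / 2
  inj : InjOn σ (Dsc κ)
  d1 : ∀ v ∈ Dsc κ, HP (fun q => (σ q).1) v
    (m11 (1 + 2 * H * u (σ v)) (N3 u (σ v)) (X1 u (σ v)))
    (m12 (1 + 2 * H * u (σ v)) (N3 u (σ v)) (X1 u (σ v)) (X2 u (σ v)))
  d2 : ∀ v ∈ Dsc κ, HP (fun q => (σ q).2) v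
    (m12 (1 + 2 * H * u (σ v)) (N3 u (σ v)) (X1 u (σ v)) (X2 u (σ v)))
    (m11 (1 + 2 * H * u (σ v)) (N3 u (σ v)) (X2 u (σ v)))

/-- A `C¹` function equal to the identity on `[1/2, ∞)` and bounded below by `1/4`. -/
def kap (t : ℝ) : ℝ := t + max (1 / 2 - t) 0 ^ 2

lemma kap_ge (t : ℝ) : 1 / 4 ≤ kap t := by
  unfold kap
  rcases le_total (1 / 2 - t) 0 with h | h
  · rw [max_eq_right h]; linarith
  · rw [max_eq_left h]; nlinarith [sq_nonneg (1 / 2 - t - 1 / 2)]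

lemma kap_eq {t : ℝ} (h : 1 / 2 ≤ t) : kap t = t := by
  unfold kap; rw [max_eq_right (by linarith)]; ring

lemma cd_kap : ContDiff ℝ 1 kap := by
  have : ContDiff ℝ 1 (fun x : ℝ => max x 0 ^ 2) :=
    contDiff_of_hasDerivAt hasDerivAt_max_sq (by fun_prop)
  exact contDiff_id.add (this.comp (g := fun x : ℝ => max x 0 ^ 2)
    (f := fun t : ℝ => 1 / 2 - t) (by fun_prop))

section
variable {H R : ℝ} {u : ℝ × ℝ → ℝ}

lemma X1_sq_le (p : ℝ × ℝ) : X1 u p ^ 2 ≤ 1 := by nlinarith [X_lt_one (u := u) p, sq_nonneg (X2 u p)]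
lemma X2_sq_le (p : ℝ × ℝ) : X2 u p ^ 2 ≤ 1 := by nlinarith [X_lt_one (u := u) p, sq_nonneg (X1 u p)]

lemma cd_m11 {c n x : ℝ × ℝ → ℝ} (hc : ContDiff ℝ 1 c) (hn : ContDiff ℝ 1 n) (hx : ContDiff ℝ 1 x)
    (h1 : ∀ p, c p + n p ≠ 0) (h2 : ∀ p, 1 + c p * n p ≠ 0) :
    ContDiff ℝ 1 fun p => m11 (c p) (n p) (x p) :=
  (contDiff_const.sub ((hx.pow 2).div (contDiff_const.add (hc.mul hn)) h2)).div (hc.add hn) h1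

lemma cd_m12 {c n x y : ℝ × ℝ → ℝ} (hc : ContDiff ℝ 1 c) (hn : ContDiff ℝ 1 n) (hx : ContDiff ℝ 1 x)
    (hy : ContDiff ℝ 1 y) (h1 : ∀ p, c p + n p ≠ 0) (h2 : ∀ p, 1 + c p * n p ≠ 0) :
    ContDiff ℝ 1 fun p => m12 (c p) (n p) (x p) (y p) :=
  (((hx.mul hy).div (contDiff_const.add (hc.mul hn)) h2).neg).div (hc.add hn) h1

/-- The linear map with matrix `(a b; c d)`. -/
def mat (a b c d : ℝ) : ℝ × ℝ →L[ℝ] ℝ × ℝ := (lin a b).prod (lin c d)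

@[simp] lemma mat_apply (a b c d : ℝ) (v : ℝ × ℝ) :
    mat a b c d v = (a * v.1 + b * v.2, c * v.1 + d * v.2) := by
  simp [mat]

/-- Existence of charts of uniform size: `σ` is the inverse of the map `Φ` of `exists_Phi`, obtained by
following the flow lines that `Φ` maps to rays. The truncation `kap` of `1 + 2 H u` keeps the flow
defined everywhere, and the bound on the height shows that it is inactive. -/
lemma exists_chart (hH : 0 < H) {κ : ℝ} (hκ0 : 0 < κ) (hκ1 : κ ≤ 1) (hκH : 2 * H * κ ≤ 1 / 2)
    (hκR : 48 * κ ≤ R) (hu : Sol H R u) : ∃ σ, Chart H R κ u σ := by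
  have hs := hu.smooth
  have hu1 : ContDiff ℝ 1 u := hs.of_le (by norm_num)
  obtain ⟨f, g, hf0, hg0, hfg⟩ := exists_Phi hu
  set ct : ℝ × ℝ → ℝ := fun p => kap (1 + 2 * H * u p) with hct
  have cct : ContDiff ℝ 1 ct := cd_kap.comp (by fun_prop)
  have ct4 : ∀ p, 1 / 4 ≤ ct p := fun p => kap_ge _
  have n0 : ∀ p, 0 < N3 u p := fun p => N3_pos p
  have hK : ∀ p, ct p + N3 u p ≠ 0 := fun p => by have := ct4 p; have := n0 p; positivity
  have hd : ∀ p, 1 + ct p * N3 u p ≠ 0 := fun p => by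
    have := ct4 p; have := n0 p; have : 0 < ct p := by linarith
    positivity
  have hd1 : ∀ p, 1 ≤ 1 + ct p * N3 u p := fun p => by
    have := ct4 p; have := n0 p; have : 0 < ct p := by linarith
    have : 0 < ct p * N3 u p := by positivity
    linarith
  have cN := cd_N3 hs
  obtain ⟨Y, hY, hYc⟩ := linflow (a := fun p => m11 (ct p) (N3 u p) (X1 u p))
    (b := fun p => m12 (ct p) (N3 u p) (X1 u p) (X2 u p))
    (c := fun p => m11 (ct p) (N3 u p) (X2 u p))
    (cd_m11 cct cN (cd_X1 hs) hK hd) (cd_m12 cct cN (cd_X1 hs) (cd_X2 hs) hK hd)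
    (cd_m11 cct cN (cd_X2 hs) hK hd)
    (fun p => m11_bd (ct4 p) (n0 p).le (X1_sq_le p))
    (fun p => m12_bd (ct4 p) (n0 p).le (X_lt_one p).le)
    (fun p => m11_bd (ct4 p) (n0 p).le (X2_sq_le p)) (r := 16 * κ) (by positivity)
  have coord : ∀ v ∈ Dsc κ, |v.1| < κ ∧ |v.2| < κ := by
    intro v hv
    have hv' : v.1 ^ 2 + v.2 ^ 2 < κ ^ 2 := hv
    exact ⟨abs_lt_of_sq_lt_sq (by nlinarith [sq_nonneg v.2]) hκ0.le,
      abs_lt_of_sq_lt_sq (by nlinarith [sq_nonneg v.1]) hκ0.le⟩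
  have nrm : ∀ v ∈ Dsc κ, ‖(16:ℝ) • v‖ < 16 * κ := by
    intro v hv
    rw [norm_smul, Prod.norm_def, Real.norm_eq_abs, Real.norm_eq_abs, Real.norm_eq_abs,
      abs_of_pos (by norm_num : (0:ℝ) < 16)]
    exact mul_lt_mul_of_pos_left (max_lt (coord v hv).1 (coord v hv).2) (by norm_num)
  -- height along the flow
  have hgtY : ∀ v ∈ Dsc κ, ∀ t ∈ Icc (0:ℝ) (1 / 16), |u (Y ((16:ℝ) • v) t)| ≤ κ := by
    intro v hv t ht
    obtain ⟨y0, y1⟩ := hY _ (nrm v hv).le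
    have hder : ∀ x ∈ Icc (0:ℝ) (1 / 16), HasDerivWithinAt (fun τ => u (Y ((16:ℝ) • v) τ))
        ((fun τ => 16 * (X1 u (Y ((16:ℝ) • v) τ) * v.1 + X2 u (Y ((16:ℝ) • v) τ) * v.2) /
          (1 + ct (Y ((16:ℝ) • v) τ) * N3 u (Y ((16:ℝ) • v) τ))) x) (Icc 0 (1 / 16)) x := by
      intro x hx
      refine (hp_lin_comp (hu1.hp _) (y1 x hx)).congr_deriv ?_
      beta_reduce
      generalize Y ((16:ℝ) • v) x = p
      have k1 := m_alg3 (hK p) (hd p) (W_N3 p) (N3_sq p)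
      have k2 := m_alg3 (x := X2 u p) (y := X1 u p) (hK p) (hd p) (W_N3 p) (by rw [N3_sq p]; ring)
      rw [m12_comm] at k2
      rw [← W_mul_X1 (u := u), ← W_mul_X2 (u := u)]
      simp only [Prod.smul_fst, Prod.smul_snd, smul_eq_mul]
      linear_combination 16 * v.1 * k1 + 16 * v.2 * k2
    have hbd : ∀ x ∈ Ico (0:ℝ) (1 / 16), ‖(fun τ => 16 * (X1 u (Y ((16:ℝ) • v) τ) * v.1
        + X2 u (Y ((16:ℝ) • v) τ) * v.2) /
          (1 + ct (Y ((16:ℝ) • v) τ) * N3 u (Y ((16:ℝ) • v) τ))) x‖ ≤ 16 * κ := by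
      intro x hx
      generalize hp : Y ((16:ℝ) • v) x = p
      simp only [hp, Real.norm_eq_abs]
      rw [abs_div, abs_of_pos (lt_of_lt_of_le one_pos (hd1 p)), div_le_iff₀
        (lt_of_lt_of_le one_pos (hd1 p)), abs_mul, abs_of_pos (by norm_num : (0:ℝ) < 16)]
      have e : |X1 u p * v.1 + X2 u p * v.2| ≤ κ := by
        apply abs_le_of_sq_le_sq _ hκ0.le
        have hv' : v.1 ^ 2 + v.2 ^ 2 < κ ^ 2 := hv
        have := cauchy2 (X1 u p) (X2 u p) v.1 v.2
        have := X_lt_one (u := u) p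
        nlinarith [sq_nonneg v.1, sq_nonneg v.2]
      calc _ ≤ 16 * κ := by linarith
        _ ≤ _ := le_mul_of_one_le_right (by positivity) (hd1 p)
    have := norm_image_sub_le_of_norm_deriv_le_segment' hder hbd t ht
    rw [y0, hu.zero, sub_zero, sub_zero, Real.norm_eq_abs] at this
    refine this.trans ?_
    nlinarith [ht.1, ht.2]
  have ctY : ∀ v ∈ Dsc κ, ∀ t ∈ Icc (0:ℝ) (1 / 16),
      ct (Y ((16:ℝ) • v) t) = 1 + 2 * H * u (Y ((16:ℝ) • v) t) := by
    intro v hv t ht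
    have := (abs_le.1 (hgtY v hv t ht)).1
    refine kap_eq ?_
    nlinarith
  -- position along the flow
  have posY : ∀ v ∈ Dsc κ, ∀ t ∈ Icc (0:ℝ) (1 / 16), Y ((16:ℝ) • v) t ∈ CDsc (R / 4) := by
    intro v hv t ht
    obtain ⟨y0, y1⟩ := hY _ (nrm v hv).le
    obtain ⟨v1, v2⟩ := coord v hv
    have g : ∀ k l : ℝ, |k| ≤ 4 → |l| ≤ 4 → |k * (16 * v.1) + l * (16 * v.2)| ≤ 128 * κ := by
      intro k l hk hl
      calc _ ≤ |k * (16 * v.1)| + |l * (16 * v.2)| := abs_add_le _ _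
        _ = |k| * (16 * |v.1|) + |l| * (16 * |v.2|) := by
          rw [abs_mul, abs_mul, abs_mul, abs_mul, abs_of_pos (by norm_num : (0:ℝ) < 16)]
        _ ≤ 4 * (16 * κ) + 4 * (16 * κ) := by
          exact add_le_add (mul_le_mul hk (by linarith) (by positivity) (by norm_num))
            (mul_le_mul hl (by linarith) (by positivity) (by norm_num))
        _ = _ := by ring
    have := norm_image_sub_le_of_norm_deriv_le_segment' (C := 128 * κ) y1 (fun x _ => by
      simp only [Prod.norm_def, Real.norm_eq_abs, Prod.smul_fst, Prod.smul_snd, smul_eq_mul]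
      exact max_le (g _ _ (m11_bd (ct4 _) (n0 _).le (X1_sq_le _))
          (m12_bd (ct4 _) (n0 _).le (X_lt_one _).le))
        (g _ _ (m12_bd (ct4 _) (n0 _).le (X_lt_one _).le)
          (m11_bd (ct4 _) (n0 _).le (X2_sq_le _)))) t ht
    rw [y0, sub_zero, sub_zero] at this
    generalize Y ((16:ℝ) • v) t = p at *
    have h8 : ‖p‖ ≤ 8 * κ := this.trans (by nlinarith [ht.1, ht.2])
    have p1 := abs_le.1 ((norm_fst_le p).trans h8)
    have p2 := abs_le.1 ((norm_snd_le p).trans h8)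
    change p.1 ^ 2 + p.2 ^ 2 ≤ (R / 4) ^ 2
    nlinarith
  have hRpos : 0 < R := by linarith
  have memD : CDsc (R / 4) ⊆ Dsc R := CDsc_subset_Dsc (by positivity) (by linarith)
  -- the flow lines are mapped to straight lines
  have linY : ∀ v ∈ Dsc κ, (f (Y ((16:ℝ) • v) (1 / 16)), g (Y ((16:ℝ) • v) (1 / 16))) = v := by
    intro v hv
    obtain ⟨y0, y1⟩ := hY _ (nrm v hv).le
    have d1 : ∀ x ∈ Icc (0:ℝ) (1 / 16), HasDerivWithinAt
        (fun τ => f (Y ((16:ℝ) • v) τ) - 16 * v.1 * τ) ((fun _ => (0:ℝ)) x) (Icc 0 (1 / 16)) x := by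
      intro x hx
      refine ((hp_lin_comp (hfg _ (memD (posY v hv x hx))).1 (y1 x hx)).sub
        ((hasDerivWithinAt_id x _).const_mul (16 * v.1))).congr_deriv ?_
      have e := ctY v hv x hx
      generalize Y ((16:ℝ) • v) x = p at *
      rw [← e]
      have k1 := m_alg1 (hK p) (hd p) (W_N3 p) (N3_sq p)
      have k2 := m_alg2 (hK p) (hd p) (W_N3 p) (N3_sq p)
      simp only [Prod.smul_fst, Prod.smul_snd, smul_eq_mul]
      linear_combination 16 * v.1 * k1 + 16 * v.2 * k2
    have d2 : ∀ x ∈ Icc (0:ℝ) (1 / 16), HasDerivWithinAt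
        (fun τ => g (Y ((16:ℝ) • v) τ) - 16 * v.2 * τ) ((fun _ => (0:ℝ)) x) (Icc 0 (1 / 16)) x := by
      intro x hx
      refine ((hp_lin_comp (hfg _ (memD (posY v hv x hx))).2 (y1 x hx)).sub
        ((hasDerivWithinAt_id x _).const_mul (16 * v.2))).congr_deriv ?_
      have e := ctY v hv x hx
      generalize Y ((16:ℝ) • v) x = p at *
      rw [← e]
      have k1 := m_alg1 (x := X2 u p) (y := X1 u p) (hK p) (hd p) (W_N3 p) (by rw [N3_sq p]; ring)
      have k2 := m_alg2 (x := X2 u p) (y := X1 u p) (hK p) (hd p) (W_N3 p) (by rw [N3_sq p]; ring)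
      rw [m12_comm] at k1 k2
      simp only [Prod.smul_fst, Prod.smul_snd, smul_eq_mul]
      linear_combination 16 * v.2 * k1 + 16 * v.1 * k2
    have ht : (1 / 16 : ℝ) ∈ Icc (0:ℝ) (1 / 16) := by norm_num
    have r1 := norm_image_sub_le_of_norm_deriv_le_segment' (C := 0) d1 (fun _ _ => by simp) _ ht
    have r2 := norm_image_sub_le_of_norm_deriv_le_segment' (C := 0) d2 (fun _ _ => by simp) _ ht
    rw [zero_mul] at r1 r2
    have r1' := norm_le_zero_iff.1 r1
    have r2' := norm_le_zero_iff.1 r2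
    rw [y0, hf0] at r1'
    rw [y0, hg0] at r2'
    ext <;> simp only [] <;> linarith
  have ht : (1 / 16 : ℝ) ∈ Icc (0:ℝ) (1 / 16) := by norm_num
  have hder : ∀ v ∈ Dsc κ, HasFDerivAt (fun v : ℝ × ℝ => Y ((16:ℝ) • v) (1 / 16))
      (mat (m11 (1 + 2 * H * u (Y ((16:ℝ) • v) (1 / 16))) (N3 u (Y ((16:ℝ) • v) (1 / 16)))
          (X1 u (Y ((16:ℝ) • v) (1 / 16))))
        (m12 (1 + 2 * H * u (Y ((16:ℝ) • v) (1 / 16))) (N3 u (Y ((16:ℝ) • v) (1 / 16)))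
          (X1 u (Y ((16:ℝ) • v) (1 / 16))) (X2 u (Y ((16:ℝ) • v) (1 / 16))))
        (m12 (1 + 2 * H * u (Y ((16:ℝ) • v) (1 / 16))) (N3 u (Y ((16:ℝ) • v) (1 / 16)))
          (X1 u (Y ((16:ℝ) • v) (1 / 16))) (X2 u (Y ((16:ℝ) • v) (1 / 16))))
        (m11 (1 + 2 * H * u (Y ((16:ℝ) • v) (1 / 16))) (N3 u (Y ((16:ℝ) • v) (1 / 16)))
          (X2 u (Y ((16:ℝ) • v) (1 / 16))))) v := by
    intro v hv
    have hc : ContinuousAt (fun v : ℝ × ℝ => Y ((16:ℝ) • v) (1 / 16)) v := by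
      have h1 : ContinuousAt (fun w => Y w (1 / 16)) ((16:ℝ) • v) :=
        hYc.continuousAt (by
          refine mem_of_superset (Metric.isOpen_ball.mem_nhds ?_) Metric.ball_subset_closedBall
          simpa using nrm v hv)
      exact ContinuousAt.comp (f := fun v : ℝ × ℝ => (16:ℝ) • v) h1 (by fun_prop)
    have hinv : ∀ᶠ y in nhds v, (fun p => (f p, g p)) (Y ((16:ℝ) • y) (1 / 16)) = y := by
      filter_upwards [(isOpen_Dsc κ).mem_nhds hv] with y hy
      exact linY y hy
    obtain ⟨a1, a2⟩ := hfg _ (memD (posY v hv _ ht))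
    have e := ctY v hv _ ht
    rw [← e]
    rw [← e] at a1 a2
    have hP := HasFDerivAt.prodMk a1 a2
    have k1 := m_alg1 (hK (Y ((16:ℝ) • v) (1 / 16))) (hd _) (W_N3 _) (N3_sq _)
    have k2 := m_alg2 (hK (Y ((16:ℝ) • v) (1 / 16))) (hd _) (W_N3 _) (N3_sq _)
    have k3 := m_alg1 (x := X2 u (Y ((16:ℝ) • v) (1 / 16))) (y := X1 u (Y ((16:ℝ) • v) (1 / 16)))
      (hK _) (hd _) (W_N3 _) (by rw [N3_sq]; ring)
    have k4 := m_alg2 (x := X2 u (Y ((16:ℝ) • v) (1 / 16))) (y := X1 u (Y ((16:ℝ) • v) (1 / 16)))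
      (hK _) (hd _) (W_N3 _) (by rw [N3_sq]; ring)
    rw [m12_comm] at k3 k4
    refine HasFDerivAt.congr_fderiv (hP.of_comp_of_leftInverse
      (f'symm := mat _ _ _ _) hc (hasFDerivAt_id _) hinv ?_) (ContinuousLinearMap.comp_id _)
    intro x
    generalize Y ((16:ℝ) • v) (1 / 16) = p at *
    rw [ContinuousLinearMap.prod_apply, lin_apply, lin_apply, mat_apply]
    refine Prod.ext ?_ ?_
    · change _ * (_ * x.1 + _ * x.2) + _ * (_ * x.1 + _ * x.2) = x.1
      linear_combination x.1 * k1 + x.2 * k4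
    · change _ * (_ * x.1 + _ * x.2) + _ * (_ * x.1 + _ * x.2) = x.2
      linear_combination x.2 * k3 + x.1 * k2
  refine ⟨fun v => Y ((16:ℝ) • v) (1 / 16), ?_, ?_, ?_, ?_, ?_, ?_, ?_⟩
  · have h0 : (0 : ℝ × ℝ) ∈ Dsc κ := by
      change (0:ℝ) ^ 2 + 0 ^ 2 < κ ^ 2
      have := pow_pos hκ0 2
      simpa using this
    obtain ⟨y0, y1⟩ := hY _ (nrm 0 h0).le
    have := norm_image_sub_le_of_norm_deriv_le_segment' (C := 0) y1 (fun x _ => by simp) _ ht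
    rw [y0, sub_zero, zero_mul] at this
    exact norm_le_zero_iff.1 this
  · exact fun v hv => posY v hv _ ht
  · exact fun v hv => (hgtY v hv _ ht).trans hκ1
  · intro v hv
    rw [abs_mul, abs_of_pos (by positivity : 0 < 2 * H)]
    exact (mul_le_mul_of_nonneg_left (hgtY v hv _ ht) (by positivity)).trans hκH
  · intro v hv w hw h
    have h' : Y ((16:ℝ) • v) (1 / 16) = Y ((16:ℝ) • w) (1 / 16) := h
    rw [← linY v hv, ← linY w hw, h']
  · intro v hv
    refine HasFDerivAt.congr_fderiv (hder v hv).fst ?_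
    ext <;> simp
  · intro v hv
    refine HasFDerivAt.congr_fderiv (hder v hv).snd ?_
    ext <;> simp
end

/-! ### Geometry of the charts -/

section
variable {H R κ : ℝ} {u : ℝ × ℝ → ℝ} {σ : ℝ × ℝ → ℝ × ℝ}

/-- First diagonal entry of the Jacobian matrix of a chart. -/
def mA (H : ℝ) (u : ℝ × ℝ → ℝ) (σ : ℝ × ℝ → ℝ × ℝ) (v : ℝ × ℝ) : ℝ :=
  m11 (1 + 2 * H * u (σ v)) (N3 u (σ v)) (X1 u (σ v))
/-- Off-diagonal entry of the Jacobian matrix of a chart. -/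
def mB (H : ℝ) (u : ℝ × ℝ → ℝ) (σ : ℝ × ℝ → ℝ × ℝ) (v : ℝ × ℝ) : ℝ :=
  m12 (1 + 2 * H * u (σ v)) (N3 u (σ v)) (X1 u (σ v)) (X2 u (σ v))
/-- Second diagonal entry of the Jacobian matrix of a chart. -/
def mD (H : ℝ) (u : ℝ × ℝ → ℝ) (σ : ℝ × ℝ → ℝ × ℝ) (v : ℝ × ℝ) : ℝ :=
  m11 (1 + 2 * H * u (σ v)) (N3 u (σ v)) (X2 u (σ v))

lemma hasFDerivAt_pair {σ : ℝ × ℝ → ℝ × ℝ} {v : ℝ × ℝ} {a b c d : ℝ}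
    (h1 : HP (fun q => (σ q).1) v a b) (h2 : HP (fun q => (σ q).2) v c d) :
    HasFDerivAt σ (mat a b c d) v :=
  HasFDerivAt.prodMk (f₁ := fun q => (σ q).1) (f₂ := fun q => (σ q).2) h1 h2

/-- Chain rule for the composition with a plane map. -/
lemma HP.comp_map {f : ℝ × ℝ → ℝ} {σ : ℝ × ℝ → ℝ × ℝ} {v : ℝ × ℝ} {a b c d x y : ℝ}
    (hf : HP f (σ v) x y) (h1 : HP (fun q => (σ q).1) v a b) (h2 : HP (fun q => (σ q).2) v c d) :
    HP (fun q => f (σ q)) v (x * a + y * c) (x * b + y * d) := by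
  refine HasFDerivAt.congr_fderiv (HasFDerivAt.comp v hf (hasFDerivAt_pair h1 h2)) ?_
  ext <;> simp

lemma mat_det (a b c d : ℝ) : (mat a b c d).det = a * d - b * c := by
  have := LinearMap.det_toLin (Module.Basis.finTwoProd ℝ) !![a, b; c, d]
  rw [Matrix.det_fin_two_of] at this
  rw [← this]
  unfold ContinuousLinearMap.det
  congr 1
  ext <;> simp [mat, Matrix.toLin_finTwoProd_apply]

lemma m_det {c n x y : ℝ} (hK : c + n ≠ 0) (hd : 1 + c * n ≠ 0)
    (h2 : n ^ 2 = 1 - x ^ 2 - y ^ 2) :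
    m11 c n x * m11 c n y - m12 c n x y * m12 c n x y = n / ((c + n) * (1 + c * n)) := by
  unfold m11 m12
  field_simp
  linear_combination -(1 + c * n) * h2

/-- Comparison of the Dirichlet energies of a function on the graph and of its expression in the
chart; `P` is the squared Euclidean norm and `s` the squared component along `X`. -/
lemma m_energy_aux {c n P s : ℝ} (hc : 1 / 2 ≤ c) (hc' : c ≤ 3 / 2) (hn : 0 < n) (hn1 : n ≤ 1)
    (hs : 0 ≤ s) (hs' : s ≤ (1 - n ^ 2) * P) (hP : 0 ≤ P) :
    P * (1 + c * n) ^ 2 - 2 * s * (1 + c * n) + (1 - n ^ 2) * s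
      ≤ 2 * (P - s) * ((c + n) * (1 + c * n)) := by
  have hcn : 0 < c * n := mul_pos (by linarith) hn
  have e1 : 0 ≤ 2 * (c + n) - (1 + c * n) := by nlinarith
  have e2 : 0 ≤ 2 * (1 + c * n) - (c + n) := by nlinarith
  set k := c + n with hk
  set d := 1 + c * n with hd
  have hd0 : 0 < d := by linarith
  have hk0 : 0 < k := by linarith
  have hdk : d - (1 - n ^ 2) = n * k := by rw [hd, hk]; ring
  rcases le_total 0 (-2 * k * d + 2 * d - (1 - n ^ 2)) with h | h
  · have a1 : 0 ≤ P * (d * (2 * k - d)) := by positivity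
    have a2 := mul_nonneg hs h
    linarith
  · have a1 : 0 ≤ P * (n ^ 2 * k * (2 * d - k)) := by positivity
    have a2 := mul_nonneg_of_nonpos_of_nonpos (sub_nonpos.2 hs') h
    have : n ^ 2 * k * (2 * d - k) = 2 * n ^ 2 * k * d - (d - (1 - n ^ 2)) ^ 2 := by
      rw [hdk]; ring
    rw [this] at a1
    nlinarith

lemma m_energy {c n x y a b W : ℝ} (hc : 1 / 2 ≤ c) (hc' : c ≤ 3 / 2) (hn : 0 < n) (hn1 : n ≤ 1)
    (h1 : W * n = 1) (h2 : n ^ 2 = 1 - x ^ 2 - y ^ 2) :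
    (a * m11 c n x + b * m12 c n x y) ^ 2 + (a * m12 c n x y + b * m11 c n y) ^ 2
      ≤ 2 * (n / ((c + n) * (1 + c * n))
        * (W * (a * a + b * b - (x * a + y * b) * (x * a + y * b)))) := by
  have hK : 0 < c + n := by linarith
  have hcn : 0 < c * n := mul_pos (by linarith) hn
  have hd : 0 < 1 + c * n := by linarith
  have hW : W = 1 / n := by field_simp; linarith
  have key := m_energy_aux hc hc' hn hn1 (P := a ^ 2 + b ^ 2) (s := (x * a + y * b) ^ 2)
    (by positivity) (by rw [h2]; nlinarith [cauchy2 x y a b]) (by positivity)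
  have L : (a * m11 c n x + b * m12 c n x y) ^ 2 + (a * m12 c n x y + b * m11 c n y) ^ 2
      = ((a ^ 2 + b ^ 2) * (1 + c * n) ^ 2 - 2 * (x * a + y * b) ^ 2 * (1 + c * n)
        + (1 - n ^ 2) * (x * a + y * b) ^ 2) / ((c + n) ^ 2 * (1 + c * n) ^ 2) := by
    unfold m11 m12
    field_simp
    linear_combination (x * a + y * b) ^ 2 * h2
  have Rr : 2 * (n / ((c + n) * (1 + c * n))
        * (W * (a * a + b * b - (x * a + y * b) * (x * a + y * b))))
      = (2 * (a ^ 2 + b ^ 2 - (x * a + y * b) ^ 2) * ((c + n) * (1 + c * n)))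
        / ((c + n) ^ 2 * (1 + c * n) ^ 2) := by
    rw [hW]; field_simp
  rw [L, Rr]
  exact div_le_div_of_nonneg_right key (by positivity)

namespace Chart

lemma c_mem (hC : Chart H R κ u σ) {v : ℝ × ℝ} (hv : v ∈ Dsc κ) :
    1 / 2 ≤ 1 + 2 * H * u (σ v) ∧ 1 + 2 * H * u (σ v) ≤ 3 / 2 := by
  have := abs_le.1 (hC.hgt' v hv); constructor <;> linarith [this.1, this.2]

lemma K_pos (hC : Chart H R κ u σ)
    {v : ℝ × ℝ} (hv : v ∈ Dsc κ) : 0 < 1 + 2 * H * u (σ v) + N3 u (σ v) := by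
  linarith [(hC.c_mem hv).1, N3_pos (u := u) (σ v)]

lemma d_pos (hC : Chart H R κ u σ)
    {v : ℝ × ℝ} (hv : v ∈ Dsc κ) : 1 ≤ 1 + (1 + 2 * H * u (σ v)) * N3 u (σ v) := by
  have := mul_pos (by linarith [(hC.c_mem hv).1] : 0 < 1 + 2 * H * u (σ v)) (N3_pos (u := u) (σ v))
  linarith

lemma e1 (hC : Chart H R κ u σ) {v : ℝ × ℝ} (hv : v ∈ Dsc κ) :
    HP (fun q => (σ q).1) v (mA H u σ v) (mB H u σ v) := hC.d1 v hv

lemma e2 (hC : Chart H R κ u σ) {v : ℝ × ℝ} (hv : v ∈ Dsc κ) :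
    HP (fun q => (σ q).2) v (mB H u σ v) (mD H u σ v) := hC.d2 v hv

lemma fder (hC : Chart H R κ u σ) {v : ℝ × ℝ} (hv : v ∈ Dsc κ) :
    HasFDerivAt σ (mat (mA H u σ v) (mB H u σ v) (mB H u σ v) (mD H u σ v)) v :=
  hasFDerivAt_pair (hC.e1 hv) (hC.e2 hv)

lemma cont (hC : Chart H R κ u σ)
    : ContinuousOn σ (Dsc κ) := fun _ hv => (hC.fder hv).continuousAt.continuousWithinAt

lemma bdA (hC : Chart H R κ u σ) {v : ℝ × ℝ} (hv : v ∈ Dsc κ) : |mA H u σ v| ≤ 4 :=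
  m11_bd (by linarith [(hC.c_mem hv).1]) (N3_pos _).le (X1_sq_le _)
lemma bdB (hC : Chart H R κ u σ) {v : ℝ × ℝ} (hv : v ∈ Dsc κ) : |mB H u σ v| ≤ 4 :=
  m12_bd (by linarith [(hC.c_mem hv).1]) (N3_pos _).le (X_lt_one _).le
lemma bdD (hC : Chart H R κ u σ) {v : ℝ × ℝ} (hv : v ∈ Dsc κ) : |mD H u σ v| ≤ 4 :=
  m11_bd (by linarith [(hC.c_mem hv).1]) (N3_pos _).le (X2_sq_le _)

lemma det (hC : Chart H R κ u σ) {v : ℝ × ℝ} (hv : v ∈ Dsc κ) :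
    (mat (mA H u σ v) (mB H u σ v) (mB H u σ v) (mD H u σ v)).det =
      N3 u (σ v) / ((1 + 2 * H * u (σ v) + N3 u (σ v)) * (1 + (1 + 2 * H * u (σ v)) * N3 u (σ v))) := by
  rw [mat_det]
  exact m_det (hC.K_pos hv).ne' (by linarith [hC.d_pos hv] : _ ≠ (0:ℝ)) (N3_sq _)

lemma hp_u (hC : Chart H R κ u σ)
    (hu : Sol H R u) {v : ℝ × ℝ} (hv : v ∈ Dsc κ) : HP (fun q => u (σ q)) v
    (X1 u (σ v) / (1 + (1 + 2 * H * u (σ v)) * N3 u (σ v)))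
    (X2 u (σ v) / (1 + (1 + 2 * H * u (σ v)) * N3 u (σ v))) := by
  have hK := (hC.K_pos hv).ne'
  have hd : 1 + (1 + 2 * H * u (σ v)) * N3 u (σ v) ≠ 0 := (lt_of_lt_of_le one_pos (hC.d_pos hv)).ne'
  have hu1 : ContDiff ℝ 1 u := hu.smooth.of_le (by norm_num)
  refine (HP.comp_map (hu1.hp _) (hC.e1 hv) (hC.e2 hv)).congr_coef ?_ ?_
  · rw [← W_mul_X1 (u := u), ← W_mul_X2 (u := u)]
    exact m_alg3 hK hd (W_N3 _) (N3_sq _)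
  · rw [← W_mul_X1 (u := u), ← W_mul_X2 (u := u), add_comm]
    have := m_alg3 (x := X2 u (σ v)) (y := X1 u (σ v)) hK hd (W_N3 (u := u) (σ v))
      (by rw [N3_sq]; ring)
    rwa [m12_comm] at this

lemma contAt (hC : Chart H R κ u σ)
    {v : ℝ × ℝ} (hv : v ∈ Dsc κ) : ContinuousAt σ v := (hC.fder hv).continuousAt

lemma contA (hC : Chart H R κ u σ)
    (hu : Sol H R u) {v : ℝ × ℝ} (hv : v ∈ Dsc κ) : ContinuousAt (mA H u σ) v := by
  have h1 := (hu.smooth.continuous.continuousAt (x := σ v)).comp (hC.contAt hv)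
  have h2 := ((cd_N3 hu.smooth).continuous.continuousAt (x := σ v)).comp (hC.contAt hv)
  have h3 := ((cd_X1 hu.smooth).continuous.continuousAt (x := σ v)).comp (hC.contAt hv)
  have h4 := (continuousAt_const (y := (1:ℝ))).add ((continuousAt_const (y := 2 * H)).mul h1)
  exact (continuousAt_const.sub ((h3.pow 2).div (continuousAt_const.add (h4.mul h2))
    (lt_of_lt_of_le one_pos (hC.d_pos hv)).ne')).div (h4.add h2) (hC.K_pos hv).ne'

lemma contD (hC : Chart H R κ u σ)
    (hu : Sol H R u) {v : ℝ × ℝ} (hv : v ∈ Dsc κ) : ContinuousAt (mD H u σ) v := by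
  have h1 := (hu.smooth.continuous.continuousAt (x := σ v)).comp (hC.contAt hv)
  have h2 := ((cd_N3 hu.smooth).continuous.continuousAt (x := σ v)).comp (hC.contAt hv)
  have h3 := ((cd_X2 hu.smooth).continuous.continuousAt (x := σ v)).comp (hC.contAt hv)
  have h4 := (continuousAt_const (y := (1:ℝ))).add ((continuousAt_const (y := 2 * H)).mul h1)
  exact (continuousAt_const.sub ((h3.pow 2).div (continuousAt_const.add (h4.mul h2))
    (lt_of_lt_of_le one_pos (hC.d_pos hv)).ne')).div (h4.add h2) (hC.K_pos hv).ne'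

lemma contB (hC : Chart H R κ u σ)
    (hu : Sol H R u) {v : ℝ × ℝ} (hv : v ∈ Dsc κ) : ContinuousAt (mB H u σ) v := by
  have h1 := (hu.smooth.continuous.continuousAt (x := σ v)).comp (hC.contAt hv)
  have h2 := ((cd_N3 hu.smooth).continuous.continuousAt (x := σ v)).comp (hC.contAt hv)
  have h3 := ((cd_X1 hu.smooth).continuous.continuousAt (x := σ v)).comp (hC.contAt hv)
  have h5 := ((cd_X2 hu.smooth).continuous.continuousAt (x := σ v)).comp (hC.contAt hv)
  have h4 := (continuousAt_const (y := (1:ℝ))).add ((continuousAt_const (y := 2 * H)).mul h1)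
  exact (((h3.mul h5).div (continuousAt_const.add (h4.mul h2))
    (lt_of_lt_of_le one_pos (hC.d_pos hv)).ne').neg).div (h4.add h2) (hC.K_pos hv).ne'

lemma det_pos (hC : Chart H R κ u σ) {v : ℝ × ℝ} (hv : v ∈ Dsc κ) :
    0 < (mat (mA H u σ v) (mB H u σ v) (mB H u σ v) (mD H u σ v)).det := by
  rw [hC.det hv]
  exact div_pos (N3_pos _) (mul_pos (hC.K_pos hv) (lt_of_lt_of_le one_pos (hC.d_pos hv)))

/-- Charts are local homeomorphisms, by the inverse function theorem. -/
lemma map_nhds (hC : Chart H R κ u σ) (hu : Sol H R u) {v : ℝ × ℝ} (hv : v ∈ Dsc κ) :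
    map σ (nhds v) = nhds (σ v) := by
  have hs : HasStrictFDerivAt σ (mat (mA H u σ v) (mB H u σ v) (mB H u σ v) (mD H u σ v)) v := by
    refine hasStrictFDerivAt_of_hasFDerivAt_of_continuousAt
      (f' := fun v => mat (mA H u σ v) (mB H u σ v) (mB H u σ v) (mD H u σ v)) ?_ ?_
    · filter_upwards [(isOpen_Dsc κ).mem_nhds hv] with y hy using hC.fder hy
    · have hA := hC.contA hu hv
      have hB := hC.contB hu hv
      have hD := hC.contD hu hv
      have l : ∀ {f g : ℝ × ℝ → ℝ}, ContinuousAt f v → ContinuousAt g v →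
          ContinuousAt (fun v => lin (f v) (g v)) v := by
        intro f g hf hg
        unfold lin
        exact (hf.smul continuousAt_const).add (hg.smul continuousAt_const)
      have hp : Continuous fun L : (ℝ × ℝ →L[ℝ] ℝ) × (ℝ × ℝ →L[ℝ] ℝ) => L.1.prod L.2 :=
        by
        exact (ContinuousLinearMap.prodₗᵢ (𝕜 := ℝ) (E := ℝ × ℝ) ℝ).continuous
      exact hp.continuousAt.comp ((l hA hB).prodMk (l hB hD))
  refine hs.map_nhds_eq_of_surj ?_
  have hdet := (hC.det_pos hv).ne'
  rw [LinearMap.range_eq_top]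
  exact (LinearMap.equivOfDetNeZero _ hdet).surjective

lemma image_open (hC : Chart H R κ u σ)
    (hu : Sol H R u) {B : Set (ℝ × ℝ)} (hB : IsOpen B) (hs : B ⊆ Dsc κ) :
    IsOpen (σ '' B) := by
  rw [isOpen_iff_mem_nhds]
  rintro _ ⟨v, hv, rfl⟩
  rw [← hC.map_nhds hu (hs hv)]
  exact image_mem_map (hB.mem_nhds hv)
end Chart

/-- The closed Euclidean disk of center `q` and radius `t`. -/
def cdisk (q : ℝ × ℝ) (t : ℝ) : Set (ℝ × ℝ) := {p | (p.1 - q.1) ^ 2 + (p.2 - q.2) ^ 2 ≤ t ^ 2}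

/-- The open Euclidean disk of center `q` and radius `t`. -/
def odisk (q : ℝ × ℝ) (t : ℝ) : Set (ℝ × ℝ) := {p | (p.1 - q.1) ^ 2 + (p.2 - q.2) ^ 2 < t ^ 2}

lemma isOpen_odisk (q : ℝ × ℝ) (t : ℝ) : IsOpen (odisk q t) :=
  isOpen_lt (by fun_prop) continuous_const

lemma isCompact_cdisk (q : ℝ × ℝ) {t : ℝ} (ht : 0 ≤ t) : IsCompact (cdisk q t) := by
  have : cdisk q t = (fun p : ℝ × ℝ => p - q) ⁻¹' CDsc t := rfl
  rw [this]
  exact (Homeomorph.subRight q).isClosedEmbedding.isCompact_preimage (isCompact_CDsc ht)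

/-- The image of a disk under a chart is an admissible domain for the maximum principle, whose
boundary is covered by the image of the circle. -/
lemma Chart.image_disk (hC : Chart H R κ u σ) (hR : 0 < R) (hu : Sol H R u) {q : ℝ × ℝ} {t : ℝ}
    (ht : 0 ≤ t) (hs : cdisk q t ⊆ Dsc κ) :
    IsOpen (σ '' odisk q t) ∧ IsCompact (closure (σ '' odisk q t)) ∧
      closure (σ '' odisk q t) ⊆ Dsc R ∧
      ∀ p ∈ frontier (σ '' odisk q t), ∃ v, (v.1 - q.1) ^ 2 + (v.2 - q.2) ^ 2 = t ^ 2 ∧ σ v = p := by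
  have hoc : odisk q t ⊆ cdisk q t := by
    intro p hp
    have hp' : (p.1 - q.1) ^ 2 + (p.2 - q.2) ^ 2 < t ^ 2 := hp
    exact hp'.le
  have hK : IsCompact (σ '' cdisk q t) :=
    (isCompact_cdisk q ht).image_of_continuousOn (hC.cont.mono hs)
  have hcl : closure (σ '' odisk q t) ⊆ σ '' cdisk q t :=
    closure_minimal (image_mono hoc) hK.isClosed
  have hop := hC.image_open hu (isOpen_odisk q t) (hoc.trans hs)
  refine ⟨hop, hK.of_isClosed_subset isClosed_closure hcl, ?_, ?_⟩
  · intro p hp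
    obtain ⟨v, hv, rfl⟩ := hcl hp
    exact CDsc_subset_Dsc (by positivity) (by linarith) (hC.mem v (hs hv))
  · intro p hp
    rw [frontier, hop.interior_eq] at hp
    obtain ⟨v, hv, rfl⟩ := hcl hp.1
    refine ⟨v, ?_, rfl⟩
    by_contra hne
    exact hp.2 ⟨v, lt_of_le_of_ne (show _ ≤ _ from hv) hne, rfl⟩
end

/-! ### Courant–Lebesgue selection -/

/-- Courant–Lebesgue selection of a circle: a function of integral at most `E` has small angular
integral on some circle of radius in `(t1, t2)`. -/
lemma courant {g : ℝ × ℝ → ENNReal} (hg : Measurable g) {E : ℝ}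
    (hE : ∫⁻ p, g p ≤ ENNReal.ofReal E) (q : ℝ × ℝ) {t1 t2 M : ℝ} (h1 : 0 < t1) (h12 : t1 < t2)
    (hM : 0 < M) (hEM : E < M * Real.log (t2 / t1)) :
    ∃ t ∈ Ioo t1 t2, ENNReal.ofReal (t ^ 2) *
      ∫⁻ θ in Ioo (-π) π, g (q + (t * cos θ, t * sin θ)) ≤ ENNReal.ofReal M := by
  by_contra hc
  push Not at hc
  have e1 : ∫⁻ p, g (q + p) = ∫⁻ p, g p := lintegral_add_left_eq_self g q
  have e2 := lintegral_comp_polarCoord_symm (fun p => g (q + p))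
  have hm : Measurable fun p : ℝ × ℝ => ENNReal.ofReal p.1 * g (q + (p.1 * cos p.2, p.1 * sin p.2)) :=
    (by fun_prop : Measurable fun p : ℝ × ℝ => ENNReal.ofReal p.1).mul
      (hg.comp (by fun_prop))
  have e3 : ∫⁻ t in Ioo t1 t2, ∫⁻ θ in Ioo (-π) π,
      ENNReal.ofReal t * g (q + (t * cos θ, t * sin θ)) ≤ ∫⁻ p, g p := by
    rw [← e1, ← e2]
    have : ((volume : Measure ℝ).restrict (Ioo t1 t2)).prod ((volume : Measure ℝ).restrict (Ioo (-π) π))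
        = (volume : Measure (ℝ × ℝ)).restrict (Ioo t1 t2 ×ˢ Ioo (-π) π) := by
      rw [Measure.prod_restrict]; rfl
    rw [← lintegral_prod (f := fun p : ℝ × ℝ =>
      ENNReal.ofReal p.1 * g (q + (p.1 * cos p.2, p.1 * sin p.2))) hm.aemeasurable, this]
    refine (lintegral_mono_set (t := polarCoord.target) ?_).trans_eq ?_
    · rw [polarCoord_target]
      exact prod_mono (fun t ht => h1.trans ht.1) subset_rfl
    · simp [polarCoord_symm_apply]
  have e4 : ∫⁻ t in Ioo t1 t2, ENNReal.ofReal (M / t) ≤ ∫⁻ t in Ioo t1 t2, ∫⁻ θ in Ioo (-π) π,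
      ENNReal.ofReal t * g (q + (t * cos θ, t * sin θ)) := by
    refine setLIntegral_mono' measurableSet_Ioo fun t ht => ?_
    have ht0 : 0 < t := h1.trans ht.1
    rw [lintegral_const_mul' _ _ ENNReal.ofReal_ne_top]
    have := (hc t ht).le
    have h3 := mul_le_mul_right this (ENNReal.ofReal t⁻¹)
    rw [← mul_assoc, ← ENNReal.ofReal_mul (by positivity), ← ENNReal.ofReal_mul (by positivity)] at h3
    have k1 : t⁻¹ * M = M / t := by field_simp
    have k2 : t⁻¹ * t ^ 2 = t := by field_simp
    rwa [k1, k2] at h3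
  have e5 : ∫⁻ t in Ioo t1 t2, ENNReal.ofReal (M / t) = ENNReal.ofReal (M * Real.log (t2 / t1)) := by
    have hci : ContinuousOn (fun t : ℝ => M / t) (Icc t1 t2) :=
      continuousOn_const.div continuousOn_id fun t ht => (h1.trans_le ht.1).ne'
    rw [← ofReal_integral_eq_lintegral_ofReal
      ((hci.integrableOn_Icc).mono_set Ioo_subset_Icc_self)
      ((ae_restrict_iff' measurableSet_Ioo).2 (ae_of_all _ fun t ht =>
        (div_pos hM (h1.trans ht.1)).le)), ← integral_Ioc_eq_integral_Ioo,
      ← intervalIntegral.integral_of_le h12.le]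
    congr 1
    have := integral_one_div_of_pos h1 (h1.trans h12)
    rw [← this, ← intervalIntegral.integral_const_mul]
    congr 1; ext t; ring
  have := (e5 ▸ e4).trans (e3.trans hE)
  have hl : 0 < Real.log (t2 / t1) := Real.log_pos ((one_lt_div h1).2 h12)
  rw [ENNReal.ofReal_le_ofReal_iff'] at this
  rcases this with h | h
  · linarith
  · have := mul_pos hM hl; linarith

/-- Oscillation of a function of an angle in terms of the `L²` norm of its derivative. -/
lemma circle_osc {h h' : ℝ → ℝ} (hd : ∀ θ, HasDerivAt h (h' θ) θ) (hc : Continuous h') {m : ℝ}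
    (hm : 0 < m) (hE : ∫⁻ θ in Ioo (-π) π, ENNReal.ofReal (h' θ ^ 2) ≤ ENNReal.ofReal (m ^ 2)) :
    ∀ x ∈ Icc (-π) π, ∀ y ∈ Icc (-π) π, |h x - h y| ≤ 4 * m := by
  have hpi : -π ≤ π := by linarith [pi_pos]
  have hc2 : Continuous fun θ => h' θ ^ 2 := hc.pow 2
  have hc3 : Continuous fun θ => (1 / (2 * m)) * h' θ ^ 2 := continuous_const.mul hc2
  have hIntegral : ∫ θ in (-π)..π, h' θ ^ 2 ≤ m ^ 2 := by
    rw [← ofReal_integral_eq_lintegral_ofReal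
      ((hc2.continuousOn.integrableOn_Icc).mono_set Ioo_subset_Icc_self)
      (ae_of_all _ fun t => sq_nonneg (h' t)), ← integral_Ioc_eq_integral_Ioo,
      ← intervalIntegral.integral_of_le hpi, ENNReal.ofReal_le_ofReal_iff (by positivity)] at hE
    exact hE
  have key : ∀ x y, -π ≤ x → x ≤ y → y ≤ π → |h x - h y| ≤ 4 * m := by
    intro x y hx hxy hy
    have e1 : ∫ θ in x..y, h' θ = h y - h x :=
      intervalIntegral.integral_eq_sub_of_hasDerivAt (fun θ _ => hd θ) (hc.intervalIntegrable _ _)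
    rw [abs_sub_comm, ← e1]
    calc |∫ θ in x..y, h' θ| ≤ ∫ θ in x..y, |h' θ| :=
          intervalIntegral.abs_integral_le_integral_abs hxy
      _ ≤ ∫ θ in (-π)..π, |h' θ| :=
          intervalIntegral.integral_mono_interval hx hxy hy (ae_of_all _ fun t => abs_nonneg (h' t))
            (hc.abs.intervalIntegrable _ _)
      _ ≤ ∫ θ in (-π)..π, (m / 2 + (1 / (2 * m)) * h' θ ^ 2) := by
          refine intervalIntegral.integral_mono_on hpi (hc.abs.intervalIntegrable _ _)
            ((continuous_const.add hc3).intervalIntegrable _ _) ?_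
          intro t _
          have : 0 ≤ (m - |h' t|) ^ 2 / (2 * m) := by positivity
          have e : (m - |h' t|) ^ 2 / (2 * m) = m / 2 + (1 / (2 * m)) * h' t ^ 2 - |h' t| := by
            rw [sub_sq, sq_abs]; field_simp; ring
          linarith
      _ = m * π + (1 / (2 * m)) * ∫ θ in (-π)..π, h' θ ^ 2 := by
          rw [intervalIntegral.integral_add (by simp)
            (hc3.intervalIntegrable _ _),
            intervalIntegral.integral_const_mul, intervalIntegral.integral_const]
          simp; ring
      _ ≤ m * π + (1 / (2 * m)) * m ^ 2 := by gcongr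
      _ = m * (π + 1 / 2) := by field_simp
      _ ≤ 4 * m := by nlinarith [pi_lt_d2]
  intro x hx y hy
  rcases le_total x y with h | h
  · exact key x y hx.1 h hy.2
  · rw [abs_sub_comm]; exact key y x hy.1 h hx.2

lemma exists_angle {q v : ℝ × ℝ} {t : ℝ} (ht : 0 < t)
    (h : (v.1 - q.1) ^ 2 + (v.2 - q.2) ^ 2 = t ^ 2) :
    ∃ θ ∈ Icc (-π) π, v = q + (t * cos θ, t * sin θ) := by
  set z : ℂ := ⟨v.1 - q.1, v.2 - q.2⟩ with hz
  have hn : ‖z‖ = t := by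
    rw [Complex.norm_def, Complex.normSq_mk, Real.sqrt_eq_iff_mul_self_eq (by nlinarith) ht.le]
    nlinarith
  refine ⟨z.arg, ⟨(Complex.neg_pi_lt_arg z).le, Complex.arg_le_pi z⟩, ?_⟩
  have h1 := Complex.norm_mul_cos_arg z
  have h2 := Complex.norm_mul_sin_arg z
  rw [hn] at h1 h2
  ext
  · change v.1 = q.1 + t * cos z.arg
    rw [h1]; simp [hz]
  · change v.2 = q.2 + t * sin z.arg
    rw [h2]; simp [hz]

/-! ### Energy in the charts -/

section
variable {H R κ : ℝ} {u : ℝ × ℝ → ℝ} {σ : ℝ × ℝ → ℝ × ℝ}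

/-- First partial derivative of `w ∘ σ` for a chart `σ`. -/
def ga (H : ℝ) (u : ℝ × ℝ → ℝ) (σ : ℝ × ℝ → ℝ × ℝ) (w : ℝ × ℝ → ℝ) (v : ℝ × ℝ) : ℝ :=
  pdx w (σ v) * mA H u σ v + pdy w (σ v) * mB H u σ v
/-- Second partial derivative of `w ∘ σ` for a chart `σ`. -/
def gb (H : ℝ) (u : ℝ × ℝ → ℝ) (σ : ℝ × ℝ → ℝ × ℝ) (w : ℝ × ℝ → ℝ) (v : ℝ × ℝ) : ℝ :=
  pdx w (σ v) * mB H u σ v + pdy w (σ v) * mD H u σ v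
/-- Squared gradient of `w ∘ σ` for a chart `σ`. -/
def gg (H : ℝ) (u : ℝ × ℝ → ℝ) (σ : ℝ × ℝ → ℝ × ℝ) (w : ℝ × ℝ → ℝ) (v : ℝ × ℝ) : ℝ :=
  ga H u σ w v ^ 2 + gb H u σ w v ^ 2
/-- Sum of the squared gradients, in a chart, of the normal and of `log W`. -/
def gsum (H : ℝ) (u : ℝ × ℝ → ℝ) (σ : ℝ × ℝ → ℝ × ℝ) (v : ℝ × ℝ) : ℝ :=
  gg H u σ (X1 u) v + gg H u σ (X2 u) v + gg H u σ (psi u) v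

lemma gg_nonneg (w : ℝ × ℝ → ℝ) (v : ℝ × ℝ) : 0 ≤ gg H u σ w v := by unfold gg; positivity

namespace Chart

lemma hp_w (hC : Chart H R κ u σ)
    {w : ℝ × ℝ → ℝ} (hw : ContDiff ℝ 1 w) {v : ℝ × ℝ} (hv : v ∈ Dsc κ) :
    HP (fun q => w (σ q)) v (ga H u σ w v) (gb H u σ w v) :=
  HP.comp_map (hw.hp _) (hC.e1 hv) (hC.e2 hv)

lemma cont_ga (hC : Chart H R κ u σ)
    (hu : Sol H R u) {w : ℝ × ℝ → ℝ} (hw : ContDiff ℝ 1 w) {v : ℝ × ℝ} (hv : v ∈ Dsc κ) :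
    ContinuousAt (ga H u σ w) v :=
  (((cont_pdx hw).continuousAt.comp (hC.contAt hv)).mul (hC.contA hu hv)).add
    (((cont_pdy hw).continuousAt.comp (hC.contAt hv)).mul (hC.contB hu hv))

lemma cont_gb (hC : Chart H R κ u σ)
    (hu : Sol H R u) {w : ℝ × ℝ → ℝ} (hw : ContDiff ℝ 1 w) {v : ℝ × ℝ} (hv : v ∈ Dsc κ) :
    ContinuousAt (gb H u σ w) v :=
  (((cont_pdx hw).continuousAt.comp (hC.contAt hv)).mul (hC.contB hu hv)).add
    (((cont_pdy hw).continuousAt.comp (hC.contAt hv)).mul (hC.contD hu hv))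

lemma gg_le (hC : Chart H R κ u σ) {w : ℝ × ℝ → ℝ} {v : ℝ × ℝ} (hv : v ∈ Dsc κ) :
    gg H u σ w v ≤ 2 * ((mat (mA H u σ v) (mB H u σ v) (mB H u σ v) (mD H u σ v)).det *
      aq u (σ v) (pdx w (σ v)) (pdy w (σ v)) (pdx w (σ v)) (pdy w (σ v))) := by
  rw [hC.det hv]
  exact m_energy (hC.c_mem hv).1 (hC.c_mem hv).2 (N3_pos _) (N3_le_one _) (W_N3 _) (N3_sq _)

lemma gsum_le (hC : Chart H R κ u σ) (hR : 0 < R) (hu : Sol H R u) {v : ℝ × ℝ} (hv : v ∈ Dsc κ) :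
    gsum H u σ v ≤ 4 * ((mat (mA H u σ v) (mB H u σ v) (mB H u σ v) (mD H u σ v)).det *
      dens u (σ v)) := by
  have h1 := hC.gg_le (w := X1 u) hv
  have h2 := hC.gg_le (w := X2 u) hv
  have h3 := hC.gg_le (w := psi u) hv
  have hdet := hC.det_pos hv
  have hm : σ v ∈ Dsc R := CDsc_subset_Dsc (by positivity) (by linarith) (hC.mem v hv)
  have hX := aq_X_sum hu.smooth (σ v)
  have ht : 0 ≤ Wgraph u (σ v) * trM2 u (σ v) :=
    mul_nonneg (Wg_pos _).le (by nlinarith [trM2_ge hu hm, sq_nonneg H])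
  unfold gsum dens
  generalize (mat (mA H u σ v) (mB H u σ v) (mB H u σ v) (mD H u σ v)).det = D at *
  have k1 := mul_le_mul_of_nonneg_left hX hdet.le
  have k2 := mul_nonneg hdet.le ht
  linarith

lemma measurable_gsum (hC : Chart H R κ u σ) (hu : Sol H R u) :
    Measurable ((Dsc κ).indicator fun v => ENNReal.ofReal (gsum H u σ v)) := by
  have hc : ContinuousOn (fun v => ENNReal.ofReal (gsum H u σ v)) (Dsc κ) := by
    intro v hv
    have h1 := cd_X1 hu.smooth
    have h2 := cd_X2 hu.smooth
    have h3 := cd_psi hu.smooth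
    have h : ContinuousAt (gsum H u σ) v :=
      ((((hC.cont_ga hu h1 hv).pow 2).add ((hC.cont_gb hu h1 hv).pow 2)).add
        (((hC.cont_ga hu h2 hv).pow 2).add ((hC.cont_gb hu h2 hv).pow 2))).add
        (((hC.cont_ga hu h3 hv).pow 2).add ((hC.cont_gb hu h3 hv).pow 2))
    exact (ENNReal.continuous_ofReal.continuousAt.comp h).continuousWithinAt
  classical
  rw [← Set.piecewise_eq_indicator]
  exact hc.measurable_piecewise continuousOn_const (isOpen_Dsc κ).measurableSet
end Chart

/-- The Dirichlet energy of the normal and of `log W` in a chart is bounded in terms of `H` and `R` alone,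
by `energy_bound` and the change of variables formula. -/
lemma chart_energy (hH : 0 < H) (hR : 0 < R) : ∃ E : ℝ, 0 ≤ E ∧ ∀ κ u σ, Sol H R u → Chart H R κ u σ →
    ∫⁻ v, (Dsc κ).indicator (fun v => ENNReal.ofReal (gsum H u σ v)) v ≤ ENNReal.ofReal E := by
  obtain ⟨E, hE0, hE⟩ := energy_bound hH hR
  refine ⟨4 * E, by positivity, fun κ u σ hu hC => ?_⟩
  rw [lintegral_indicator (isOpen_Dsc κ).measurableSet]
  have h1 := lintegral_image_eq_lintegral_abs_det_fderiv_mul volume (isOpen_Dsc κ).measurableSet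
    (fun v hv => (hC.fder hv).hasFDerivWithinAt) hC.inj (fun p => ENNReal.ofReal (dens u p))
  have h2 := hE u hu (σ '' Dsc κ) (by rintro _ ⟨v, hv, rfl⟩; exact hC.mem v hv)
    (by rintro _ ⟨v, hv, rfl⟩; exact hC.hgt v hv)
  rw [h1] at h2
  calc _ ≤ ∫⁻ v in Dsc κ, ENNReal.ofReal 4 * (ENNReal.ofReal
        |(mat (mA H u σ v) (mB H u σ v) (mB H u σ v) (mD H u σ v)).det| *
        ENNReal.ofReal (dens u (σ v))) := by
        refine setLIntegral_mono' (isOpen_Dsc κ).measurableSet fun v hv => ?_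
        rw [← ENNReal.ofReal_mul (abs_nonneg _), ← ENNReal.ofReal_mul (by norm_num),
          abs_of_pos (hC.det_pos hv)]
        exact ENNReal.ofReal_le_ofReal (hC.gsum_le hR hu hv)
    _ ≤ _ := by
        rw [lintegral_const_mul' _ _ ENNReal.ofReal_ne_top, ENNReal.ofReal_mul (by norm_num)]
        gcongr

/-- On a well-chosen circle, the normal and `log W` have small oscillation. -/
lemma Chart.circle (hC : Chart H R κ u σ) (hu : Sol H R u) {E : ℝ}
    (hE : ∫⁻ v, (Dsc κ).indicator (fun v => ENNReal.ofReal (gsum H u σ v)) v ≤ ENNReal.ofReal E)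
    {q : ℝ × ℝ} {t1 t2 m : ℝ} (h1 : 0 < t1) (h12 : t1 < t2) (hm : 0 < m)
    (hEm : E < m ^ 2 * Real.log (t2 / t1)) (hs : cdisk q t2 ⊆ Dsc κ) :
    ∃ t ∈ Ioo t1 t2, ∀ v v' : ℝ × ℝ, (v.1 - q.1) ^ 2 + (v.2 - q.2) ^ 2 = t ^ 2 →
      (v'.1 - q.1) ^ 2 + (v'.2 - q.2) ^ 2 = t ^ 2 →
      |X1 u (σ v) - X1 u (σ v')| ≤ 4 * m ∧ |X2 u (σ v) - X2 u (σ v')| ≤ 4 * m ∧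
      |psi u (σ v) - psi u (σ v')| ≤ 4 * m := by
  obtain ⟨t, ht, hb⟩ := courant (hC.measurable_gsum hu) hE q h1 h12 (by positivity : 0 < m ^ 2) hEm
  have ht0 : 0 < t := h1.trans ht.1
  refine ⟨t, ht, ?_⟩
  have hmem : ∀ θ : ℝ, q + (t * cos θ, t * sin θ) ∈ Dsc κ := by
    intro θ
    apply hs
    change (q.1 + t * cos θ - q.1) ^ 2 + (q.2 + t * sin θ - q.2) ^ 2 ≤ t2 ^ 2
    have := sin_sq_add_cos_sq θ
    have e : (q.1 + t * cos θ - q.1) ^ 2 + (q.2 + t * sin θ - q.2) ^ 2 = t ^ 2 := by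
      linear_combination t ^ 2 * this
    rw [e]
    exact pow_le_pow_left₀ ht0.le ht.2.le 2
  have hγ : ∀ θ : ℝ, HasDerivAt (fun θ : ℝ => q + (t * cos θ, t * sin θ))
      (-(t * sin θ), t * cos θ) θ := by
    intro θ
    have := ((hasDerivAt_cos θ).const_mul t).prodMk ((hasDerivAt_sin θ).const_mul t)
    exact (this.const_add q).congr_deriv (by simp)
  have main : ∀ w : ℝ × ℝ → ℝ, ContDiff ℝ 1 w → (∀ v, gg H u σ w v ≤ gsum H u σ v) →
      ∀ v v' : ℝ × ℝ, (v.1 - q.1) ^ 2 + (v.2 - q.2) ^ 2 = t ^ 2 →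
      (v'.1 - q.1) ^ 2 + (v'.2 - q.2) ^ 2 = t ^ 2 → |w (σ v) - w (σ v')| ≤ 4 * m := by
    intro w hw hle v v' hv hv'
    obtain ⟨θ, hθ, rfl⟩ := exists_angle ht0 hv
    obtain ⟨θ', hθ', rfl⟩ := exists_angle ht0 hv'
    set γ : ℝ → ℝ × ℝ := fun θ => q + (t * cos θ, t * sin θ) with hγd
    have hγc : Continuous γ := by rw [hγd]; fun_prop
    refine circle_osc (h := fun θ => w (σ (γ θ)))
      (h' := fun θ => ga H u σ w (γ θ) * (-(t * sin θ)) + gb H u σ w (γ θ) * (t * cos θ))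
      ?_ ?_ hm ?_ θ hθ θ' hθ'
    · intro x
      have := hp_lin_comp (f := fun q => w (σ q)) (y := γ) (hC.hp_w hw (hmem x)) (hγ x).hasDerivWithinAt (s := univ)
      exact this.hasDerivAt univ_mem
    · rw [continuous_iff_continuousAt]
      intro x
      have ha : ContinuousAt (fun θ => ga H u σ w (γ θ)) x :=
        ContinuousAt.comp (f := γ) (hC.cont_ga hu hw (hmem x)) hγc.continuousAt
      have hb : ContinuousAt (fun θ => gb H u σ w (γ θ)) x :=
        ContinuousAt.comp (f := γ) (hC.cont_gb hu hw (hmem x)) hγc.continuousAt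
      exact (ha.mul (by fun_prop)).add (hb.mul (by fun_prop))
    · refine le_trans ?_ hb
      rw [← lintegral_const_mul' _ _ ENNReal.ofReal_ne_top]
      refine lintegral_mono fun θ => ?_
      rw [indicator_of_mem (hmem θ), ← ENNReal.ofReal_mul (by positivity)]
      refine ENNReal.ofReal_le_ofReal ?_
      have k1 := cauchy2 (ga H u σ w (γ θ)) (gb H u σ w (γ θ)) (-(t * sin θ)) (t * cos θ)
      have k2 : (-(t * sin θ)) ^ 2 + (t * cos θ) ^ 2 = t ^ 2 := by
        linear_combination t ^ 2 * sin_sq_add_cos_sq θ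
      have k3 := mul_le_mul_of_nonneg_left (hle (γ θ)) (sq_nonneg t)
      rw [k2] at k1
      unfold gg at k3
      change _ ≤ t ^ 2 * gsum H u σ (γ θ)
      linarith
  intro v v' hv hv'
  have g1 := gg_nonneg (H := H) (u := u) (σ := σ) (X1 u)
  have g2 := gg_nonneg (H := H) (u := u) (σ := σ) (X2 u)
  have g3 := gg_nonneg (H := H) (u := u) (σ := σ) (psi u)
  refine ⟨main _ (cd_X1 hu.smooth) ?_ v v' hv hv', main _ (cd_X2 hu.smooth) ?_ v v' hv hv',
    main _ (cd_psi hu.smooth) ?_ v v' hv hv'⟩ <;>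
  · intro p
    have := g1 p; have := g2 p; have := g3 p
    unfold gsum; linarith
end

/-! ### Modulus of continuity of the normal -/

lemma hp_lip {f : ℝ × ℝ → ℝ} {s : Set (ℝ × ℝ)} (hs : Convex ℝ s) {C : ℝ}
    (h : ∀ p ∈ s, ∃ a b, HP f p a b ∧ |a| ≤ C ∧ |b| ≤ C) {p q : ℝ × ℝ} (hp : p ∈ s) (hq : q ∈ s) :
    |f p - f q| ≤ 2 * C * ‖p - q‖ := by
  choose! a b h1 h2 h3 using h
  have := Convex.norm_image_sub_le_of_norm_hasFDerivWithin_le (f := f)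
    (f' := fun x => lin (a x) (b x)) (C := 2 * C)
    (fun x hx => (h1 x hx : HasFDerivAt _ _ _).hasFDerivWithinAt) (fun x hx => ?_) hs hq hp
  · simpa using this
  · have hC : 0 ≤ C := (abs_nonneg _).trans (h2 x hx)
    refine ContinuousLinearMap.opNorm_le_bound _ (by positivity) fun v => ?_
    rw [lin_apply, Real.norm_eq_abs]
    calc |a x * v.1 + b x * v.2| ≤ |a x| * |v.1| + |b x| * |v.2| := by
          rw [← abs_mul, ← abs_mul]; exact abs_add_le _ _
      _ ≤ C * ‖v‖ + C * ‖v‖ := by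
          gcongr
          · exact h2 x hx
          · exact norm_fst_le v
          · exact h3 x hx
          · exact norm_snd_le v
      _ = _ := by ring

lemma norm_le_of_sq {p : ℝ × ℝ} {t : ℝ} (ht : 0 ≤ t) (h : p.1 ^ 2 + p.2 ^ 2 ≤ t ^ 2) : ‖p‖ ≤ t := by
  rw [Prod.norm_def, Real.norm_eq_abs, Real.norm_eq_abs]
  exact max_le (abs_le_of_sq_le_sq (by nlinarith [sq_nonneg p.2]) ht)
    (abs_le_of_sq_le_sq (by nlinarith [sq_nonneg p.1]) ht)

lemma cdisk_subset {q : ℝ × ℝ} {a t b : ℝ} (ha : 0 ≤ a) (ht : 0 ≤ t) (hq : q ∈ Dsc a) (hb : a + t ≤ b) :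
    cdisk q t ⊆ Dsc b := by
  intro p hp
  have hp' : (p.1 - q.1) ^ 2 + (p.2 - q.2) ^ 2 ≤ t ^ 2 := hp
  have hq' : q.1 ^ 2 + q.2 ^ 2 < a ^ 2 := hq
  have h := cauchy2 q.1 q.2 (p.1 - q.1) (p.2 - q.2)
  have h2 : (q.1 * (p.1 - q.1) + q.2 * (p.2 - q.2)) ^ 2 ≤ (a * t) ^ 2 := by
    refine h.trans ?_
    rw [mul_pow]
    exact mul_le_mul hq'.le hp' (by positivity) (by positivity)
  have h3 := (abs_le.1 (abs_le_of_sq_le_sq h2 (by positivity))).2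
  change p.1 ^ 2 + p.2 ^ 2 < b ^ 2
  have h4 : (a + t) ^ 2 ≤ b ^ 2 := pow_le_pow_left₀ (by positivity) hb 2
  nlinarith

section
variable {H R κ : ℝ} {u : ℝ × ℝ → ℝ} {σ : ℝ × ℝ → ℝ × ℝ}

lemma Chart.lip1 (hC : Chart H R κ u σ) {p q : ℝ × ℝ} (hp : p ∈ Dsc κ) (hq : q ∈ Dsc κ) :
    |(σ p).1 - (σ q).1| ≤ 8 * ‖p - q‖ := by
  have := hp_lip (C := 4) (convex_Dsc κ) (fun v hv => ⟨_, _, hC.e1 hv, hC.bdA hv, hC.bdB hv⟩) hp hq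
  linarith

lemma Chart.lip2 (hC : Chart H R κ u σ) {p q : ℝ × ℝ} (hp : p ∈ Dsc κ) (hq : q ∈ Dsc κ) :
    |(σ p).2 - (σ q).2| ≤ 8 * ‖p - q‖ := by
  have := hp_lip (C := 4) (convex_Dsc κ) (fun v hv => ⟨_, _, hC.e2 hv, hC.bdB hv, hC.bdD hv⟩) hp hq
  linarith

/-- Control of the normal inside a disk from its oscillation on the boundary circle, by the
maximum principle. -/
lemma Chart.osc_disk (hC : Chart H R κ u σ) (hH : 0 < H) (hR : 0 < R) (hu : Sol H R u)
    {q1 : ℝ × ℝ} {t m : ℝ} (ht : 0 < t) (hs : cdisk q1 t ⊆ Dsc κ)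
    (hc : ∀ v v' : ℝ × ℝ, (v.1 - q1.1) ^ 2 + (v.2 - q1.2) ^ 2 = t ^ 2 →
      (v'.1 - q1.1) ^ 2 + (v'.2 - q1.2) ^ 2 = t ^ 2 →
      |X1 u (σ v) - X1 u (σ v')| ≤ m ∧ |X2 u (σ v) - X2 u (σ v')| ≤ m)
    {q v0 : ℝ × ℝ} (hq : q ∈ odisk q1 t) (hv0 : (v0.1 - q1.1) ^ 2 + (v0.2 - q1.2) ^ 2 = t ^ 2) :
    |X1 u (σ q) - X1 u (σ v0)| ≤ m + 16 * H * t ∧ |X2 u (σ q) - X2 u (σ v0)| ≤ m + 16 * H * t := by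
  obtain ⟨i1, i2, i3, i4⟩ := hC.image_disk hR hu ht.le hs
  have hq' : (q.1 - q1.1) ^ 2 + (q.2 - q1.2) ^ 2 < t ^ 2 := hq
  have lip : ∀ v, v ∈ cdisk q1 t → |(σ v).1 - (σ q1).1| ≤ 8 * t ∧ |(σ v).2 - (σ q1).2| ≤ 8 * t := by
    intro v hv
    have h1 : q1 ∈ cdisk q1 t := by
      change (q1.1 - q1.1) ^ 2 + (q1.2 - q1.2) ^ 2 ≤ t ^ 2
      rw [sub_self, sub_self]; have := pow_pos ht 2; linarith
    have hn : ‖v - q1‖ ≤ t := norm_le_of_sq ht.le hv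
    exact ⟨(hC.lip1 (hs hv) (hs h1)).trans (by linarith),
      (hC.lip2 (hs hv) (hs h1)).trans (by linarith)⟩
  obtain ⟨l1, l2⟩ := lip q hq'.le
  rw [abs_le] at l1 l2
  have main : ∀ e1 e2 : ℝ, e1 ^ 2 + e2 ^ 2 = 1 → (∀ v, (v.1 - q1.1) ^ 2 + (v.2 - q1.2) ^ 2 = t ^ 2 →
      e1 * (X1 u (σ v) - X1 u (σ v0)) + e2 * (X2 u (σ v) - X2 u (σ v0)) ≤ m ∧
      -(e1 * ((σ v).1 - (σ q1).1) + e2 * ((σ v).2 - (σ q1).2)) ≤ 8 * t) →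
      e1 * ((σ q).1 - (σ q1).1) + e2 * ((σ q).2 - (σ q1).2) ≤ 8 * t →
      e1 * (X1 u (σ q) - X1 u (σ v0)) + e2 * (X2 u (σ q) - X2 u (σ v0)) ≤ m + 16 * H * t := by
    intro e1 e2 he hv hq2
    have := max_ve hu e1 e2 he i1 i2 i3 (k := e1 * (X1 u (σ v0) - H * (σ q1).1)
      + e2 * (X2 u (σ v0) - H * (σ q1).2) + m + 8 * H * t) ?_ _ ⟨q, hq, rfl⟩
    · unfold ve at this
      have := mul_le_mul_of_nonneg_left hq2 hH.le
      linarith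
    · intro p hp
      obtain ⟨v, hvc, rfl⟩ := i4 p hp
      obtain ⟨a1, a2⟩ := hv v hvc
      have := mul_le_mul_of_nonneg_left a2 hH.le
      unfold ve
      linarith
  have hcv : ∀ v : ℝ × ℝ, (v.1 - q1.1) ^ 2 + (v.2 - q1.2) ^ 2 = t ^ 2 →
      (-m ≤ X1 u (σ v) - X1 u (σ v0) ∧ X1 u (σ v) - X1 u (σ v0) ≤ m) ∧
      (-m ≤ X2 u (σ v) - X2 u (σ v0) ∧ X2 u (σ v) - X2 u (σ v0) ≤ m) ∧
      (-(8 * t) ≤ (σ v).1 - (σ q1).1 ∧ (σ v).1 - (σ q1).1 ≤ 8 * t) ∧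
      (-(8 * t) ≤ (σ v).2 - (σ q1).2 ∧ (σ v).2 - (σ q1).2 ≤ 8 * t) := by
    intro v hv
    obtain ⟨a, b⟩ := hc v v0 hv hv0
    obtain ⟨c, d⟩ := lip v hv.le
    exact ⟨abs_le.1 a, abs_le.1 b, abs_le.1 c, abs_le.1 d⟩
  have m1 := main 1 0 (by norm_num) (fun v hv => by
    obtain ⟨a, b, c, d⟩ := hcv v hv; constructor <;> linarith [a.1, a.2, c.1, c.2]) (by linarith)
  have m2 := main (-1) 0 (by norm_num) (fun v hv => by
    obtain ⟨a, b, c, d⟩ := hcv v hv; constructor <;> linarith [a.1, a.2, c.1, c.2]) (by linarith)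
  have m3 := main 0 1 (by norm_num) (fun v hv => by
    obtain ⟨a, b, c, d⟩ := hcv v hv; constructor <;> linarith [b.1, b.2, d.1, d.2]) (by linarith)
  have m4 := main 0 (-1) (by norm_num) (fun v hv => by
    obtain ⟨a, b, c, d⟩ := hcv v hv; constructor <;> linarith [b.1, b.2, d.1, d.2]) (by linarith)
  constructor <;> rw [abs_le] <;> constructor <;> linarith

/-- Equicontinuity of the normal in the charts. -/
lemma modulus (hH : 0 < H) (hR : 0 < R) (hκ : 0 < κ) {ε : ℝ} (hε : 0 < ε) :
    ∃ δ, 0 < δ ∧ ∀ u σ, Sol H R u → Chart H R κ u σ → ∀ q1 ∈ Dsc (3 * κ / 4), ∀ q ∈ odisk q1 δ,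
      |X1 u (σ q) - X1 u (σ q1)| ≤ ε ∧ |X2 u (σ q) - X2 u (σ q1)| ≤ ε := by
  obtain ⟨E, hE0, hE⟩ := chart_energy hH hR
  set t2 := min (κ / 8) (ε / (64 * H)) with ht2
  have ht2p : 0 < t2 := lt_min (by positivity) (by positivity)
  have ht2k : t2 ≤ κ / 8 := min_le_left _ _
  have ht2e : t2 ≤ ε / (64 * H) := min_le_right _ _
  set m := ε / 16 with hm
  have hmp : 0 < m := by positivity
  set t1 := t2 * Real.exp (-((E + 1) / m ^ 2)) with ht1
  have ht1p : 0 < t1 := by positivity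
  have h12 : t1 < t2 := by
    rw [ht1]; refine mul_lt_of_lt_one_right ht2p ?_
    rw [Real.exp_lt_one_iff]
    have : 0 < (E + 1) / m ^ 2 := by positivity
    linarith
  have hlog : E < m ^ 2 * Real.log (t2 / t1) := by
    have : t2 / t1 = Real.exp ((E + 1) / m ^ 2) := by
      rw [ht1, Real.exp_neg]; field_simp
    rw [this, Real.log_exp]
    have : m ^ 2 * ((E + 1) / m ^ 2) = E + 1 := by field_simp
    linarith
  refine ⟨t1, ht1p, fun u σ hu hC q1 hq1 q hq => ?_⟩
  obtain ⟨t, ht, hc⟩ := hC.circle hu (hE κ u σ hu hC) ht1p h12 hmp hlog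
    (cdisk_subset (by positivity) ht2p.le hq1 (by linarith))
  have ht0 : 0 < t := ht1p.trans ht.1
  have hs : cdisk q1 t ⊆ Dsc κ :=
    cdisk_subset (by positivity) ht0.le hq1 (by linarith [ht.2])
  have hsq : t1 ^ 2 < t ^ 2 := pow_lt_pow_left₀ ht.1 ht1p.le two_ne_zero
  have hq' : q ∈ odisk q1 t := lt_trans (show (q.1 - q1.1) ^ 2 + (q.2 - q1.2) ^ 2 < t1 ^ 2 from hq) hsq
  have hq1' : q1 ∈ odisk q1 t := by
    change (q1.1 - q1.1) ^ 2 + (q1.2 - q1.2) ^ 2 < t ^ 2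
    rw [sub_self, sub_self]; have := pow_pos ht0 2; linarith
  have hv0 : ((q1 + (t, 0)).1 - q1.1) ^ 2 + ((q1 + (t, 0)).2 - q1.2) ^ 2 = t ^ 2 := by simp
  have hcc := fun v v' h h' => (⟨(hc v v' h h').1, (hc v v' h h').2.1⟩ : _ ∧ _)
  obtain ⟨a1, a2⟩ := hC.osc_disk hH hR hu ht0 hs hcc hq' hv0
  obtain ⟨b1, b2⟩ := hC.osc_disk hH hR hu ht0 hs hcc hq1' hv0
  have hHt : 64 * H * t ≤ ε := by
    have := ht.2.le.trans ht2e
    rw [le_div_iff₀ (by positivity)] at this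
    linarith
  rw [abs_le] at a1 a2 b1 b2
  constructor <;> rw [abs_le] <;> constructor <;> linarith [a1.1, a1.2, a2.1, a2.2, b1.1, b1.2, b2.1, b2.2]
end

/-! ### Verticality -/

section
variable {H R κ : ℝ}

lemma N3_exp {u : ℝ × ℝ → ℝ} (p : ℝ × ℝ) : N3 u p = Real.exp (-psi u p) := by
  unfold N3 psi
  rw [Real.exp_neg, Real.exp_log (Wg_pos p)]

lemma exists_dir (q : ℝ × ℝ) : ∃ ρ e1 e2 : ℝ, 0 ≤ ρ ∧ e1 ^ 2 + e2 ^ 2 = 1 ∧ q.1 = ρ * e1 ∧ q.2 = ρ * e2 := by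
  have h0 : 0 ≤ q.1 ^ 2 + q.2 ^ 2 := by positivity
  have hsq := Real.sq_sqrt h0
  have hr := Real.sqrt_nonneg (q.1 ^ 2 + q.2 ^ 2)
  generalize Real.sqrt (q.1 ^ 2 + q.2 ^ 2) = ρ at hsq hr
  rcases hr.eq_or_lt with h | h
  · rw [← h] at hsq
    have h1 : q.1 = 0 := by nlinarith [sq_nonneg q.1, sq_nonneg q.2]
    have h2 : q.2 = 0 := by nlinarith [sq_nonneg q.1, sq_nonneg q.2]
    exact ⟨0, 1, 0, le_rfl, by norm_num, by simp [h1], by simp [h2]⟩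
  · refine ⟨ρ, q.1 / ρ, q.2 / ρ, hr, ?_, by field_simp, by field_simp⟩
    field_simp
    linarith

lemma sq_near {x y ε : ℝ} (hx : x ^ 2 ≤ 1) (hy : y ^ 2 ≤ 1) (hxy : |x - y| ≤ ε / 8) :
    x ^ 2 ≤ y ^ 2 + ε / 4 := by
  have hx' := abs_le_one_iff_mul_self_le_one.2 (by nlinarith : x * x ≤ 1)
  have hy' := abs_le_one_iff_mul_self_le_one.2 (by nlinarith : y * y ≤ 1)
  have h2 : |x + y| ≤ 2 := (abs_add_le _ _).trans (by linarith)
  have : (x - y) * (x + y) ≤ ε / 8 * 2 := by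
    refine (le_abs_self _).trans ?_
    rw [abs_mul]
    exact mul_le_mul hxy h2 (abs_nonneg _) ((abs_nonneg _).trans hxy)
  nlinarith

/-- If the surface is nearly vertical above the origin, it is nearly vertical at any given
point `q0` of the half-size chart: a Harnack-type property obtained from the minimum principle for `N3` and from the
bound on the energy of `log W`. -/
lemma vertical (hH : 0 < H) (hR : 0 < R) (hκ : 0 < κ) {q0 : ℝ × ℝ} (hq0 : q0 ∈ Dsc (κ / 2)) {ε : ℝ}
    (hε : 0 < ε) :
    ∃ η, 0 < η ∧ ∀ u σ, Sol H R u → Chart H R κ u σ → N3 u 0 ≤ η →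
      1 - ε ≤ X1 u (σ q0) ^ 2 + X2 u (σ q0) ^ 2 := by
  obtain ⟨E, hE0, hE⟩ := chart_energy hH hR
  obtain ⟨δ0, hδ0, hmod⟩ := modulus hH hR hκ (show 0 < ε / 8 by positivity)
  obtain ⟨ρ, e1, e2, hρ, he, hq1, hq2⟩ := exists_dir q0
  have hρκ : ρ < κ / 2 := by
    have h : q0.1 ^ 2 + q0.2 ^ 2 < (κ / 2) ^ 2 := hq0
    rw [hq1, hq2] at h
    have : ρ ^ 2 < (κ / 2) ^ 2 := by linear_combination h - ρ ^ 2 * he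
    exact lt_of_pow_lt_pow_left₀ 2 (by positivity) this
  set δ := min δ0 (κ / 8) with hδ
  have hδp : 0 < δ := lt_min hδ0 (by positivity)
  have hδ1 : δ ≤ δ0 := min_le_left _ _
  have hδ2 : δ ≤ κ / 8 := min_le_right _ _
  have h1 : 0 < ρ + δ / 2 := by positivity
  have h12 : ρ + δ / 2 < ρ + δ := by linarith
  have hl : 0 < Real.log ((ρ + δ) / (ρ + δ / 2)) := Real.log_pos (by rw [lt_div_iff₀ h1]; linarith)
  obtain ⟨m, hm, hEm⟩ : ∃ m, 0 < m ∧ E < m ^ 2 * Real.log ((ρ + δ) / (ρ + δ / 2)) := by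
    generalize Real.log ((ρ + δ) / (ρ + δ / 2)) = L at hl
    refine ⟨Real.sqrt ((E + 1) / L), by positivity, ?_⟩
    rw [Real.sq_sqrt (by positivity)]
    have : (E + 1) / L * L = E + 1 := by field_simp
    linarith
  refine ⟨Real.sqrt (ε / 2) * Real.exp (-(4 * m)) / 2, by positivity, fun u σ hu hC hη => ?_⟩
  have h0 : (0 : ℝ × ℝ) ∈ Dsc (κ / 4) := by
    change (0 : ℝ) ^ 2 + 0 ^ 2 < (κ / 4) ^ 2
    have := pow_pos hκ 2
    nlinarith
  obtain ⟨t, ht, hc⟩ := hC.circle hu (hE κ u σ hu hC) h1 h12 hm hEm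
    (cdisk_subset (by positivity) (by positivity) h0 (by linarith))
  have ht0 : 0 < t := h1.trans ht.1
  obtain ⟨i1, i2, i3, i4⟩ := hC.image_disk hR hu (q := 0) ht0.le
    (cdisk_subset (by positivity) ht0.le h0 (by linarith [ht.2]))
  obtain ⟨v, hv, hNv⟩ : ∃ v : ℝ × ℝ, (v.1 - (0 : ℝ × ℝ).1) ^ 2 + (v.2 - (0 : ℝ × ℝ).2) ^ 2 = t ^ 2 ∧
      N3 u (σ v) < 2 * N3 u 0 := by
    by_contra hcon
    push Not at hcon
    have := min_N3 hu i1 i2 i3 (k := 2 * N3 u 0) (fun p hp => by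
      obtain ⟨v, hv, rfl⟩ := i4 p hp; exact hcon v hv) 0 ⟨0, ?_, hC.zero⟩
    · linarith [N3_pos (u := u) 0]
    · change (0 - 0 : ℝ) ^ 2 + (0 - 0) ^ 2 < t ^ 2
      have := pow_pos ht0 2
      linarith
  set v' : ℝ × ℝ := (t * e1, t * e2) with hv'
  have hv'c : (v'.1 - (0 : ℝ × ℝ).1) ^ 2 + (v'.2 - (0 : ℝ × ℝ).2) ^ 2 = t ^ 2 := by
    change (t * e1 - 0) ^ 2 + (t * e2 - 0) ^ 2 = t ^ 2
    linear_combination t ^ 2 * he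
  have hpsi := (abs_le.1 (hc v v' hv hv'c).2.2).2
  have hN : N3 u (σ v') ≤ Real.sqrt (ε / 2) := by
    calc N3 u (σ v') ≤ N3 u (σ v) * Real.exp (4 * m) := by
          rw [N3_exp, N3_exp, ← Real.exp_add]
          exact Real.exp_le_exp.2 (by linarith)
      _ ≤ (2 * (Real.sqrt (ε / 2) * Real.exp (-(4 * m)) / 2)) * Real.exp (4 * m) := by
          gcongr
          linarith
      _ = Real.sqrt (ε / 2) * (Real.exp (-(4 * m)) * Real.exp (4 * m)) := by ring
      _ = _ := by rw [← Real.exp_add]; simp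
  have hN2 : N3 u (σ v') ^ 2 ≤ ε / 2 := by
    have := pow_le_pow_left₀ (N3_pos _).le hN 2
    rwa [Real.sq_sqrt (by positivity)] at this
  rw [N3_sq] at hN2
  obtain ⟨a1, a2⟩ := hmod u σ hu hC q0 (by
    have h : q0.1 ^ 2 + q0.2 ^ 2 < (κ / 2) ^ 2 := hq0
    change q0.1 ^ 2 + q0.2 ^ 2 < (3 * κ / 4) ^ 2
    have := pow_pos hκ 2
    nlinarith) v' (by
    change (t * e1 - q0.1) ^ 2 + (t * e2 - q0.2) ^ 2 < δ0 ^ 2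
    have : (t - ρ) ^ 2 < δ0 ^ 2 := by
      refine pow_lt_pow_left₀ (by linarith [ht.2]) (by linarith [ht.1]) two_ne_zero
    rw [hq1, hq2]
    linear_combination this + (t - ρ) ^ 2 * he)
  have k1 := sq_near (X1_sq_le _) (X1_sq_le _) a1
  have k2 := sq_near (X2_sq_le _) (X2_sq_le _) a2
  linarith
end

/-! ### Rigidity of the limit problem -/

lemma curve_deriv {f : ℝ × ℝ → ℝ} {p : ℝ → ℝ × ℝ} {S : Set ℝ} {t0 K : ℝ}
    (hK : ∀ t ∈ S, ‖p t - p t0‖ ≤ K * |t - t0|) (hf : HP f (p t0) 0 0) :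
    HasDerivWithinAt (fun t => f (p t)) 0 S t0 := by
  have hO : (fun t => p t - p t0) =O[nhdsWithin t0 S] fun t => t - t0 := by
    refine Asymptotics.IsBigO.of_bound K ?_
    filter_upwards [self_mem_nhdsWithin] with t ht
    exact hK t ht
  have hc : Tendsto p (nhdsWithin t0 S) (nhds (p t0)) := by
    have h1 : Tendsto (fun t => t - t0) (nhdsWithin t0 S) (nhds 0) := by
      have : Tendsto (fun t : ℝ => t - t0) (nhds t0) (nhds (t0 - t0)) :=
        (by fun_prop : ContinuousAt (fun t : ℝ => t - t0) t0)
      rw [sub_self] at this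
      exact this.mono_left nhdsWithin_le_nhds
    have h2 := (hO.trans_tendsto h1).add_const (p t0)
    rw [zero_add] at h2
    exact h2.congr fun t => by abel
  have h0 : lin 0 0 = 0 := by ext <;> simp [lin_apply]
  have h1 := (hf : HasFDerivAt _ _ _).isLittleO
  rw [h0] at h1
  have h2 := (h1.comp_tendsto hc).trans_isBigO hO
  rw [hasDerivWithinAt_iff_isLittleO]
  refine h2.congr_left fun t => ?_
  simp

section
variable {H ρ : ℝ} {z n1 n2 s1 s2 : ℝ × ℝ → ℝ}

/-- The point with coordinates `(x, h)` in the orthonormal frame whose second vector is `(a, b)`. -/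
def ptf (a b x h : ℝ) : ℝ × ℝ := (-b * x + a * h, a * x + b * h)

lemma ptf_norm {a b : ℝ} (hab : a ^ 2 + b ^ 2 = 1) (x h x' h' : ℝ) :
    ‖ptf a b x h - ptf a b x' h'‖ ≤ |x - x'| + |h - h'| := by
  refine norm_le_of_sq (by positivity) ?_
  have e : (ptf a b x h - ptf a b x' h').1 ^ 2 + (ptf a b x h - ptf a b x' h').2 ^ 2
      = (x - x') ^ 2 + (h - h') ^ 2 := by
    simp only [ptf, Prod.fst_sub, Prod.snd_sub]
    linear_combination ((x - x') ^ 2 + (h - h') ^ 2) * hab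
  rw [e, ← sq_abs (x - x'), ← sq_abs (h - h')]
  nlinarith [mul_nonneg (abs_nonneg (x - x')) (abs_nonneg (h - h'))]

/-- Rigidity of the limit of the charts: `z` is a function with unit gradient `n`, and
`(s1, s2)` has differential `(I - n nᵀ) / (1 + 2 H z)`. Then the level `z = 0` is an arc of a circle
of curvature `2 H`, on which `(s1, s2)` is the identity. The reason is that
`G = q - (1 + 2 H z) s` satisfies `dG = (n - 2 H s) dz`, so that `G`, and then also `n - 2 H s`, are
constant on the level sets of `z`. -/
lemma limit_core (hρ : 0 < ρ) (hH : 0 < H) (hHρ : H * ρ < 1)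
    (hn : ∀ q ∈ Dsc ρ, n1 q ^ 2 + n2 q ^ 2 = 1)
    (h1 : ∀ q ∈ Dsc ρ, |n1 q - n1 0| ≤ 1 / 8) (h2 : ∀ q ∈ Dsc ρ, |n2 q - n2 0| ≤ 1 / 8)
    (hc : ∀ q ∈ Dsc ρ, 0 < 1 + 2 * H * z q)
    (hz : ∀ q ∈ Dsc ρ, HP z q (n1 q) (n2 q))
    (hs1 : ∀ q ∈ Dsc ρ, HP s1 q ((1 - n1 q ^ 2) / (1 + 2 * H * z q))
      (-(n1 q * n2 q) / (1 + 2 * H * z q)))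
    (hs2 : ∀ q ∈ Dsc ρ, HP s2 q (-(n1 q * n2 q) / (1 + 2 * H * z q))
      ((1 - n2 q ^ 2) / (1 + 2 * H * z q)))
    (z0 : z 0 = 0) (s10 : s1 0 = 0) (s20 : s2 0 = 0) {q : ℝ × ℝ}
    (hq : q.1 ^ 2 + q.2 ^ 2 ≤ (ρ / 2) ^ 2)
    (hq' : n1 0 * q.1 + n2 0 * q.2 + H * (q.1 ^ 2 + q.2 ^ 2) = 0) :
    z q = 0 ∧ s1 q = q.1 ∧ s2 q = q.2 ∧ n1 q = n1 0 + 2 * H * q.1 ∧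
      n2 q = n2 0 + 2 * H * q.2 := by
  have h00 : (0 : ℝ × ℝ) ∈ Dsc ρ := by
    change (0 : ℝ) ^ 2 + 0 ^ 2 < ρ ^ 2
    have := pow_pos hρ 2
    linarith
  have hab := hn 0 h00
  set a := n1 0 with ha
  set b := n2 0 with hb
  set x0 := ρ / 2 with hx0
  have hx0p : 0 < x0 := by positivity
  have hD : ∀ x h, |x| ≤ x0 → |h| ≤ x0 → ptf a b x h ∈ Dsc ρ := by
    intro x h hx hh
    have e : (ptf a b x h).1 ^ 2 + (ptf a b x h).2 ^ 2 = x ^ 2 + h ^ 2 := by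
      simp only [ptf]
      linear_combination (x ^ 2 + h ^ 2) * hab
    change (ptf a b x h).1 ^ 2 + (ptf a b x h).2 ^ 2 < ρ ^ 2
    rw [e]
    have := sq_le_sq' (abs_le.1 hx).1 (abs_le.1 hx).2
    have := sq_le_sq' (abs_le.1 hh).1 (abs_le.1 hh).2
    have := pow_pos hρ 2
    have : x0 ^ 2 = ρ ^ 2 / 4 := by rw [hx0]; ring
    linarith
  have L : ∀ x h x' h', |x| ≤ x0 → |h| ≤ x0 → |x'| ≤ x0 → |h'| ≤ x0 →
      |z (ptf a b x h) - z (ptf a b x' h') - (h - h')| ≤ 1 / 4 * (|x - x'| + |h - h'|) := by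
    intro x h x' h' hx hh hx' hh'
    have := hp_lip (f := fun p => z p - (a * p.1 + b * p.2)) (C := 1 / 8) (convex_Dsc ρ)
      (fun p hp => ⟨n1 p - a, n2 p - b, ?_, h1 p hp, h2 p hp⟩) (hD x h hx hh) (hD x' h' hx' hh')
    · have e : z (ptf a b x h) - (a * (ptf a b x h).1 + b * (ptf a b x h).2) -
          (z (ptf a b x' h') - (a * (ptf a b x' h').1 + b * (ptf a b x' h').2))
          = z (ptf a b x h) - z (ptf a b x' h') - (h - h') := by
        simp only [ptf]
        linear_combination (h' - h) * hab
      beta_reduce at this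
      rw [e] at this
      refine this.trans ?_
      have := ptf_norm hab x h x' h'
      linarith
    · have hl : HP (fun p : ℝ × ℝ => a * p.1 + b * p.2) p a b :=
        (((HP.const (p := p) a).mul (HP.fst (p := p))).add ((HP.const (p := p) b).mul (HP.snd (p := p)))).congr_coef
          (by simp) (by simp)
      exact (hz p hp).sub hl
  have Lh : ∀ x h x' h', |x| ≤ x0 → |h| ≤ x0 → |x'| ≤ x0 → |h'| ≤ x0 →
      |h - h'| ≤ 2 * (|z (ptf a b x h) - z (ptf a b x' h')| + |x - x'|) := by
    intro x h x' h' hx hh hx' hh'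
    have l := L x h x' h' hx hh hx' hh'
    have t := abs_sub_abs_le_abs_sub (h - h') (z (ptf a b x h) - z (ptf a b x' h'))
    rw [abs_sub_comm] at l
    linarith [abs_nonneg (x - x'), abs_nonneg (h - h'),
      abs_nonneg (z (ptf a b x h) - z (ptf a b x' h'))]
  have ex : ∀ x ζ, |x| ≤ x0 → |ζ| ≤ x0 / 2 → ∃ h, |h| ≤ x0 ∧ z (ptf a b x h) = ζ := by
    intro x ζ hx hζ
    have p00 : ptf a b 0 0 = 0 := by simp [ptf]
    have u1 := L x x0 0 0 hx (by rw [abs_of_pos hx0p]) (by simpa using hx0p.le) (by simpa using hx0p.le)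
    have u2 := L x (-x0) 0 0 hx (by rw [abs_neg, abs_of_pos hx0p]) (by simpa using hx0p.le)
      (by simpa using hx0p.le)
    rw [p00, z0] at u1 u2
    simp only [sub_zero, abs_neg, abs_of_pos hx0p] at u1 u2
    have v1 := (abs_le.1 u1).1
    have v2 := (abs_le.1 u2).2
    have hcont : ContinuousOn (fun h => z (ptf a b x h)) (Icc (-x0) x0) := by
      intro h hh
      have hd := (hz _ (hD x h hx (abs_le.2 hh)) : HasFDerivAt _ _ _).continuousAt
      have : ContinuousAt (fun h => ptf a b x h) h := by unfold ptf; fun_prop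
      exact (ContinuousAt.comp (f := fun h => ptf a b x h) hd this).continuousWithinAt
    obtain ⟨h, hh, e⟩ := intermediate_value_Icc (by linarith) hcont
      (show ζ ∈ Icc _ _ from ⟨by linarith [(abs_le.1 hζ).1], by linarith [(abs_le.1 hζ).2]⟩)
    exact ⟨h, abs_le.2 hh, e⟩
  choose! hh hh1 hh2 using ex
  -- the point of the level `ζ` with first coordinate `x`
  set Q : ℝ → ℝ → ℝ × ℝ := fun x ζ => ptf a b x (hh x ζ) with hQ
  have hQD : ∀ x ζ, |x| ≤ x0 → |ζ| ≤ x0 / 2 → Q x ζ ∈ Dsc ρ := fun x ζ hx hζ =>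
    hD _ _ hx (hh1 x ζ hx hζ)
  have hQlip : ∀ x ζ x' ζ', |x| ≤ x0 → |ζ| ≤ x0 / 2 → |x'| ≤ x0 → |ζ'| ≤ x0 / 2 →
      ‖Q x ζ - Q x' ζ'‖ ≤ 3 * (|x - x'| + |ζ - ζ'|) := by
    intro x ζ x' ζ' hx hζ hx' hζ'
    have l := Lh x (hh x ζ) x' (hh x' ζ') hx (hh1 x ζ hx hζ) hx' (hh1 x' ζ' hx' hζ')
    rw [hh2 x ζ hx hζ, hh2 x' ζ' hx' hζ'] at l
    have := ptf_norm hab x (hh x ζ) x' (hh x' ζ')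
    have := abs_nonneg (ζ - ζ')
    change ‖ptf a b x (hh x ζ) - ptf a b x' (hh x' ζ')‖ ≤ _
    linarith
  -- `main` is applied to both components of `G`, with `Y` the components of `2 H s - n`
  have main : ∀ G Y : ℝ × ℝ → ℝ, (∀ p ∈ Dsc ρ, HP G p (-Y p * n1 p) (-Y p * n2 p)) →
      ∀ x, |x| ≤ x0 → G (Q x 0) = G 0 ∧ Y (Q x 0) = Y 0 := by
    intro G Y hG x hx
    have hFz : ∀ p ∈ Dsc ρ, HP (fun q => G q + Y p * z q) p 0 0 := by
      intro p hp
      exact ((hG p hp).add ((HP.const (p := p) (Y p)).mul (hz p hp))).congr_coef (by ring) (by ring)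
    have zz : |(0 : ℝ)| ≤ x0 := by simpa using hx0p.le
    have zz2 : |(0 : ℝ)| ≤ x0 / 2 := by rw [abs_zero]; positivity
    have c1 : ∀ ζ x x', |ζ| ≤ x0 / 2 → |x| ≤ x0 → |x'| ≤ x0 → G (Q x ζ) = G (Q x' ζ) := by
      intro ζ x x' hζ hx hx'
      have hd : ∀ y ∈ Icc (-x0) x0, HasDerivWithinAt (fun t => G (Q t ζ)) 0 (Icc (-x0) x0) y := by
        intro y hy
        have := curve_deriv (p := fun t => Q t ζ) (S := Icc (-x0) x0) (t0 := y) (K := 3)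
          (fun t ht => by
            have := hQlip t ζ y ζ (abs_le.2 ht) hζ (abs_le.2 hy) hζ
            simpa using this) (hFz (Q y ζ) (hQD y ζ (abs_le.2 hy) hζ))
        have h3 := this.sub_const (Y (Q y ζ) * ζ)
        refine h3.congr (fun t ht => ?_) ?_
        · change G (Q t ζ) = G (Q t ζ) + Y (Q y ζ) * z (ptf a b t (hh t ζ)) - Y (Q y ζ) * ζ
          rw [hh2 t ζ (abs_le.2 ht) hζ]; ring
        · change G (Q y ζ) = G (Q y ζ) + Y (Q y ζ) * z (ptf a b y (hh y ζ)) - Y (Q y ζ) * ζ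
          rw [hh2 y ζ (abs_le.2 hy) hζ]; ring
      have := Convex.norm_image_sub_le_of_norm_hasDerivWithin_le (C := 0) hd (fun t _ => by simp)
        (convex_Icc _ _) (abs_le.1 hx') (abs_le.1 hx)
      rw [zero_mul] at this
      exact sub_eq_zero.1 (norm_le_zero_iff.1 this)
    have c2 : ∀ x, |x| ≤ x0 → HasDerivWithinAt (fun ζ => G (Q 0 ζ)) (-Y (Q x 0))
        (Icc (-(x0 / 2)) (x0 / 2)) 0 := by
      intro x hx
      have := curve_deriv (p := fun t => Q x t) (S := Icc (-(x0 / 2)) (x0 / 2)) (t0 := 0) (K := 3)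
          (fun t ht => by
            have := hQlip x t x 0 hx (abs_le.2 ht) hx zz2
            simpa using this) (hFz (Q x 0) (hQD x 0 hx zz2))
      have h3 := this.sub (((hasDerivAt_id (0 : ℝ)).const_mul (Y (Q x 0))).hasDerivWithinAt)
      refine (h3.congr (fun t ht => ?_) ?_).congr_deriv (by simp)
      · change G (Q 0 t) = G (Q x t) + Y (Q x 0) * z (ptf a b x (hh x t)) - Y (Q x 0) * t
        rw [hh2 x t hx (abs_le.2 ht), c1 t 0 x (abs_le.2 ht) zz hx]; ring
      · change G (Q 0 0) = G (Q x 0) + Y (Q x 0) * z (ptf a b x (hh x 0)) - Y (Q x 0) * 0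
        rw [hh2 x 0 hx zz2, c1 0 0 x zz2 zz hx]; ring
    have hQ0 : Q 0 0 = 0 := by
      have l := Lh 0 (hh 0 0) 0 0 zz (hh1 0 0 zz zz2) zz zz
      have p00 : ptf a b 0 0 = 0 := by simp [ptf]
      rw [hh2 0 0 zz zz2, p00, z0] at l
      simp only [sub_zero, abs_zero, add_zero, mul_zero] at l
      have : hh 0 0 = 0 := abs_nonpos_iff.1 l
      change ptf a b 0 (hh 0 0) = 0
      rw [this, p00]
    have hu : UniqueDiffWithinAt ℝ (Icc (-(x0 / 2)) (x0 / 2)) 0 :=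
      uniqueDiffOn_Icc (by linarith) 0 ⟨by linarith, by linarith⟩
    have e := hu.eq_deriv _ (c2 x hx) (c2 0 zz)
    rw [hQ0] at e
    exact ⟨by rw [c1 0 x 0 zz2 hx zz, hQ0], neg_inj.1 e⟩
  -- the point `q` is on the level `0`
  set x := -b * q.1 + a * q.2 with hx
  set h := a * q.1 + b * q.2 with hh'
  have hxh : x ^ 2 + h ^ 2 = q.1 ^ 2 + q.2 ^ 2 := by
    rw [hx, hh']; linear_combination (q.1 ^ 2 + q.2 ^ 2) * hab
  have hxb : |x| ≤ x0 := abs_le_of_sq_le_sq (by linarith [sq_nonneg h]) hx0p.le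
  have hhb : |h| ≤ x0 := abs_le_of_sq_le_sq (by linarith [sq_nonneg x]) hx0p.le
  have hqp : q = ptf a b x h := by
    ext
    · simp only [ptf]; rw [hx, hh']; linear_combination -q.1 * hab
    · simp only [ptf]; rw [hx, hh']; linear_combination -q.2 * hab
  have zz2 : |(0 : ℝ)| ≤ x0 / 2 := by rw [abs_zero]; positivity
  obtain ⟨g1, y1⟩ := main (fun p => p.1 - (1 + 2 * H * z p) * s1 p) (fun p => 2 * H * s1 p - n1 p) (by
    intro p hp
    have hcp := mul_inv_cancel₀ (hc p hp).ne'
    refine ((HP.fst (p := p)).sub (((HP.const (p := p) 1).add ((HP.const (p := p) (2 * H)).mul (hz p hp))).mul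
      (hs1 p hp))).congr_coef ?_ ?_
    · linear_combination -(1 - n1 p ^ 2) * hcp
    · linear_combination n1 p * n2 p * hcp) x hxb
  obtain ⟨g2, y2⟩ := main (fun p => p.2 - (1 + 2 * H * z p) * s2 p) (fun p => 2 * H * s2 p - n2 p) (by
    intro p hp
    have hcp := mul_inv_cancel₀ (hc p hp).ne'
    refine ((HP.snd (p := p)).sub (((HP.const (p := p) 1).add ((HP.const (p := p) (2 * H)).mul (hz p hp))).mul
      (hs2 p hp))).congr_coef ?_ ?_
    · linear_combination n1 p * n2 p * hcp
    · linear_combination -(1 - n2 p ^ 2) * hcp) x hxb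
  have hzQ : z (Q x 0) = 0 := hh2 x 0 hxb zz2
  have hnQ := hn _ (hQD x 0 hxb zz2)
  rw [hzQ] at g1 g2
  rw [s10, z0] at g1
  rw [s20, z0] at g2
  rw [s10] at y1
  rw [s20] at y2
  simp only [Prod.fst_zero, Prod.snd_zero] at g1 g2
  have e1 : s1 (Q x 0) = (Q x 0).1 := by linarith
  have e2 : s2 (Q x 0) = (Q x 0).2 := by linarith
  rw [e1] at y1
  rw [e2] at y2
  have n1e : n1 (Q x 0) = a + 2 * H * (Q x 0).1 := by linarith
  have n2e : n2 (Q x 0) = b + 2 * H * (Q x 0).2 := by linarith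
  have hk : hh x 0 = h := by
    have hb1 := hh1 x 0 hxb zz2
    rw [n1e, n2e] at hnQ
    simp only [hQ, ptf] at hnQ
    generalize hh x 0 = k at hnQ hb1
    have r1 : k + H * (x ^ 2 + k ^ 2) = 0 := by
      have : 4 * H * (k + H * (x ^ 2 + k ^ 2)) = 0 := by
        linear_combination hnQ - (1 + 4 * H * k + 4 * H ^ 2 * (x ^ 2 + k ^ 2)) * hab
      rcases mul_eq_zero.1 this with h | h
      · linarith
      · exact h
    have r2 : h + H * (x ^ 2 + h ^ 2) = 0 := by rw [hxh]; exact hq'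
    have : (k - h) * (1 + H * (k + h)) = 0 := by linear_combination r1 - r2
    rcases mul_eq_zero.1 this with h | h'
    · linarith
    · exfalso
      have : -ρ ≤ k + h := by linarith [(abs_le.1 hb1).1, (abs_le.1 hhb).1]
      have := mul_le_mul_of_nonneg_left this hH.le
      linarith
  have hQq : Q x 0 = q := by
    change ptf a b x (hh x 0) = q
    rw [hk, ← hqp]
  rw [hQq] at e1 e2 n1e n2e hzQ
  exact ⟨hzQ, e1, e2, n1e, n2e⟩
end

/-! ### Limits of charts along ultrafilters -/

/-- `F n q' → a` as `n` follows `l` and `q' → q`, jointly. -/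
def JT (l : Filter ℕ) (q : ℝ × ℝ) (F : ℕ → ℝ × ℝ → ℝ) (a : ℝ) : Prop :=
  Tendsto (fun x : ℕ × (ℝ × ℝ) => F x.1 x.2) (l ×ˢ nhds q) (nhds a)

lemma JT.pt {l : Filter ℕ} {q : ℝ × ℝ} {F : ℕ → ℝ × ℝ → ℝ} {a : ℝ} (h : JT l q F a) :
    Tendsto (fun n => F n q) l (nhds a) :=
  Tendsto.comp (f := fun n => (n, q)) h (tendsto_id.prodMk tendsto_const_nhds)

lemma odisk_mem_nhds (q : ℝ × ℝ) {δ : ℝ} (hδ : 0 < δ) : odisk q δ ∈ nhds q := by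
  refine (isOpen_odisk q δ).mem_nhds ?_
  change (q.1 - q.1) ^ 2 + (q.2 - q.2) ^ 2 < δ ^ 2
  rw [sub_self, sub_self]
  have := pow_pos hδ 2
  linarith

lemma JT.of_equi {l : Filter ℕ} {q : ℝ × ℝ} {F : ℕ → ℝ × ℝ → ℝ} {a : ℝ}
    (hp : Tendsto (fun n => F n q) l (nhds a))
    (he : ∀ ε > 0, ∃ δ > 0, ∀ n, ∀ q' ∈ odisk q δ, |F n q' - F n q| ≤ ε) : JT l q F a := by
  unfold JT
  rw [Metric.tendsto_nhds] at hp ⊢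
  intro ε hε
  obtain ⟨δ, hδ, h⟩ := he (ε / 2) (by positivity)
  have h1 := (hp (ε / 2) (by positivity)).prod_mk (odisk_mem_nhds q hδ)
  filter_upwards [h1] with x hx
  have h2 := h x.1 x.2 hx.2
  have h3 := hx.1
  rw [Real.dist_eq] at h3 ⊢
  calc |F x.1 x.2 - a| ≤ |F x.1 x.2 - F x.1 q| + |F x.1 q - a| := abs_sub_le _ _ _
    _ < ε := by linarith

lemma JT.of_lip {l : Filter ℕ} {q : ℝ × ℝ} {F : ℕ → ℝ × ℝ → ℝ} {a K : ℝ} {S : Set (ℝ × ℝ)}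
    (hS : IsOpen S) (hq : q ∈ S) (hK : 0 < K)
    (hp : Tendsto (fun n => F n q) l (nhds a))
    (he : ∀ n, ∀ q' ∈ S, |F n q' - F n q| ≤ K * ‖q' - q‖) : JT l q F a := by
  unfold JT
  rw [Metric.tendsto_nhds] at hp ⊢
  intro ε hε
  have h1 := (hp (ε / 2) (by positivity)).prod_mk
    (inter_mem (Metric.ball_mem_nhds q (show 0 < ε / (2 * K) by positivity)) (hS.mem_nhds hq))
  filter_upwards [h1] with x hx
  have h2 := he x.1 x.2 hx.2.2
  have h3 := hx.1
  have h4 : dist x.2 q < ε / (2 * K) := hx.2.1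
  rw [dist_eq_norm, lt_div_iff₀ (by positivity)] at h4
  rw [Real.dist_eq] at h3 ⊢
  calc |F x.1 x.2 - a| ≤ |F x.1 x.2 - F x.1 q| + |F x.1 q - a| := abs_sub_le _ _ _
    _ < ε := by linarith

/-- Passage to the limit in derivatives. -/
lemma lim_HP {l : Filter ℕ} [l.NeBot] {q : ℝ × ℝ} {F A B : ℕ → ℝ × ℝ → ℝ} {f : ℝ × ℝ → ℝ} {a b : ℝ}
    {S : Set (ℝ × ℝ)} (hS : S ∈ nhds q) (hF : ∀ n, ∀ p ∈ S, HP (F n) p (A n p) (B n p))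
    (hA : JT l q A a) (hB : JT l q B b)
    (hf : ∀ p ∈ S, Tendsto (fun n => F n p) l (nhds (f p))) : HP f q a b := by
  refine hasFDerivAt_of_tendstoUniformlyOnFilter (l := l) (f := F) (g := f) (x := q)
    (f' := fun n p => lin (A n p) (B n p)) (g' := fun _ => lin a b) ?_ ?_ ?_
  · rw [tendstoUniformlyOnFilter_iff_tendsto]
    have hc : Continuous fun x : ℝ × ℝ => lin x.1 x.2 := by
      have : (fun x : ℝ × ℝ => lin x.1 x.2) = fun x : ℝ × ℝ =>
          x.1 • ContinuousLinearMap.fst ℝ ℝ ℝ + x.2 • ContinuousLinearMap.snd ℝ ℝ ℝ := by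
        funext x; ext <;> simp [lin_apply]
      rw [this]
      fun_prop
    have h1 : Tendsto (fun x : ℕ × (ℝ × ℝ) => lin (A x.1 x.2) (B x.1 x.2)) (l ×ˢ nhds q)
        (nhds (lin a b)) :=
      (hc.tendsto (a, b)).comp (f := fun x : ℕ × (ℝ × ℝ) => (A x.1 x.2, B x.1 x.2))
        (Tendsto.prodMk_nhds hA hB)
    exact tendsto_left_nhds_uniformity.comp h1 |>.congr fun _ => rfl
  · have : ∀ᶠ x : ℕ × (ℝ × ℝ) in l ×ˢ nhds q, True ∧ x.2 ∈ S :=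
      (Eventually.of_forall fun _ => trivial).prod_mk hS
    filter_upwards [this] with x hx
    exact hF x.1 x.2 hx.2
  · filter_upwards [hS] with p hp using hf p hp

lemma exists_ulim (l : Ultrafilter ℕ) {F : ℕ → ℝ} {C : ℝ} (h : ∀ n, |F n| ≤ C) :
    ∃ a, Tendsto F l (nhds a) := by
  obtain ⟨a, _, ha⟩ := (isCompact_Icc (a := -C) (b := C)).ultrafilter_le_nhds (l.map F) (by
    rw [Ultrafilter.coe_map]
    exact tendsto_principal.2 (Eventually.of_forall fun n => abs_le.1 (h n)))
  exact ⟨a, ha⟩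

lemma Dsc_mono {a b : ℝ} (ha : 0 ≤ a) (hab : a ≤ b) : Dsc a ⊆ Dsc b := by
  intro p hp
  have h : p.1 ^ 2 + p.2 ^ 2 < a ^ 2 := hp
  exact h.trans_le (pow_le_pow_left₀ ha hab 2)

section
variable {H R κ : ℝ}

lemma Chart.lipz {u : ℝ × ℝ → ℝ} {σ : ℝ × ℝ → ℝ × ℝ} (hC : Chart H R κ u σ) (hu : Sol H R u)
    {p q : ℝ × ℝ} (hp : p ∈ Dsc κ) (hq : q ∈ Dsc κ) :
    |u (σ p) - u (σ q)| ≤ 2 * ‖p - q‖ := by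
  have hd : ∀ x d : ℝ, x ^ 2 ≤ 1 → 1 ≤ d → |x / d| ≤ 1 := by
    intro x d hx hd
    have : |x| ≤ 1 := abs_le_one_iff_mul_self_le_one.2 (by nlinarith)
    rw [abs_div, abs_of_pos (by linarith : 0 < d), div_le_one (by linarith)]
    linarith
  have := hp_lip (C := 1) (convex_Dsc κ) (fun v hv => ⟨_, _, hC.hp_u hu hv,
    hd _ _ (X1_sq_le _) (hC.d_pos hv), hd _ _ (X2_sq_le _) (hC.d_pos hv)⟩) hp hq
  linarith

/-- The limit of a sequence of charts along an ultrafilter, when the surfaces become vertical. -/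
lemma chart_limit (hH : 0 < H) (hR : 0 < R) (hκ : 0 < κ) {w : ℕ → ℝ × ℝ → ℝ}
    {σ : ℕ → ℝ × ℝ → ℝ × ℝ} (hw : ∀ n, Sol H R (w n)) (hC : ∀ n, Chart H R κ (w n) (σ n))
    (l : Ultrafilter ℕ) (h0 : Tendsto (fun n => N3 (w n) 0) l (nhds 0)) :
    ∃ z n1 n2 s1 s2 : ℝ × ℝ → ℝ, (∀ q ∈ Dsc (κ / 2),
      JT l q (fun n p => X1 (w n) (σ n p)) (n1 q) ∧ JT l q (fun n p => X2 (w n) (σ n p)) (n2 q) ∧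
      JT l q (fun n p => (σ n p).1) (s1 q) ∧ JT l q (fun n p => (σ n p).2) (s2 q) ∧
      n1 q ^ 2 + n2 q ^ 2 = 1 ∧ |2 * H * z q| ≤ 1 / 2 ∧ HP z q (n1 q) (n2 q) ∧
      JT l q (fun n p => mA H (w n) (σ n) p) ((1 - n1 q ^ 2) / (1 + 2 * H * z q)) ∧
      JT l q (fun n p => mB H (w n) (σ n) p) (-(n1 q * n2 q) / (1 + 2 * H * z q)) ∧
      JT l q (fun n p => mD H (w n) (σ n) p) ((1 - n2 q ^ 2) / (1 + 2 * H * z q)) ∧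
      HP s1 q ((1 - n1 q ^ 2) / (1 + 2 * H * z q)) (-(n1 q * n2 q) / (1 + 2 * H * z q)) ∧
      HP s2 q (-(n1 q * n2 q) / (1 + 2 * H * z q)) ((1 - n2 q ^ 2) / (1 + 2 * H * z q))) ∧
      z 0 = 0 ∧ s1 0 = 0 ∧ s2 0 = 0 := by
  have hsub : Dsc (κ / 2) ⊆ Dsc κ := Dsc_mono (by positivity) (by linarith)
  have hsub' : Dsc (κ / 2) ⊆ Dsc (3 * κ / 4) := Dsc_mono (by positivity) (by linarith)
  have bd1 : ∀ q n, |X1 (w n) (σ n q)| ≤ 1 := fun q n =>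
    abs_le_one_iff_mul_self_le_one.2 (by nlinarith [X1_sq_le (u := w n) (σ n q)])
  have bd2 : ∀ q n, |X2 (w n) (σ n q)| ≤ 1 := fun q n =>
    abs_le_one_iff_mul_self_le_one.2 (by nlinarith [X2_sq_le (u := w n) (σ n q)])
  have h00 : (0 : ℝ × ℝ) ∈ Dsc (κ / 2) := by
    change (0 : ℝ) ^ 2 + 0 ^ 2 < (κ / 2) ^ 2
    have := pow_pos (half_pos hκ) 2
    linarith
  have exz : ∀ q ∈ Dsc (κ / 2), ∃ a, Tendsto (fun n => w n (σ n q)) l (nhds a) := fun q hq =>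
    exists_ulim l fun n => (hC n).hgt q (hsub hq)
  have exs1 : ∀ q ∈ Dsc (κ / 2), ∃ a, Tendsto (fun n => (σ n q).1) l (nhds a) := fun q hq =>
    exists_ulim l (C := 8 * ‖q - 0‖) fun n => by
      have := (hC n).lip1 (hsub hq) (hsub h00)
      rwa [(hC n).zero, Prod.fst_zero, sub_zero] at this
  have exs2 : ∀ q ∈ Dsc (κ / 2), ∃ a, Tendsto (fun n => (σ n q).2) l (nhds a) := fun q hq =>
    exists_ulim l (C := 8 * ‖q - 0‖) fun n => by
      have := (hC n).lip2 (hsub hq) (hsub h00)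
      rwa [(hC n).zero, Prod.snd_zero, sub_zero] at this
  choose n1 hn1 using fun q => exists_ulim l (bd1 q)
  choose n2 hn2 using fun q => exists_ulim l (bd2 q)
  choose! z hz using exz
  choose! s1 hs1 using exs1
  choose! s2 hs2 using exs2
  refine ⟨z, n1, n2, s1, s2, fun q hq => ?_, ?_, ?_, ?_⟩
  · have hnb := (isOpen_Dsc (κ / 2)).mem_nhds hq
    have j1 : JT l q (fun n p => X1 (w n) (σ n p)) (n1 q) := JT.of_equi (hn1 q) fun ε hε => by
      obtain ⟨δ, hδ, h⟩ := modulus hH hR hκ hε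
      exact ⟨δ, hδ, fun n q' hq' => (h _ _ (hw n) (hC n) q (hsub' hq) q' hq').1⟩
    have j2 : JT l q (fun n p => X2 (w n) (σ n p)) (n2 q) := JT.of_equi (hn2 q) fun ε hε => by
      obtain ⟨δ, hδ, h⟩ := modulus hH hR hκ hε
      exact ⟨δ, hδ, fun n q' hq' => (h _ _ (hw n) (hC n) q (hsub' hq) q' hq').2⟩
    have jz : JT l q (fun n p => w n (σ n p)) (z q) :=
      JT.of_lip (isOpen_Dsc (κ / 2)) hq two_pos (hz q hq) fun n q' hq' =>
        (hC n).lipz (hw n) (hsub hq') (hsub hq)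
    have js1 : JT l q (fun n p => (σ n p).1) (s1 q) :=
      JT.of_lip (isOpen_Dsc (κ / 2)) hq (by norm_num : (0 : ℝ) < 8) (hs1 q hq) fun n q' hq' =>
        (hC n).lip1 (hsub hq') (hsub hq)
    have js2 : JT l q (fun n p => (σ n p).2) (s2 q) :=
      JT.of_lip (isOpen_Dsc (κ / 2)) hq (by norm_num : (0 : ℝ) < 8) (hs2 q hq) fun n q' hq' =>
        (hC n).lip2 (hsub hq') (hsub hq)
    have hsum : Tendsto (fun n => X1 (w n) (σ n q) ^ 2 + X2 (w n) (σ n q) ^ 2) l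
        (nhds (n1 q ^ 2 + n2 q ^ 2)) := ((hn1 q).pow 2).add ((hn2 q).pow 2)
    have hunit : n1 q ^ 2 + n2 q ^ 2 = 1 := by
      refine le_antisymm (le_of_tendsto' hsum fun n => (X_lt_one _).le) ?_
      refine le_of_forall_pos_sub_le fun ε hε => ?_
      obtain ⟨η, hη, h⟩ := vertical hH hR hκ hq hε
      refine ge_of_tendsto hsum ?_
      filter_upwards [h0.eventually (Iio_mem_nhds hη)] with n hn
      exact h _ _ (hw n) (hC n) (le_of_lt hn)
    have hzb : |2 * H * z q| ≤ 1 / 2 :=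
      le_of_tendsto' ((hz q hq).const_mul (2 * H)).abs fun n => (hC n).hgt' q (hsub hq)
    have hcp : 0 < 1 + 2 * H * z q := by linarith [(abs_le.1 hzb).1]
    have jN : JT l q (fun n p => N3 (w n) (σ n p)) 0 := by
      have h : Tendsto (fun x : ℕ × (ℝ × ℝ) => Real.sqrt (1 - X1 (w x.1) (σ x.1 x.2) ^ 2
          - X2 (w x.1) (σ x.1 x.2) ^ 2)) (l ×ˢ nhds q) (nhds (Real.sqrt (1 - n1 q ^ 2 - n2 q ^ 2))) :=
        (((j1.pow 2).const_sub 1).sub (j2.pow 2)).sqrt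
      have e : 1 - n1 q ^ 2 - n2 q ^ 2 = 0 := by linarith
      rw [e, Real.sqrt_zero] at h
      refine Tendsto.congr (fun x => ?_) h
      rw [← N3_sq, Real.sqrt_sq (N3_pos _).le]
    have jc : JT l q (fun n p => 1 + 2 * H * w n (σ n p)) (1 + 2 * H * z q) :=
      (jz.const_mul (2 * H)).const_add 1
    have jd : JT l q (fun n p => 1 + (1 + 2 * H * w n (σ n p)) * N3 (w n) (σ n p)) 1 := by
      have : Tendsto _ _ _ := (jc.mul jN).const_add 1
      rwa [mul_zero, add_zero] at this
    have jK : JT l q (fun n p => (1 + 2 * H * w n (σ n p)) + N3 (w n) (σ n p)) (1 + 2 * H * z q) := by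
      have : Tendsto _ _ _ := jc.add jN
      rwa [add_zero] at this
    have jA : JT l q (fun n p => mA H (w n) (σ n) p) ((1 - n1 q ^ 2) / (1 + 2 * H * z q)) := by
      have : Tendsto _ _ _ := (((j1.pow 2).div jd one_ne_zero).const_sub 1).div jK hcp.ne'
      rw [div_one] at this
      exact this
    have jD : JT l q (fun n p => mD H (w n) (σ n) p) ((1 - n2 q ^ 2) / (1 + 2 * H * z q)) := by
      have : Tendsto _ _ _ := (((j2.pow 2).div jd one_ne_zero).const_sub 1).div jK hcp.ne'
      rw [div_one] at this
      exact this
    have jB : JT l q (fun n p => mB H (w n) (σ n) p) (-(n1 q * n2 q) / (1 + 2 * H * z q)) := by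
      have : Tendsto _ _ _ := (((j1.mul j2).div jd one_ne_zero).neg).div jK hcp.ne'
      rw [div_one] at this
      exact this
    have jz1 : JT l q (fun n p => X1 (w n) (σ n p) / (1 + (1 + 2 * H * w n (σ n p)) * N3 (w n) (σ n p)))
        (n1 q) := by
      have : Tendsto _ _ _ := j1.div jd one_ne_zero
      rw [div_one] at this
      exact this
    have jz2 : JT l q (fun n p => X2 (w n) (σ n p) / (1 + (1 + 2 * H * w n (σ n p)) * N3 (w n) (σ n p)))
        (n2 q) := by
      have : Tendsto _ _ _ := j2.div jd one_ne_zero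
      rw [div_one] at this
      exact this
    exact ⟨j1, j2, js1, js2, hunit, hzb,
      lim_HP hnb (fun n p hp => (hC n).hp_u (hw n) (hsub hp)) jz1 jz2 hz, jA, jB, jD,
      lim_HP hnb (fun n p hp => (hC n).e1 (hsub hp)) jA jB hs1,
      lim_HP hnb (fun n p hp => (hC n).e2 (hsub hp)) jB jD hs2⟩
  · refine tendsto_nhds_unique (hz 0 h00) ?_
    simp only [(hC _).zero, (hw _).zero]
    exact tendsto_const_nhds
  · refine tendsto_nhds_unique (hs1 0 h00) ?_
    simp only [(hC _).zero]
    exact tendsto_const_nhds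
  · refine tendsto_nhds_unique (hs2 0 h00) ?_
    simp only [(hC _).zero]
    exact tendsto_const_nhds
end

/-! ### Propagation along the arc -/

/-- The arc of circle of curvature `2 H`, parametrized by arc length. -/
def cc (H s : ℝ) : ℝ × ℝ := ((1 - Real.cos (2 * H * s)) / (2 * H), Real.sin (2 * H * s) / (2 * H))

/-- The limit of the stream functions along the arc `cc`. -/
def PsC (H s : ℝ) : ℝ := -s / 2 - Real.sin (2 * H * s) / (4 * H)

section
variable {H R : ℝ}

lemma cc_sub_sq (hH : 0 < H) (s s0 : ℝ) :
    ((cc H s).1 - (cc H s0).1) ^ 2 + ((cc H s).2 - (cc H s0).2) ^ 2 ≤ (s - s0) ^ 2 := by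
  have h := Real.one_sub_sq_div_two_le_cos (x := 2 * H * s - 2 * H * s0)
  rw [Real.cos_sub] at h
  have e1 := Real.sin_sq_add_cos_sq (2 * H * s)
  have e2 := Real.sin_sq_add_cos_sq (2 * H * s0)
  have e : ((cc H s).1 - (cc H s0).1) ^ 2 + ((cc H s).2 - (cc H s0).2) ^ 2 =
      (2 - 2 * (Real.cos (2 * H * s) * Real.cos (2 * H * s0) +
        Real.sin (2 * H * s) * Real.sin (2 * H * s0))) / (4 * H ^ 2) := by
    simp only [cc]
    field_simp
    linear_combination 4 * e1 + 4 * e2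
  rw [e, div_le_iff₀ (by positivity)]
  nlinarith

lemma hasDerivAt_cc (hH : 0 < H) (s : ℝ) :
    HasDerivAt (cc H) (Real.sin (2 * H * s), Real.cos (2 * H * s)) s := by
  have hl : HasDerivAt (fun s : ℝ => 2 * H * s) (2 * H) s := by
    simpa using (hasDerivAt_id s).const_mul (2 * H)
  have h1 := ((hl.cos.const_sub 1).div_const (2 * H)).congr_deriv
    (show _ = Real.sin (2 * H * s) by field_simp)
  have h2 := (hl.sin.div_const (2 * H)).congr_deriv
    (show _ = Real.cos (2 * H * s) by field_simp)
  exact h1.prodMk h2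

lemma hasDerivAt_PsC (hH : 0 < H) (s : ℝ) :
    HasDerivAt (PsC H) (-(1 + Real.cos (2 * H * s)) / 2) s := by
  have hl : HasDerivAt (fun s : ℝ => 2 * H * s) (2 * H) s := by
    simpa using (hasDerivAt_id s).const_mul (2 * H)
  refine (((hasDerivAt_id s).neg.div_const 2).sub (hl.sin.div_const (4 * H))).congr_deriv ?_
  field_simp
  ring

/-- Propagation of the convergence along the arc `cc` over a length `ℓ0` independent of the
sequence. -/
lemma core_step (hH : 0 < H) (hR : 0 < R) : ∃ ℓ0, 0 < ℓ0 ∧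
    ∀ (w : ℕ → ℝ × ℝ → ℝ) (P : ℕ → ℝ × ℝ) (Th : ℕ → ℝ × ℝ → ℝ) (s0 : ℝ), (∀ n, Sol H R (w n)) →
    (∀ n, ∀ p ∈ Dsc R, HP (Th n) p (-X2 (w n) p + H * ((P n).2 + p.2))
      (X1 (w n) p - H * ((P n).1 + p.1))) →
    Tendsto P atTop (nhds (cc H s0)) →
    Tendsto (fun n => X1 (w n) 0) atTop (nhds (-Real.cos (2 * H * s0))) →
    Tendsto (fun n => X2 (w n) 0) atTop (nhds (Real.sin (2 * H * s0))) →
    ∀ s, |s - s0| ≤ ℓ0 → ∃ Q : ℕ → ℝ × ℝ, (∀ n, Q n ∈ Dsc R) ∧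
      Tendsto (fun n => P n + Q n) atTop (nhds (cc H s)) ∧
      Tendsto (fun n => X1 (w n) (Q n)) atTop (nhds (-Real.cos (2 * H * s))) ∧
      Tendsto (fun n => X2 (w n) (Q n)) atTop (nhds (Real.sin (2 * H * s))) ∧
      Tendsto (fun n => Th n (Q n) - Th n 0) atTop (nhds (PsC H s - PsC H s0)) := by
  obtain ⟨κ, hκ, hκ1, hκH, hκR⟩ : ∃ κ, 0 < κ ∧ κ ≤ 1 ∧ 2 * H * κ ≤ 1 / 2 ∧ 48 * κ ≤ R := by
    refine ⟨min 1 (min (1 / (4 * H)) (R / 48)), by positivity, min_le_left _ _, ?_, ?_⟩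
    · have : min 1 (min (1 / (4 * H)) (R / 48)) ≤ 1 / (4 * H) :=
        (min_le_right _ _).trans (min_le_left _ _)
      rw [le_div_iff₀ (by positivity)] at this
      linarith
    · have : min 1 (min (1 / (4 * H)) (R / 48)) ≤ R / 48 :=
        (min_le_right _ _).trans (min_le_right _ _)
      linarith
  obtain ⟨δ, hδ, hmod⟩ := modulus hH hR hκ (show (0 : ℝ) < 1 / 8 by norm_num)
  set ρ := min δ (κ / 2) with hρ
  have hρ0 : 0 < ρ := by positivity
  have hρδ : ρ ≤ δ := min_le_left _ _
  have hρκ : ρ ≤ κ / 2 := min_le_right _ _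
  refine ⟨ρ / 2, by positivity, fun w P Th s0 hw hTh hP hX1 hX2 s hs => ?_⟩
  choose σ hC using fun n => exists_chart hH hκ hκ1 hκH hκR (hw n)
  have hsub : Dsc (κ / 2) ⊆ Dsc κ := Dsc_mono (by positivity) (by linarith)
  have hsubρ : Dsc ρ ⊆ Dsc (κ / 2) := Dsc_mono hρ0.le hρκ
  have h00 : (0 : ℝ × ℝ) ∈ Dsc ρ := by
    change (0 : ℝ) ^ 2 + 0 ^ 2 < ρ ^ 2
    have := pow_pos hρ0 2
    linarith
  have hmemR : ∀ n, ∀ q ∈ Dsc κ, σ n q ∈ Dsc R := fun n q hq =>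
    CDsc_subset_Dsc (by positivity) (by linarith) ((hC n).mem q hq)
  -- the points of the parameter disk lying on the arc
  set qs : ℝ → ℝ × ℝ := fun t => cc H t - cc H s0 with hqs
  have hqsb : ∀ t, |t - s0| ≤ ρ / 2 → (qs t).1 ^ 2 + (qs t).2 ^ 2 ≤ (ρ / 2) ^ 2 := by
    intro t ht
    refine (cc_sub_sq hH t s0).trans ?_
    exact sq_le_sq' (by linarith [(abs_le.1 ht).1]) (abs_le.1 ht).2
  have hqsD : ∀ t, |t - s0| ≤ ρ / 2 → qs t ∈ Dsc ρ := by
    intro t ht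
    have h1 := hqsb t ht
    have := pow_pos hρ0 2
    change (qs t).1 ^ 2 + (qs t).2 ^ 2 < ρ ^ 2
    linarith
  have hN0 : Tendsto (fun n => N3 (w n) 0) atTop (nhds 0) := by
    have h : Tendsto (fun n => Real.sqrt (1 - X1 (w n) 0 ^ 2 - X2 (w n) 0 ^ 2)) atTop
        (nhds (Real.sqrt (1 - (-Real.cos (2 * H * s0)) ^ 2 - Real.sin (2 * H * s0) ^ 2))) :=
      (((hX1.pow 2).const_sub 1).sub (hX2.pow 2)).sqrt
    have e : 1 - (-Real.cos (2 * H * s0)) ^ 2 - Real.sin (2 * H * s0) ^ 2 = 0 := by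
      linarith [Real.sin_sq_add_cos_sq (2 * H * s0), neg_sq (Real.cos (2 * H * s0))]
    rw [e, Real.sqrt_zero] at h
    refine Tendsto.congr (fun n => ?_) h
    rw [← N3_sq, Real.sqrt_sq (N3_pos _).le]
  obtain ⟨B, hB⟩ : ∃ B, ∀ n, ‖P n‖ ≤ B := by
    obtain ⟨B, hB⟩ := (Metric.isBounded_range_of_tendsto P hP).exists_norm_le
    exact ⟨B, fun n => hB _ ⟨n, rfl⟩⟩
  have hB0 : 0 ≤ B := (norm_nonneg _).trans (hB 0)
  have main : ∀ l : Ultrafilter ℕ, (l : Filter ℕ) ≤ atTop →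
      Tendsto (fun n => P n + σ n (qs s)) l (nhds (cc H s)) ∧
      Tendsto (fun n => X1 (w n) (σ n (qs s))) l (nhds (-Real.cos (2 * H * s))) ∧
      Tendsto (fun n => X2 (w n) (σ n (qs s))) l (nhds (Real.sin (2 * H * s))) ∧
      Tendsto (fun n => Th n (σ n (qs s)) - Th n 0) l (nhds (PsC H s - PsC H s0)) := by
    intro l hl
    obtain ⟨z, n1, n2, s1, s2, hlim, hz0, hs10, hs20⟩ :=
      chart_limit hH hR hκ hw hC l (hN0.mono_left hl)
    have hn10 : n1 0 = -Real.cos (2 * H * s0) := by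
      refine tendsto_nhds_unique (hlim 0 (hsubρ h00)).1.pt ?_
      simp only [(hC _).zero]
      exact hX1.mono_left hl
    have hn20 : n2 0 = Real.sin (2 * H * s0) := by
      refine tendsto_nhds_unique (hlim 0 (hsubρ h00)).2.1.pt ?_
      simp only [(hC _).zero]
      exact hX2.mono_left hl
    have h0' : (0 : ℝ × ℝ) ∈ Dsc (3 * κ / 4) :=
      Dsc_mono (by positivity) (by linarith) (hsubρ h00)
    have hod : ∀ q ∈ Dsc ρ, q ∈ odisk 0 δ := by
      intro q hq
      have h1 : q.1 ^ 2 + q.2 ^ 2 < ρ ^ 2 := hq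
      have h2 := pow_le_pow_left₀ hρ0.le hρδ 2
      change (q.1 - 0) ^ 2 + (q.2 - 0) ^ 2 < δ ^ 2
      rw [sub_zero, sub_zero]
      linarith
    have core := fun t (ht : |t - s0| ≤ ρ / 2) => limit_core (q := qs t) hρ0 hH
      (by have := mul_le_mul_of_nonneg_left hρκ hH.le; linarith)
      (fun q hq => (hlim q (hsubρ hq)).2.2.2.2.1)
      (fun q hq => le_of_tendsto' ((hlim q (hsubρ hq)).1.pt.sub (hlim 0 (hsubρ h00)).1.pt).abs
        fun n => (hmod _ _ (hw n) (hC n) 0 h0' q (hod q hq)).1)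
      (fun q hq => le_of_tendsto' ((hlim q (hsubρ hq)).2.1.pt.sub (hlim 0 (hsubρ h00)).2.1.pt).abs
        fun n => (hmod _ _ (hw n) (hC n) 0 h0' q (hod q hq)).2)
      (fun q hq => by linarith [(abs_le.1 (hlim q (hsubρ hq)).2.2.2.2.2.1).1])
      (fun q hq => (hlim q (hsubρ hq)).2.2.2.2.2.2.1)
      (fun q hq => (hlim q (hsubρ hq)).2.2.2.2.2.2.2.2.2.2.1)
      (fun q hq => (hlim q (hsubρ hq)).2.2.2.2.2.2.2.2.2.2.2)
      hz0 hs10 hs20 (hqsb t ht) (by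
        rw [hn10, hn20]
        have e1 := Real.sin_sq_add_cos_sq (2 * H * t)
        have e2 := Real.sin_sq_add_cos_sq (2 * H * s0)
        simp only [hqs, cc, Prod.fst_sub, Prod.snd_sub]
        field_simp
        linear_combination e1 - e2)
    have cosn : ∀ t, |t - s0| ≤ ρ / 2 → n1 (qs t) = -Real.cos (2 * H * t) ∧
        n2 (qs t) = Real.sin (2 * H * t) := by
      intro t ht
      obtain ⟨-, -, -, c1, c2⟩ := core t ht
      rw [c1, c2, hn10, hn20]
      simp only [hqs, cc, Prod.fst_sub, Prod.snd_sub]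
      constructor <;> field_simp <;> ring
    have hsD := hsubρ (hqsD s hs)
    obtain ⟨j1, j2, j3, j4, -⟩ := hlim _ hsD
    obtain ⟨-, c1, c2, -, -⟩ := core s hs
    rw [(cosn s hs).1] at j1
    rw [(cosn s hs).2] at j2
    rw [c1] at j3
    rw [c2] at j4
    refine ⟨?_, j1.pt, j2.pt, ?_⟩
    · have h := (hP.mono_left hl).add (Tendsto.prodMk_nhds j3.pt j4.pt)
      have e : cc H s0 + ((qs s).1, (qs s).2) = cc H s := by
        ext <;> simp [hqs]
      rw [e] at h
      exact h
    -- the limit of the stream functions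
    have hΨ : ∀ n, ∀ p ∈ Dsc κ, HP (fun q => Th n (σ n q) - Th n 0) p
        ((-X2 (w n) (σ n p) + H * ((P n).2 + (σ n p).2)) * mA H (w n) (σ n) p +
          (X1 (w n) (σ n p) - H * ((P n).1 + (σ n p).1)) * mB H (w n) (σ n) p)
        ((-X2 (w n) (σ n p) + H * ((P n).2 + (σ n p).2)) * mB H (w n) (σ n) p +
          (X1 (w n) (σ n p) - H * ((P n).1 + (σ n p).1)) * mD H (w n) (σ n) p) := fun n p hp =>
      (((hTh n _ (hmemR n p hp)).comp_map ((hC n).e1 hp) ((hC n).e2 hp)).sub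
        (HP.const (p := p) (Th n 0))).congr_coef (sub_zero _) (sub_zero _)
    have hbd : ∀ n, ∀ p ∈ Dsc κ, |-X2 (w n) (σ n p) + H * ((P n).2 + (σ n p).2)| ≤ 1 + H * (B + R) ∧
        |X1 (w n) (σ n p) - H * ((P n).1 + (σ n p).1)| ≤ 1 + H * (B + R) := by
      intro n p hp
      have hm : (σ n p).1 ^ 2 + (σ n p).2 ^ 2 < R ^ 2 := hmemR n p hp
      have hnm := norm_le_of_sq hR.le hm.le
      have a1 : |X1 (w n) (σ n p)| ≤ 1 :=
        abs_le_one_iff_mul_self_le_one.2 (by nlinarith [X1_sq_le (u := w n) (σ n p)])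
      have a2 : |X2 (w n) (σ n p)| ≤ 1 :=
        abs_le_one_iff_mul_self_le_one.2 (by nlinarith [X2_sq_le (u := w n) (σ n p)])
      have b1 : |(P n).1 + (σ n p).1| ≤ B + R := (abs_add_le _ _).trans
        (add_le_add ((norm_fst_le (P n)).trans (hB n)) ((norm_fst_le (σ n p)).trans hnm))
      have b2 : |(P n).2 + (σ n p).2| ≤ B + R := (abs_add_le _ _).trans
        (add_le_add ((norm_snd_le (P n)).trans (hB n)) ((norm_snd_le (σ n p)).trans hnm))
      constructor
      · refine (abs_add_le _ _).trans ?_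
        rw [abs_neg, abs_mul, abs_of_pos hH]
        exact add_le_add a2 (mul_le_mul_of_nonneg_left b2 hH.le)
      · refine (abs_sub _ _).trans ?_
        rw [abs_mul, abs_of_pos hH]
        exact add_le_add a1 (mul_le_mul_of_nonneg_left b1 hH.le)
    have prodbd : ∀ x y a b C : ℝ, |x| ≤ C → |y| ≤ C → |a| ≤ 4 → |b| ≤ 4 → |x * a + y * b| ≤ 8 * C := by
      intro x y a b C hx hy ha hb
      have := mul_le_mul hx ha (abs_nonneg _) ((abs_nonneg _).trans hx)
      have := mul_le_mul hy hb (abs_nonneg _) ((abs_nonneg _).trans hy)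
      refine (abs_add_le _ _).trans ?_
      rw [abs_mul, abs_mul]
      linarith
    have exF : ∀ q ∈ Dsc (κ / 2), ∃ a, Tendsto (fun n => Th n (σ n q) - Th n 0) l (nhds a) := by
      intro q hq
      refine exists_ulim l (C := 2 * (8 * (1 + H * (B + R))) * ‖q - 0‖) fun n => ?_
      have := hp_lip (C := 8 * (1 + H * (B + R))) (convex_Dsc κ) (fun p hp => ⟨_, _, hΨ n p hp,
        prodbd _ _ _ _ _ (hbd n p hp).1 (hbd n p hp).2 ((hC n).bdA hp) ((hC n).bdB hp),
        prodbd _ _ _ _ _ (hbd n p hp).1 (hbd n p hp).2 ((hC n).bdB hp) ((hC n).bdD hp)⟩)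
        (hsub hq) (hsub (hsubρ h00))
      rwa [(hC n).zero, sub_self, sub_zero] at this
    choose! F hF using exF
    have hF0 : F 0 = 0 := by
      refine tendsto_nhds_unique (hF 0 (hsubρ h00)) ?_
      simp only [(hC _).zero, sub_self]
      exact tendsto_const_nhds
    have hPl := hP.mono_left hl
    have hder : ∀ t ∈ Icc (s0 - ρ / 2) (s0 + ρ / 2), HasDerivWithinAt (fun t => F (qs t) - PsC H t) 0
        (Icc (s0 - ρ / 2) (s0 + ρ / 2)) t := by
      intro t ht
      have ht' : |t - s0| ≤ ρ / 2 := abs_le.2 ⟨by linarith [ht.1], by linarith [ht.2]⟩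
      have hD := hsubρ (hqsD t ht')
      obtain ⟨k1, k2, k3, k4, -, -, -, kA, kB, kD, -, -⟩ := hlim _ hD
      obtain ⟨d0, d1, d2, -, -⟩ := core t ht'
      rw [(cosn t ht').1] at k1
      rw [(cosn t ht').2] at k2
      rw [(cosn t ht').1, d0] at kA
      rw [(cosn t ht').1, (cosn t ht').2, d0] at kB
      rw [(cosn t ht').2, d0] at kD
      rw [d1] at k3
      rw [d2] at k4
      have kP1 : JT l (qs t) (fun n _ => (P n).1) (cc H s0).1 :=
        ((continuous_fst.tendsto _).comp hPl).comp tendsto_fst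
      have kP2 : JT l (qs t) (fun n _ => (P n).2) (cc H s0).2 :=
        ((continuous_snd.tendsto _).comp hPl).comp tendsto_fst
      have kx : JT l (qs t) (fun n p => -X2 (w n) (σ n p) + H * ((P n).2 + (σ n p).2)) _ :=
        k2.neg.add ((kP2.add k4).const_mul H)
      have ky : JT l (qs t) (fun n p => X1 (w n) (σ n p) - H * ((P n).1 + (σ n p).1)) _ :=
        k1.sub ((kP1.add k3).const_mul H)
      have hHP := lim_HP ((isOpen_Dsc (κ / 2)).mem_nhds hD) (fun n p hp => hΨ n p (hsub hp))
        ((kx.mul kA).add (ky.mul kB)) ((kx.mul kB).add (ky.mul kD)) hF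
      have hd := hp_lin_comp (y := qs) (s := Icc (s0 - ρ / 2) (s0 + ρ / 2)) hHP
        ((hasDerivAt_cc hH t).sub_const (cc H s0)).hasDerivWithinAt
      refine (hd.sub (hasDerivAt_PsC hH t).hasDerivWithinAt).congr_deriv ?_
      have e1 := Real.sin_sq_add_cos_sq (2 * H * t)
      simp only [hqs, cc, Prod.fst_sub, Prod.snd_sub, mul_zero, add_zero, div_one]
      generalize Real.sin (2 * H * t) = S at *
      generalize Real.cos (2 * H * t) = C at *
      generalize Real.sin (2 * H * s0) = S0 at *
      generalize Real.cos (2 * H * s0) = C0 at *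
      have ex : -S + H * (S0 / (2 * H) + (S / (2 * H) - S0 / (2 * H))) = -S / 2 := by
        field_simp
        ring
      have ey : -C - H * ((1 - C0) / (2 * H) + ((1 - C) / (2 * H) - (1 - C0) / (2 * H))) =
          -(1 + C) / 2 := by
        field_simp
        ring
      rw [ex, ey]
      linear_combination (-1 / 2) * e1
    have := Convex.norm_image_sub_le_of_norm_hasDerivWithin_le (C := 0) hder (fun t _ => by simp)
        (convex_Icc _ _) (show s0 ∈ Icc (s0 - ρ / 2) (s0 + ρ / 2) from ⟨by linarith, by linarith⟩)
        (show s ∈ Icc (s0 - ρ / 2) (s0 + ρ / 2) from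
          ⟨by linarith [(abs_le.1 hs).1], by linarith [(abs_le.1 hs).2]⟩)
    rw [zero_mul] at this
    have h2 := sub_eq_zero.1 (norm_le_zero_iff.1 this)
    have hq0 : qs s0 = 0 := sub_self _
    rw [hq0, hF0] at h2
    have h3 := hF _ hsD
    have e : F (qs s) = PsC H s - PsC H s0 := by linarith
    rwa [e] at h3
  refine ⟨fun n => σ n (qs s), fun n => hmemR n _ (hsub (hsubρ (hqsD s hs))), ?_, ?_, ?_, ?_⟩ <;>
    rw [tendsto_iff_ultrafilter]
  · exact fun l hl => (main l hl).1
  · exact fun l hl => (main l hl).2.1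
  · exact fun l hl => (main l hl).2.2.1
  · exact fun l hl => (main l hl).2.2.2
end

/-! ### Extension, recentering and stream functions -/

/-- A smooth cutoff function, equal to `1` on the disk of radius `a` and to `0` outside the disk of
radius `b`. -/
def chi (a b : ℝ) (p : ℝ × ℝ) : ℝ :=
  Real.smoothTransition ((b ^ 2 - (p.1 ^ 2 + p.2 ^ 2)) / (b ^ 2 - a ^ 2))

section
variable {a b : ℝ}

lemma cd_chi : ContDiff ℝ 2 (chi a b) :=
  Real.smoothTransition.contDiff.comp
    (f := fun p : ℝ × ℝ => (b ^ 2 - (p.1 ^ 2 + p.2 ^ 2)) / (b ^ 2 - a ^ 2)) (by fun_prop)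

lemma chi_one (ha : 0 ≤ a) (hab : a < b) {p : ℝ × ℝ} (hp : p ∈ Dsc a) : chi a b p = 1 := by
  have hp' : p.1 ^ 2 + p.2 ^ 2 < a ^ 2 := hp
  have h : a ^ 2 < b ^ 2 := pow_lt_pow_left₀ hab ha two_ne_zero
  refine Real.smoothTransition.one_of_one_le ?_
  rw [le_div_iff₀ (by linarith)]
  linarith

lemma chi_zero (ha : 0 ≤ a) (hab : a < b) {p : ℝ × ℝ} (hp : p ∉ CDsc b) : chi a b p = 0 := by
  have hp' : b ^ 2 < p.1 ^ 2 + p.2 ^ 2 := not_le.1 hp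
  have h : a ^ 2 < b ^ 2 := pow_lt_pow_left₀ hab ha two_ne_zero
  refine Real.smoothTransition.zero_of_nonpos ?_
  exact div_nonpos_of_nonpos_of_nonneg (by linarith) (by linarith)

lemma hcs_chi_mul (ha : 0 ≤ a) (hab : a < b) (f : ℝ × ℝ → ℝ) :
    HasCompactSupport (fun p => chi a b p * f p) :=
  HasCompactSupport.intro (isCompact_CDsc (ha.trans hab.le)) fun p hp => by
    rw [chi_zero ha hab hp, zero_mul]
end

section
variable {u : ℝ × ℝ → ℝ}

/-- A solution agrees, on a smaller disk, with a globally `C²` function with compact support. -/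
lemma exists_extension {a r : ℝ} (ha : 0 < a) (har : a < r) (hu : ContDiffOn ℝ 2 u (Dsc r)) :
    ∃ v, ContDiff ℝ 2 v ∧ HasCompactSupport v ∧ ∀ p ∈ Dsc a, v p = u p := by
  obtain ⟨b, hab, hbr⟩ := exists_between har
  refine ⟨fun p => chi a b p * u p, ?_, hcs_chi_mul ha.le hab u, fun p hp => by
    simp only [chi_one ha.le hab hp, one_mul]⟩
  rw [contDiff_iff_contDiffAt]
  intro p
  by_cases hp : p ∈ Dsc r
  · exact cd_chi.contDiffAt.mul (hu.contDiffAt ((isOpen_Dsc r).mem_nhds hp))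
  · have hp' : p ∉ CDsc b := fun h => hp (CDsc_subset_Dsc (ha.trans hab).le hbr h)
    refine (contDiffAt_const (c := (0 : ℝ))).congr_of_eventuallyEq ?_
    filter_upwards [(isClosed_CDsc b).isOpen_compl.mem_nhds hp'] with q hq
    rw [chi_zero ha.le hab hq, zero_mul]

/-- The mean curvature equation in divergence form. -/
lemma div_form {H : ℝ} (hu : ContDiff ℝ 2 u) {p : ℝ × ℝ}
    (h : (1 + (pdy u p) ^ 2) * pdx (fun q => pdx u q) p
      - 2 * (pdx u p) * (pdy u p) * pdy (fun q => pdx u q) p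
      + (1 + (pdx u p) ^ 2) * pdy (fun q => pdy u q) p
    = 2 * H * (1 + (pdx u p) ^ 2 + (pdy u p) ^ 2) ^ ((3 : ℝ) / 2)) :
    pdx (X1 u) p + pdy (X2 u) p = 2 * H := by
  have e3 : (1 + (pdx u p) ^ 2 + (pdy u p) ^ 2) ^ ((3 : ℝ) / 2) = Wgraph u p ^ 3 := by
    rw [Real.rpow_div_two_eq_sqrt _ (by positivity)]
    exact Real.rpow_natCast (Wgraph u p) 3
  rw [e3] at h
  have hw := (cd_W hu).hp p
  have h1 := (cd_X1 hu).hp p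
  have h2 := (cd_X2 hu).hp p
  have hp := (cd_pdx hu).hp p
  have hq := (cd_pdy hu).hp p
  have r1 := ((hw.mul h1).congr_of_eventuallyEq (g := pdx u)
    (Eventually.of_forall fun q => (W_mul_X1 q).symm)).unique hp
  have r2 := ((hw.mul h2).congr_of_eventuallyEq (g := pdy u)
    (Eventually.of_forall fun q => (W_mul_X2 q).symm)).unique hq
  have r3 := ((hw.mul hw).congr_of_eventuallyEq
    (g := fun q => 1 + pdx u q * pdx u q + pdy u q * pdy u q)
    (Eventually.of_forall fun q => by
      have := Wg_sq (u := u) q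
      linear_combination -this)).unique (((HP.const 1).add (hp.mul hp)).add (hq.mul hq))
  have hs := pd_comm hu p
  have hW := Wg_sq (u := u) p
  have e1 := W_mul_X1 (u := u) p
  have e2 := W_mul_X2 (u := u) p
  have hpos := Wg_pos (u := u) p
  change (1 + (pdy u p) ^ 2) * pdx (pdx u) p - 2 * (pdx u p) * (pdy u p) * pdy (pdx u) p
      + (1 + (pdx u p) ^ 2) * pdy (pdy u) p = 2 * H * Wgraph u p ^ 3 at h
  obtain ⟨r1, -⟩ := r1
  obtain ⟨-, r2⟩ := r2
  obtain ⟨r3, r4⟩ := r3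
  generalize pdx (Wgraph u) p = Wx at *
  generalize pdy (Wgraph u) p = Wy at *
  generalize pdx (X1 u) p = Xx at *
  generalize pdy (X2 u) p = Yy at *
  generalize pdx (pdx u) p = px at *
  generalize pdy (pdx u) p = py at *
  generalize pdx (pdy u) p = qx at *
  generalize pdy (pdy u) p = qy at *
  generalize X1 u p = X at *
  generalize X2 u p = Y at *
  generalize Wgraph u p = W at *
  generalize pdx u p = P at *
  generalize pdy u p = Q at *
  subst hs
  have : W ^ 3 * (Xx + Yy - 2 * H) = 0 := by
    linear_combination h + W ^ 2 * r1 + W ^ 2 * r2 - W * Wx * e1 - W * Wy * e2 - P / 2 * r3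
      - Q / 2 * r4 + (px + qy) * hW
  rcases mul_eq_zero.1 this with h0 | h0
  · exact absurd h0 (pow_pos hpos 3).ne'
  · linarith

lemma HP.shift {f : ℝ × ℝ → ℝ} {P p : ℝ × ℝ} {a b : ℝ} (h : HP f (P + p) a b) :
    HP (fun q => f (P + q)) p a b := by
  have := (hasFDerivAt_comp_add_left (f := f) (f' := lin a b) (x := p) P).2 h
  exact this

/-- Recentering a solution at `P`, keeping the compact support. -/
lemma recenter {H R r : ℝ} (hR : 0 < R) (hu : ContDiff ℝ 2 u) (hc : HasCompactSupport u)
    (hpde : ∀ p ∈ Dsc r, pdx (X1 u) p + pdy (X2 u) p = 2 * H) (P : ℝ × ℝ)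
    (hP : ∀ p ∈ Dsc R, P + p ∈ Dsc r) :
    ∃ w, Sol H R w ∧ ∀ p ∈ Dsc R, X1 w p = X1 u (P + p) ∧ X2 w p = X2 u (P + p) := by
  have hR2 : R < 2 * R := by linarith
  set w : ℝ × ℝ → ℝ := fun q => u (P + q) - chi R (2 * R) q * u P with hw
  have h1 : ∀ p ∈ Dsc R, HP w p (pdx u (P + p)) (pdy u (P + p)) := by
    intro p hp
    have := (((hu.of_le (by norm_num)).hp (P + p)).shift.sub (HP.const (p := p) (u P))).congr_coef
      (sub_zero _) (sub_zero _)
    refine this.congr_of_eventuallyEq ?_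
    filter_upwards [(isOpen_Dsc R).mem_nhds hp] with q hq
    simp only [hw, chi_one hR.le hR2 hq, one_mul]
  have hWg : ∀ p ∈ Dsc R, Wgraph w p = Wgraph u (P + p) := by
    intro p hp
    unfold Wgraph
    rw [(h1 p hp).pdx_eq, (h1 p hp).pdy_eq]
  have hX : ∀ p ∈ Dsc R, X1 w p = X1 u (P + p) ∧ X2 w p = X2 u (P + p) := by
    intro p hp
    unfold X1 X2
    rw [(h1 p hp).pdx_eq, (h1 p hp).pdy_eq, hWg p hp]
    exact ⟨rfl, rfl⟩
  refine ⟨w, ⟨?_, ?_, ?_, ?_⟩, hX⟩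
  · exact (hu.comp (contDiff_const.add contDiff_id)).sub (cd_chi.mul contDiff_const)
  · exact (hc.comp_homeomorph (Homeomorph.addLeft P)).sub (hcs_chi_mul hR.le hR2 fun _ => u P)
  · have h0 : (0 : ℝ × ℝ) ∈ Dsc R := by
      change (0 : ℝ) ^ 2 + 0 ^ 2 < R ^ 2
      have := pow_pos hR 2
      linarith
    simp only [hw, chi_one hR.le hR2 h0, add_zero, one_mul, sub_self]
  · intro p hp
    have a1 : HP (X1 w) p _ _ := ((cd_X1 hu).hp (P + p)).shift.congr_of_eventuallyEq (by
      filter_upwards [(isOpen_Dsc R).mem_nhds hp] with q hq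
      exact (hX q hq).1)
    have a2 : HP (X2 w) p _ _ := ((cd_X2 hu).hp (P + p)).shift.congr_of_eventuallyEq (by
      filter_upwards [(isOpen_Dsc R).mem_nhds hp] with q hq
      exact (hX q hq).2)
    rw [a1.pdx_eq, a2.pdy_eq]
    exact hpde _ (hP p hp)

/-- The stream function of `X - H p`, a divergence free field for a solution. -/
lemma exists_stream {H r : ℝ} (hu : ContDiff ℝ 2 u)
    (hpde : ∀ p ∈ Dsc r, pdx (X1 u) p + pdy (X2 u) p = 2 * H) :
    ∃ f, ∀ p ∈ Dsc r, HP f p (-X2 u p + H * p.2) (X1 u p - H * p.1) := by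
  refine poincare (a := fun p => -X2 u p + H * p.2) (b := fun p => X1 u p - H * p.1)
    (convex_Dsc r) (isOpen_Dsc r) fun p hp => ⟨_, _, _,
      ((cd_X2 hu).hp p).neg.add ((HP.const (p := p) H).mul HP.snd),
      (((cd_X1 hu).hp p).sub ((HP.const (p := p) H).mul HP.fst)).congr_coef ?_ rfl⟩
  linear_combination hpde p hp
end

/-! ### Convergence along the whole arc -/

section
variable {H : ℝ}

lemma Dsc_add {b R : ℝ} (hb : 0 ≤ b) (hR : 0 ≤ R) {P p : ℝ × ℝ} (hP : P ∈ Dsc b) (hp : p ∈ Dsc R) :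
    P + p ∈ Dsc (b + R) := by
  have hP' : P.1 ^ 2 + P.2 ^ 2 < b ^ 2 := hP
  have hp' : p.1 ^ 2 + p.2 ^ 2 < R ^ 2 := hp
  change (P.1 + p.1) ^ 2 + (P.2 + p.2) ^ 2 < (b + R) ^ 2
  have h1 : (P.1 * p.1 + P.2 * p.2) ^ 2 ≤ (b * R) ^ 2 := by
    have := mul_le_mul hP'.le hp'.le (by positivity) (by positivity)
    nlinarith [sq_nonneg (P.1 * p.2 - P.2 * p.1)]
  have h2 := (abs_le_of_sq_le_sq' h1 (by positivity)).2
  nlinarith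

lemma cc_zero : cc H 0 = 0 := by
  ext <;> simp [cc]

lemma PsC_zero : PsC H 0 = 0 := by
  simp [PsC]

lemma cc_mem {s L a : ℝ} (hH : 0 < H) (hs : |s| ≤ L) (hL : L < a) : cc H s ∈ Dsc a := by
  have h := cc_sub_sq hH s 0
  rw [cc_zero] at h
  have h' : (cc H s).1 ^ 2 + (cc H s).2 ^ 2 ≤ s ^ 2 := by simpa using h
  have h2 : s ^ 2 < a ^ 2 := by
    rw [← sq_abs s]
    exact pow_lt_pow_left₀ (hs.trans_lt hL) (abs_nonneg _) two_ne_zero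
  exact h'.trans_lt h2

lemma normalVec_eq (u : ℝ × ℝ → ℝ) (p : ℝ × ℝ) :
    normalVec u p = (-X1 u p, -X2 u p, N3 u p) := by
  simp only [normalVec, X1, X2, N3, neg_div, one_div]

/-- Convergence of the stream functions along the whole arc, by iterating `core_step`. -/
lemma stream_tendsto {L a : ℝ} (hH : 0 < H) (hL : 0 < L) (hLa : L < a) {v Ψ : ℕ → ℝ × ℝ → ℝ}
    (hv : ∀ n, ContDiff ℝ 2 (v n)) (hc : ∀ n, HasCompactSupport (v n))
    (hpde : ∀ n, ∀ p ∈ Dsc a, pdx (X1 (v n)) p + pdy (X2 (v n)) p = 2 * H)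
    (hΨ : ∀ n, ∀ p ∈ Dsc a, HP (Ψ n) p (-X2 (v n) p + H * p.2) (X1 (v n) p - H * p.1))
    (h1 : Tendsto (fun n => X1 (v n) 0) atTop (nhds (-1)))
    (h2 : Tendsto (fun n => X2 (v n) 0) atTop (nhds 0)) {s : ℝ} (hs : |s| ≤ L) :
    Tendsto (fun n => Ψ n (cc H s) - Ψ n 0) atTop (nhds (PsC H s)) := by
  set R := (a - L) / 2 with hR
  have hR0 : 0 < R := by rw [hR]; linarith
  set b := L + R with hb
  have hba : b + R = a := by rw [hb, hR]; ring
  have hb0 : 0 < b := by positivity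
  have h0b : (0 : ℝ × ℝ) ∈ Dsc b := by
    have := cc_mem (H := H) (s := 0) (L := L) (a := b) hH (by simpa using hL.le) (by linarith)
    rwa [cc_zero] at this
  obtain ⟨ℓ, hℓ, step⟩ := core_step hH hR0
  have good : ∀ k : ℕ, ∀ s, |s| ≤ L → |s| ≤ k * ℓ → ∃ Q : ℕ → ℝ × ℝ, (∀ n, Q n ∈ Dsc a) ∧
      Tendsto Q atTop (nhds (cc H s)) ∧
      Tendsto (fun n => X1 (v n) (Q n)) atTop (nhds (-Real.cos (2 * H * s))) ∧
      Tendsto (fun n => X2 (v n) (Q n)) atTop (nhds (Real.sin (2 * H * s))) ∧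
      Tendsto (fun n => Ψ n (Q n) - Ψ n 0) atTop (nhds (PsC H s)) := by
    intro k
    induction k with
    | zero =>
      intro s _ hs
      have hs0 : s = 0 := by simpa using hs
      subst hs0
      refine ⟨fun _ => 0, fun _ => Dsc_mono hb0.le (by linarith) h0b, ?_, ?_, ?_, ?_⟩
      · rw [cc_zero]
        exact tendsto_const_nhds
      · simpa using h1
      · simpa using h2
      · simp [PsC_zero]
    | succ k ih =>
      intro s hsL hsk
      have hk : (0 : ℝ) < k + 1 := by positivity
      rw [Nat.cast_succ] at hsk
      set s0 := s * (k / (k + 1)) with hs0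
      have hk1 : (k : ℝ) / (k + 1) ≤ 1 := (div_le_one hk).2 (by linarith)
      have ab0 : |s0| = |s| * (k / (k + 1)) := by
        rw [hs0, abs_mul, abs_of_nonneg (show (0 : ℝ) ≤ k / (k + 1) by positivity)]
      have a1 : |s0| ≤ L := by
        rw [ab0]
        exact (mul_le_of_le_one_right (abs_nonneg _) hk1).trans hsL
      have a2 : |s0| ≤ k * ℓ := by
        rw [ab0]
        calc |s| * (k / (k + 1)) ≤ ((k + 1) * ℓ) * (k / (k + 1)) := by gcongr
          _ = k * ℓ := by field_simp
      have a3 : |s - s0| ≤ ℓ := by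
        have : s - s0 = s / (k + 1) := by
          rw [hs0]
          field_simp
          ring
        rw [this, abs_div, abs_of_pos hk, div_le_iff₀ hk]
        linarith
      obtain ⟨Q, hQa, hQ, q1, q2, q3⟩ := ih s0 a1 a2
      -- the base points, moved to `0` for the finitely many indices where they are too far away
      classical
      set P : ℕ → ℝ × ℝ := fun n => if Q n ∈ Dsc b then Q n else 0 with hP
      have hPb : ∀ n, P n ∈ Dsc b := by
        intro n
        by_cases h : Q n ∈ Dsc b
        · simp only [hP, if_pos h]
          exact h
        · simp only [hP, if_neg h]
          exact h0b
      have hev : ∀ᶠ n in atTop, Q n = P n := by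
        filter_upwards [hQ.eventually ((isOpen_Dsc b).mem_nhds (cc_mem hH a1 (by linarith)))]
          with n hn
        exact (if_pos (show Q n ∈ Dsc b from hn)).symm
      have hPa : ∀ n, ∀ p ∈ Dsc R, P n + p ∈ Dsc a := fun n p hp => by
        rw [← hba]
        exact Dsc_add hb0.le hR0.le (hPb n) hp
      choose w hw hwX using fun n => recenter hR0 (hv n) (hc n) (hpde n) (P n) (hPa n)
      have h0R : (0 : ℝ × ℝ) ∈ Dsc R := by
        have := cc_mem (H := H) (s := 0) (L := 0) (a := R) hH (by simp) hR0
        rwa [cc_zero] at this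
      obtain ⟨Q', hQ'R, c1, c2, c3, c4⟩ := step w P (fun n p => Ψ n (P n + p)) s0 hw
        (fun n p hp => by
          rw [(hwX n p hp).1, (hwX n p hp).2]
          exact (hΨ n _ (hPa n p hp)).shift)
        (hQ.congr' hev)
        (q1.congr' (hev.mono fun n hn => by
          beta_reduce
          rw [(hwX n 0 h0R).1, add_zero, hn]))
        (q2.congr' (hev.mono fun n hn => by
          beta_reduce
          rw [(hwX n 0 h0R).2, add_zero, hn])) s a3
      refine ⟨fun n => P n + Q' n, fun n => hPa n _ (hQ'R n), c1, ?_, ?_, ?_⟩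
      · exact c2.congr fun n => (hwX n _ (hQ'R n)).1
      · exact c3.congr fun n => (hwX n _ (hQ'R n)).2
      · have := c4.add (q3.congr' (hev.mono fun n hn => by rw [hn]))
        rw [sub_add_cancel] at this
        refine this.congr fun n => ?_
        simp only [add_zero]
        ring
  obtain ⟨k, hk⟩ := exists_nat_ge (|s| / ℓ)
  obtain ⟨Q, hQa, hQ, -, -, q3⟩ := good k s hs ((div_le_iff₀ hℓ).1 hk)
  have ha0 : 0 < a := hL.trans hLa
  have bd : ∀ n, |Ψ n (cc H s) - Ψ n (Q n)| ≤ 2 * (1 + H * a) * ‖cc H s - Q n‖ := by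
    intro n
    refine hp_lip (convex_Dsc a) (fun p hp => ⟨_, _, hΨ n p hp, ?_⟩) (cc_mem hH hs hLa) (hQa n)
    have hp' : p.1 ^ 2 + p.2 ^ 2 < a ^ 2 := hp
    have b1 : |p.1| ≤ a := abs_le_of_sq_le_sq (by nlinarith [sq_nonneg p.2]) ha0.le
    have b2 : |p.2| ≤ a := abs_le_of_sq_le_sq (by nlinarith [sq_nonneg p.1]) ha0.le
    have d1 : |X1 (v n) p| ≤ 1 :=
      abs_le_one_iff_mul_self_le_one.2 (by nlinarith [X1_sq_le (u := v n) p])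
    have d2 : |X2 (v n) p| ≤ 1 :=
      abs_le_one_iff_mul_self_le_one.2 (by nlinarith [X2_sq_le (u := v n) p])
    constructor
    · refine (abs_add_le _ _).trans ?_
      rw [abs_neg, abs_mul, abs_of_pos hH]
      exact add_le_add d2 (mul_le_mul_of_nonneg_left b2 hH.le)
    · refine (abs_sub _ _).trans ?_
      rw [abs_mul, abs_of_pos hH]
      exact add_le_add d1 (mul_le_mul_of_nonneg_left b1 hH.le)
  have z : Tendsto (fun n => Ψ n (cc H s) - Ψ n (Q n)) atTop (nhds 0) := by
    refine squeeze_zero_norm bd ?_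
    have := (hQ.const_sub (cc H s)).norm.const_mul (2 * (1 + H * a))
    rwa [sub_self, norm_zero, mul_zero] at this
  have := z.add q3
  rw [zero_add] at this
  refine this.congr fun n => ?_
  ring

/-- The defect between the field `X` and the conormal of the arc. -/
def defect (H : ℝ) (v : ℝ × ℝ → ℝ) (s : ℝ) : ℝ :=
  1 + X1 v (cc H s) * Real.cos (2 * H * s) - X2 v (cc H s) * Real.sin (2 * H * s)

lemma defect_bound (v : ℝ × ℝ → ℝ) (s : ℝ) :
    (X1 v (cc H s) + Real.cos (2 * H * s)) ^ 2 + (X2 v (cc H s) - Real.sin (2 * H * s)) ^ 2 ≤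
      2 * defect H v s := by
  have h := X_lt_one (u := v) (cc H s)
  have e := Real.sin_sq_add_cos_sq (2 * H * s)
  unfold defect
  nlinarith

lemma defect_nonneg (v : ℝ × ℝ → ℝ) (s : ℝ) : 0 ≤ defect H v s := by
  have := defect_bound (H := H) v s
  nlinarith [sq_nonneg (X1 v (cc H s) + Real.cos (2 * H * s)),
    sq_nonneg (X2 v (cc H s) - Real.sin (2 * H * s))]

lemma continuous_defect (hH : 0 < H) {v : ℝ × ℝ → ℝ} (hv : ContDiff ℝ 2 v) :
    Continuous (defect H v) := by
  have c : Continuous (cc H) :=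
    continuous_iff_continuousAt.2 fun s => (hasDerivAt_cc hH s).continuousAt
  have c1 := (cd_X1 hv).continuous.comp c
  have c2 := (cd_X2 hv).continuous.comp c
  unfold defect
  exact (continuous_const.add (c1.mul (by fun_prop))).sub (c2.mul (by fun_prop))

/-- The defect is the derivative of the difference between the stream function and its limit. -/
lemma defect_integral {L a : ℝ} (hH : 0 < H) (hL : 0 < L) (hLa : L < a) {v Ψ : ℝ × ℝ → ℝ}
    (hv : ContDiff ℝ 2 v)
    (hΨ : ∀ p ∈ Dsc a, HP Ψ p (-X2 v p + H * p.2) (X1 v p - H * p.1)) :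
    ∫ s in (-L)..L, defect H v s =
      (Ψ (cc H L) - PsC H L) - (Ψ (cc H (-L)) - PsC H (-L)) := by
  refine intervalIntegral.integral_eq_sub_of_hasDerivAt (f := fun s => Ψ (cc H s) - PsC H s)
    (fun s hs => ?_) ((continuous_defect hH hv).intervalIntegrable _ _)
  rw [uIcc_of_le (by linarith)] at hs
  have hm := cc_mem hH (abs_le.2 hs) hLa
  have h := (hp_lin_comp (y := cc H) (s := univ) (hΨ _ hm)
    (hasDerivAt_cc hH s).hasDerivWithinAt).hasDerivAt univ_mem
  refine (h.sub (hasDerivAt_PsC hH s)).congr_deriv ?_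
  have e := Real.sin_sq_add_cos_sq (2 * H * s)
  unfold defect
  generalize X1 v (cc H s) = x
  generalize X2 v (cc H s) = y
  have e1 : H * (cc H s).1 = (1 - Real.cos (2 * H * s)) / 2 := by
    simp only [cc]
    field_simp
  have e2 : H * (cc H s).2 = Real.sin (2 * H * s) / 2 := by
    simp only [cc]
    field_simp
  rw [e1, e2]
  linear_combination (1 / 2) * e

lemma tendsto_of_sq_le {l : Filter ℕ} {f g : ℕ → ℝ} {c : ℝ} (h : ∀ n, (f n - c) ^ 2 ≤ g n)
    (hg : Tendsto g l (nhds 0)) : Tendsto f l (nhds c) := by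
  rw [tendsto_iff_norm_sub_tendsto_zero]
  have := hg.sqrt
  rw [Real.sqrt_zero] at this
  exact squeeze_zero (fun _ => norm_nonneg _) (fun n => Real.abs_le_sqrt (h n)) this

lemma normalVec_tendsto {v : ℕ → ℝ × ℝ → ℝ} {s : ℝ}
    (h : Tendsto (fun n => defect H (v n) s) atTop (nhds 0)) :
    Tendsto (fun n => normalVec (v n) (cc H s)) atTop
      (nhds (Real.cos (2 * H * s), -Real.sin (2 * H * s), (0 : ℝ))) := by
  have h2 := h.const_mul 2
  rw [mul_zero] at h2
  have t1 : Tendsto (fun n => X1 (v n) (cc H s)) atTop (nhds (-Real.cos (2 * H * s))) :=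
    tendsto_of_sq_le (fun n => by
      have := defect_bound (H := H) (v n) s
      nlinarith [sq_nonneg (X2 (v n) (cc H s) - Real.sin (2 * H * s))]) h2
  have t2 : Tendsto (fun n => X2 (v n) (cc H s)) atTop (nhds (Real.sin (2 * H * s))) :=
    tendsto_of_sq_le (fun n => by
      have := defect_bound (H := H) (v n) s
      nlinarith [sq_nonneg (X1 (v n) (cc H s) + Real.cos (2 * H * s))]) h2
  have t3 : Tendsto (fun n => N3 (v n) (cc H s)) atTop (nhds 0) := by
    have h : Tendsto (fun n => Real.sqrt (1 - X1 (v n) (cc H s) ^ 2 - X2 (v n) (cc H s) ^ 2)) atTop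
        (nhds (Real.sqrt (1 - (-Real.cos (2 * H * s)) ^ 2 - Real.sin (2 * H * s) ^ 2))) :=
      (((t1.pow 2).const_sub 1).sub (t2.pow 2)).sqrt
    have e : 1 - (-Real.cos (2 * H * s)) ^ 2 - Real.sin (2 * H * s) ^ 2 = 0 := by
      linarith [Real.sin_sq_add_cos_sq (2 * H * s), neg_sq (Real.cos (2 * H * s))]
    rw [e, Real.sqrt_zero] at h
    refine Tendsto.congr (fun n => ?_) h
    rw [← N3_sq, Real.sqrt_sq (N3_pos _).le]
  have t1' := t1.neg
  rw [neg_neg] at t1'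
  simp only [normalVec_eq]
  exact t1'.prodMk_nhds (t2.neg.prodMk_nhds t3)
end

/-! ### Almost everywhere convergence of the normals -/

/-- if the normals above the origin converge to `(1,0,0)`, then for every
`α ∈ (0,1)` a subsequence of the normals converges, for a.e. `s ∈ [-αr, αr]`, to the
horizontal normal of the circle arc `c(s)` of curvature `2H`. -/
theorem stmt_5 (H r : ℝ) (hH : 0 < H) (hr : 0 < r) (u : ℕ → ℝ × ℝ → ℝ)
    (hu : ∀ n, IsCMCSolution H {p : ℝ × ℝ | enorm2 p < r} (u n))
    (hN : Tendsto (fun n => normalVec (u n) (0, 0)) atTop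
      (nhds ((1 : ℝ), (0 : ℝ), (0 : ℝ))))
    (α : ℝ) (hα : α ∈ Set.Ioo (0 : ℝ) 1) :
    ∃ φ : ℕ → ℕ, StrictMono φ ∧
      ∀ᵐ s ∂(volume : Measure ℝ), s ∈ Set.Icc (-(α * r)) (α * r) →
        Tendsto (fun n => normalVec (u (φ n))
            ((1 - Real.cos (2 * H * s)) / (2 * H), Real.sin (2 * H * s) / (2 * H)))
          atTop (nhds (Real.cos (2 * H * s), -Real.sin (2 * H * s), (0 : ℝ))) := by
  have hD : {p : ℝ × ℝ | enorm2 p < r} = Dsc r := by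
    ext p
    exact Real.sqrt_lt' hr
  rw [hD] at hu
  set L := α * r with hL
  have hL0 : 0 < L := mul_pos hα.1 hr
  obtain ⟨a, hLa, har⟩ := exists_between (show L < r from mul_lt_of_lt_one_left hr hα.2)
  have ha0 : 0 < a := hL0.trans hLa
  choose v hv hc hvu using fun n => exists_extension ha0 har (hu n).1
  have hev : ∀ n, ∀ p ∈ Dsc a, v n =ᶠ[nhds p] u n := fun n p hp => by
    filter_upwards [(isOpen_Dsc a).mem_nhds hp] with q hq
    exact hvu n q hq
  have e1 : ∀ n, ∀ p ∈ Dsc a, pdx (v n) p = pdx (u n) p := fun n p hp => by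
    unfold pdx
    rw [(hev n p hp).fderiv_eq]
  have e2 : ∀ n, ∀ p ∈ Dsc a, pdy (v n) p = pdy (u n) p := fun n p hp => by
    unfold pdy
    rw [(hev n p hp).fderiv_eq]
  have e1' : ∀ n, ∀ p ∈ Dsc a, pdx (v n) =ᶠ[nhds p] pdx (u n) := fun n p hp => by
    filter_upwards [(isOpen_Dsc a).mem_nhds hp] with q hq
    exact e1 n q hq
  have e2' : ∀ n, ∀ p ∈ Dsc a, pdy (v n) =ᶠ[nhds p] pdy (u n) := fun n p hp => by
    filter_upwards [(isOpen_Dsc a).mem_nhds hp] with q hq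
    exact e2 n q hq
  have hnv : ∀ n, ∀ p ∈ Dsc a, normalVec (v n) p = normalVec (u n) p := fun n p hp => by
    unfold normalVec Wgraph
    rw [e1 n p hp, e2 n p hp]
  have hpde : ∀ n, ∀ p ∈ Dsc a, pdx (X1 (v n)) p + pdy (X2 (v n)) p = 2 * H := by
    intro n p hp
    refine div_form (hv n) ?_
    have h := (hu n).2 p (Dsc_mono ha0.le har.le hp)
    have f1 : pdx (fun q => pdx (v n) q) p = pdx (fun q => pdx (u n) q) p :=
      congrArg (fun T : ℝ × ℝ →L[ℝ] ℝ => T (1, 0)) (e1' n p hp).fderiv_eq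
    have f2 : pdy (fun q => pdx (v n) q) p = pdy (fun q => pdx (u n) q) p :=
      congrArg (fun T : ℝ × ℝ →L[ℝ] ℝ => T (0, 1)) (e1' n p hp).fderiv_eq
    have f3 : pdy (fun q => pdy (v n) q) p = pdy (fun q => pdy (u n) q) p :=
      congrArg (fun T : ℝ × ℝ →L[ℝ] ℝ => T (0, 1)) (e2' n p hp).fderiv_eq
    rw [f1, f2, f3, e1 n p hp, e2 n p hp]
    exact h
  choose Ψ hΨ using fun n => exists_stream (hv n) (hpde n)
  have h0 : (0 : ℝ × ℝ) ∈ Dsc a := by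
    have := cc_mem (H := H) (s := 0) (L := 0) (a := a) hH (by simp) ha0
    rwa [cc_zero] at this
  have hN' : Tendsto (fun n => (-X1 (v n) 0, -X2 (v n) 0, N3 (v n) 0)) atTop
      (nhds ((1 : ℝ), (0 : ℝ), (0 : ℝ))) := by
    refine hN.congr fun n => ?_
    rw [← normalVec_eq, hnv n 0 h0]
    rfl
  have x1 : Tendsto (fun n => X1 (v n) 0) atTop (nhds (-1)) := by
    have := ((continuous_fst.tendsto _).comp hN').neg
    refine this.congr fun n => ?_
    exact neg_neg _
  have x2 : Tendsto (fun n => X2 (v n) 0) atTop (nhds 0) := by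
    have := (((continuous_fst.comp continuous_snd).tendsto _).comp hN').neg
    have h : Tendsto (fun n => X2 (v n) 0) atTop (nhds (-0)) := this.congr fun n => neg_neg _
    rwa [neg_zero] at h
  have hst := fun s (hs : |s| ≤ L) => stream_tendsto hH hL0 hLa hv hc hpde hΨ x1 x2 hs
  have hIntegral : Tendsto (fun n => ∫ s in (-L)..L, defect H (v n) s) atTop (nhds 0) := by
    have t := ((hst L (by rw [abs_of_pos hL0])).sub_const (PsC H L)).sub
      ((hst (-L) (by rw [abs_neg, abs_of_pos hL0])).sub_const (PsC H (-L)))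
    rw [sub_self, sub_self, sub_self] at t
    refine t.congr fun n => ?_
    rw [defect_integral hH hL0 hLa (hv n) (hΨ n)]
    ring
  set μ : Measure ℝ := volume.restrict (Ioc (-L) L) with hμ
  have hmeas : TendstoInMeasure μ (fun n => defect H (v n)) atTop (fun _ => (0 : ℝ)) := by
    refine tendstoInMeasure_of_tendsto_eLpNorm one_ne_zero
      (fun n => (continuous_defect hH (hv n)).aestronglyMeasurable) aestronglyMeasurable_const ?_
    have t := (ENNReal.continuous_ofReal.tendsto _).comp hIntegral
    rw [ENNReal.ofReal_zero] at t
    refine t.congr fun n => ?_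
    have hi : Integrable (defect H (v n)) μ :=
      ((continuous_defect hH (hv n)).integrableOn_Icc (a := -L) (b := L)).mono_set Ioc_subset_Icc_self
    have e : (defect H (v n) - fun _ => (0 : ℝ)) = defect H (v n) := by
      funext s
      simp
    rw [e, eLpNorm_one_eq_lintegral_enorm, ← ofReal_integral_norm_eq_lintegral_enorm hi,
      Function.comp_apply, intervalIntegral.integral_of_le (by linarith)]
    congr 1
    refine integral_congr_ae (Eventually.of_forall fun s => ?_)
    exact (Real.norm_of_nonneg (defect_nonneg _ _)).symm
  obtain ⟨φ, hφ, hae⟩ := hmeas.exists_seq_tendsto_ae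
  refine ⟨φ, hφ, ?_⟩
  rw [hμ, restrict_Ioc_eq_restrict_Icc, ae_restrict_iff' measurableSet_Icc] at hae
  filter_upwards [hae] with s hs hsI
  refine (normalVec_tendsto (hs hsI)).congr fun n => ?_
  exact hnv _ _ (cc_mem hH (abs_le.2 hsI) hLa)
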